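/- arXiv:1901.09243 — 3 statements merged into one kernel-verified Lean document; each statement's English description precedes it below -/
import Mathlib

section
/- For every number field K there exist a finite abelian extension N_K/K of degree three and a character χ of Gal(N_K/K) with the following property: for every number field K', every finite abelian extension N_{K'}/K', and every character χ' of Gal(N_{K'}/K'), if the Artin L-functions satisfy L_K(χ, s) = L_{K'}(χ', s), then K and K' are isomorphic as fields. -/
open NumberField

open scoped Classical in
/-- The local Euler factor at a prime `p` of `K` of the Artin L-function of a one-dimensional
character `χ` of the (abelian) Galois group of `N/K`.  If there is a prime `Q` of `N` above `p`
together with a Frobenius element `σ` at `Q` (i.e. `σ x ≡ x ^ N(p) mod Q` for all integers `x`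
of `N`) such that `χ` is trivial on the inertia group at `Q`, the factor is
`(1 - χ(Frob_p) N(p)^{-s})⁻¹`; otherwise (the ramified case where `χ` is nontrivial on
inertia) the factor is `1`.  For an abelian extension this is well defined. -/
noncomputable def localArtinFactor (K N : Type) [Field K] [NumberField K] [Field N]
    [NumberField N] [Algebra K N] (χ : (N ≃ₐ[K] N) →* ℂˣ) (p : Ideal (𝓞 K)) (s : ℂ) : ℂ :=
  if h : ∃ σ : N ≃ₐ[K] N, ∃ Q : Ideal (𝓞 N), Q.IsPrime ∧ Q ≠ ⊥ ∧
      Q.comap (algebraMap (𝓞 K) (𝓞 N)) = p ∧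
      (∀ x : 𝓞 N, galRestrict (𝓞 K) K N (𝓞 N) σ x - x ^ Ideal.absNorm p ∈ Q) ∧
      (∀ τ : N ≃ₐ[K] N, (∀ x : 𝓞 N, galRestrict (𝓞 K) K N (𝓞 N) τ x - x ∈ Q) → χ τ = 1)
  then (1 - (χ h.choose : ℂ) * (Ideal.absNorm p : ℂ) ^ (-s))⁻¹
  else 1

/-- The Artin L-function `L_K(χ, s)` of a one-dimensional character `χ` of the Galois group of
`N/K`, given for `Re(s) > 1` by the Euler product of the local factors over all nonzero prime
ideals of the ring of integers of `K`. -/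
noncomputable def artinLFunction (K N : Type) [Field K] [NumberField K] [Field N]
    [NumberField N] [Algebra K N] (χ : (N ≃ₐ[K] N) →* ℂˣ) (s : ℂ) : ℂ :=
  ∏' p : {p : Ideal (𝓞 K) // p.IsPrime ∧ p ≠ ⊥}, localArtinFactor K N χ p.1 s

/-- A finite abelian extension of a number field `K`: a finite Galois extension `N/K`
with abelian Galois group. -/
structure FiniteAbelianExtension (K : Type) [Field K] [NumberField K] where
  N : Type
  [fieldN : Field N]
  [numberFieldN : NumberField N]
  [algebraN : Algebra K N]
  [finiteDimensionalN : FiniteDimensional K N]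
  [galoisN : IsGalois K N]
  abelian : ∀ σ τ : N ≃ₐ[K] N, σ * τ = τ * σ

attribute [instance] FiniteAbelianExtension.fieldN FiniteAbelianExtension.numberFieldN
  FiniteAbelianExtension.algebraN FiniteAbelianExtension.finiteDimensionalN
  FiniteAbelianExtension.galoisN


section GroupPart

open scoped Classical in
/-- extension by zero of a character of a subgroup -/
noncomputable def ext0 {Γ : Type*} [Group Γ] {H : Subgroup Γ} (χ : H →* ℂˣ) (g : Γ) : ℂ :=
  if h : g ∈ H then (χ ⟨g, h⟩ : ℂ) else 0

variable {Γ : Type*} [Group Γ] {H : Subgroup Γ} (χ : H →* ℂˣ)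

lemma ext0_of_mem {g : Γ} (h : g ∈ H) : ext0 χ g = (χ ⟨g, h⟩ : ℂ) := by
  simp [ext0, h]

lemma ext0_of_not_mem {g : Γ} (h : g ∉ H) : ext0 χ g = 0 := by
  simp [ext0, h]

lemma ext0_ne_zero_iff {g : Γ} : ext0 χ g ≠ 0 ↔ g ∈ H := by
  by_cases h : g ∈ H
  · simp [ext0_of_mem χ h, h]
  · simp [ext0_of_not_mem χ h, h]

lemma ext0_one : ext0 χ 1 = 1 := by
  rw [ext0_of_mem χ H.one_mem]
  have : (⟨1, H.one_mem⟩ : H) = 1 := rfl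
  simp [this]

lemma ext0_mul {g : Γ} (h : g ∈ H) (k : Γ) : ext0 χ (g * k) = ext0 χ g * ext0 χ k := by
  by_cases hk : k ∈ H
  · rw [ext0_of_mem χ h, ext0_of_mem χ hk, ext0_of_mem χ (H.mul_mem h hk)]
    have : (⟨g * k, H.mul_mem h hk⟩ : H) = ⟨g, h⟩ * ⟨k, hk⟩ := rfl
    rw [this, map_mul, Units.val_mul]
  · rw [ext0_of_not_mem χ hk, mul_zero, ext0_of_not_mem]
    rwa [H.mul_mem_cancel_left h]

lemma ext0_pow {g : Γ} (h : g ∈ H) (k : ℕ) : ext0 χ (g ^ k) = ext0 χ g ^ k := by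
  induction k with
  | zero => simp [ext0_one]
  | succ n ih => rw [pow_succ', ext0_mul χ h, ih, pow_succ']

lemma ext0_conj {h : Γ} (hh : h ∈ H) (g : Γ) : ext0 χ (h⁻¹ * g * h) = ext0 χ g := by
  by_cases hg : g ∈ H
  · rw [ext0_mul χ (H.mul_mem (H.inv_mem hh) hg), ext0_mul χ (H.inv_mem hh)]
    have : ext0 χ h⁻¹ * ext0 χ h = 1 := by
      rw [← ext0_mul χ (H.inv_mem hh), inv_mul_cancel, ext0_one]
    linear_combination ext0 χ g * this
  · rw [ext0_of_not_mem χ hg, ext0_of_not_mem]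
    rwa [H.mul_mem_cancel_right hh, H.mul_mem_cancel_left (H.inv_mem hh)]

lemma ext0_norm_le [Finite Γ] (g : Γ) : ‖ext0 χ g‖ ≤ 1 := by
  by_cases hg : g ∈ H
  · have h1 : ext0 χ g ^ orderOf g = 1 := by
      rw [← ext0_pow χ hg, pow_orderOf_eq_one, ext0_one]
    exact (Complex.norm_eq_one_of_pow_eq_one h1 (orderOf_pos g).ne').le
  · simp [ext0_of_not_mem χ hg]

/-- unnormalised induced character -/
noncomputable def indT [Fintype Γ] (g : Γ) : ℂ := ∑ x : Γ, ext0 χ (x⁻¹ * g * x)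

lemma indT_one [Fintype Γ] : indT χ 1 = Fintype.card Γ := by
  simp [indT, ext0_one]

lemma eq_one_of_re (z : ℂ) (h : ‖z‖ ≤ 1) (h' : 1 ≤ z.re) : z = 1 := by
  have h1 : z.re = 1 := le_antisymm ((Complex.re_le_norm z).trans h) h'
  have h2 : ‖z‖ ^ 2 ≤ 1 := by nlinarith [norm_nonneg z]
  rw [Complex.sq_norm, Complex.normSq_apply, h1] at h2
  have h3 : z.im = 0 := by nlinarith
  apply Complex.ext <;> simp [h1, h3]

lemma sum_root_filter (ζ w : ℂ) (hζ : ζ ^ 3 = 1) (hw : w ^ 3 = 1) :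
    (1 + ζ ^ 2 * w + ζ * w ^ 2) = if w = ζ then 3 else 0 := by
  split_ifs with h
  · subst h; linear_combination 2 * hw
  · have h1 : (w - ζ) * (1 + ζ ^ 2 * w + ζ * w ^ 2) = 0 := by
      linear_combination ζ * hw - w * hζ
    have := mul_eq_zero.mp h1
    rcases this with h2 | h2
    · exact absurd (sub_eq_zero.mp h2) h
    · exact h2

variable {H' : Subgroup Γ} (χ' : H' →* ℂˣ)

theorem conj_of_indT [Fintype Γ] 
    (hT : ∀ g, (Nat.card H' : ℂ) * indT χ g = (Nat.card H : ℂ) * indT χ' g)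
    (γ : Γ) (hγ : ∀ x : Γ, x⁻¹ * γ * x ∈ H)
    (hγ1 : ∀ x : Γ, x ∉ H → ext0 χ (x⁻¹ * γ * x) = 1)
    (hζ1 : ext0 χ γ ≠ 1) (hζ3 : ext0 χ γ ^ 3 = 1) :
    ∃ z : Γ, ∀ g, g ∈ H ↔ z⁻¹ * g * z ∈ H' := by
  classical
  have hcΓ : (Fintype.card Γ : ℂ) ≠ 0 := by simp
  have hc : Nat.card H' = Nat.card H := by
    have := hT 1
    rw [indT_one, indT_one] at this
    exact_mod_cast mul_right_cancel₀ hcΓ this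
  have hcH : (Nat.card H : ℂ) ≠ 0 := by
    exact_mod_cast (Nat.card_pos (α := H)).ne'
  rw [hc] at hT
  replace hT : ∀ g, indT χ g = indT χ' g := fun g => mul_left_cancel₀ hcH (hT g)
  set ζ := ext0 χ γ with hζ
  have hv : ∀ x, ext0 χ (x⁻¹ * γ * x) = if x ∈ H then ζ else 1 := by
    intro x
    split_ifs with h
    · rw [ext0_conj χ h]
    · exact hγ1 x h
  have conjpow : ∀ (x g : Γ) (k : ℕ), x⁻¹ * g ^ k * x = (x⁻¹ * g * x) ^ k := by
    intro x g k
    have := conj_pow (i := k) (a := x⁻¹) (b := g)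
    simpa using this.symm
  have conjmul : ∀ (x a b : Γ), x⁻¹ * (a * b) * x = (x⁻¹ * a * x) * (x⁻¹ * b * x) := by
    intro x a b; group
  -- γ ^ 3 acts trivially for the second character
  have hT3 : indT χ (γ ^ 3) = Fintype.card Γ := by
    unfold indT
    have : ∀ x : Γ, ext0 χ (x⁻¹ * γ ^ 3 * x) = 1 := by
      intro x
      rw [conjpow, ext0_pow χ (hγ x), hv]
      split_ifs
      · exact hζ3
      · simp
    simp [this]
  have h3 : ∀ x, ext0 χ' (x⁻¹ * γ ^ 3 * x) = 1 := by
    have e1 : ∑ x : Γ, (1 - (ext0 χ' (x⁻¹ * γ ^ 3 * x)).re) = 0 := by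
      have := congrArg Complex.re ((hT (γ ^ 3)).symm.trans hT3)
      simp only [indT, Complex.re_sum, Complex.natCast_re] at this
      simp [this]
    have e2 := (Finset.sum_eq_zero_iff_of_nonneg (fun x _ => by
      have := (Complex.re_le_norm (ext0 χ' (x⁻¹ * γ ^ 3 * x))).trans (ext0_norm_le χ' _)
      linarith)).mp e1
    intro x
    apply eq_one_of_re _ (ext0_norm_le χ' _)
    have := e2 x (Finset.mem_univ _)
    linarith
  have h3' : ∀ x, x⁻¹ * γ ^ 3 * x ∈ H' := fun x => by
    rw [← ext0_ne_zero_iff χ', h3]; simp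
  -- γ fixes all cosets of the second subgroup
  have hA : ∀ x, x⁻¹ * γ * x ∈ H' := by
    by_contra! hx
    obtain ⟨x, hx⟩ := hx
    let A : Finset Γ := Finset.univ.filter (fun y => y⁻¹ * γ * y ∉ H')
    have hinj : Function.Injective (fun q : Fin 3 × H' => γ ^ (q.1 : ℕ) * x * (q.2 : Γ)) := by
      have key : ∀ (i j : Fin 3) (a b : H'), i < j →
          γ ^ (i : ℕ) * x * (a : Γ) ≠ γ ^ (j : ℕ) * x * (b : Γ) := by
        intro i j a b hij h
        have e : x⁻¹ * γ ^ ((j : ℕ) - (i : ℕ)) * x = (a : Γ) * (b : Γ)⁻¹ := by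
          have e' : γ ^ (j : ℕ) = γ ^ (i : ℕ) * γ ^ ((j : ℕ) - (i : ℕ)) := by
            rw [← pow_add]; congr 1; have := hij; omega
          rw [e', mul_assoc, mul_assoc, mul_assoc] at h
          have h' := mul_left_cancel h
          rw [eq_mul_inv_iff_mul_eq, mul_assoc, mul_assoc, inv_mul_eq_iff_eq_mul, ← h']
        have e1 : x⁻¹ * γ ^ ((j : ℕ) - (i : ℕ)) * x ∈ H' := by
          rw [e]; exact H'.mul_mem a.2 (H'.inv_mem b.2)
        have : (j : ℕ) - i = 1 ∨ (j : ℕ) - i = 2 := by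
          have := hij; omega
        rcases this with h1 | h1
        · rw [h1, pow_one] at e1; exact hx e1
        · rw [h1] at e1
          apply hx
          have e2 := H'.mul_mem (H'.inv_mem e1) (h3' x)
          convert e2 using 1
          group
      rintro ⟨i, a⟩ ⟨j, b⟩ h
      simp only at h
      rcases lt_trichotomy i j with hij | hij | hij
      · exact absurd h (key i j a b hij)
      · subst hij
        have := mul_left_cancel h
        simp [Subtype.ext_iff, this]
      · exact absurd h.symm (key j i b a hij)
    have hcard : 3 * Nat.card H ≤ A.card := by
      have : Finset.univ.image (fun q : Fin 3 × H' => γ ^ (q.1 : ℕ) * x * (q.2 : Γ)) ⊆ A := by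
        intro y hy
        simp only [Finset.mem_image, Finset.mem_univ, true_and, Prod.exists] at hy
        obtain ⟨i, a, rfl⟩ := hy
        simp only [A, Finset.mem_filter, Finset.mem_univ, true_and]
        intro hm
        apply hx
        have : (γ ^ (i : ℕ) * x * (a : Γ))⁻¹ * γ * (γ ^ (i : ℕ) * x * (a : Γ))
          = (a : Γ)⁻¹ * (x⁻¹ * γ * x) * a := by
          have hcomm : (γ ^ (i : ℕ))⁻¹ * γ * γ ^ (i : ℕ) = γ := by
            rw [mul_assoc, (Commute.self_pow γ (i : ℕ)).eq, inv_mul_cancel_left]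
          calc _ = (a : Γ)⁻¹ * (x⁻¹ * ((γ ^ (i : ℕ))⁻¹ * γ * γ ^ (i : ℕ)) * x) * a := by group
            _ = _ := by rw [hcomm]
        rw [this, H'.mul_mem_cancel_right a.2, H'.mul_mem_cancel_left (H'.inv_mem a.2)] at hm
        exact hm
      have h2 := Finset.card_le_card this
      rw [Finset.card_image_of_injective _ hinj] at h2
      simp only [Finset.card_univ, Fintype.card_prod, Fintype.card_fin,
        ← Nat.card_eq_fintype_card (α := H')] at h2
      rwa [hc] at h2
    have hre' : (indT χ' γ).re ≤ Fintype.card Γ - 3 * Nat.card H := by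
      have : (indT χ' γ).re ≤ ∑ x : Γ, (1 - if x ∈ A then (1 : ℝ) else 0) := by
        unfold indT
        rw [Complex.re_sum]
        apply Finset.sum_le_sum
        intro y _
        by_cases hy : y ∈ A
        · have : y⁻¹ * γ * y ∉ H' := by simpa [A] using hy
          rw [ext0_of_not_mem χ' this]; simp [hy]
        · simp only [hy, if_false, sub_zero]
          exact (Complex.re_le_norm _).trans (ext0_norm_le χ' _)
      refine this.trans ?_
      rw [Finset.sum_sub_distrib]
      have h4 : (3 * Nat.card H : ℝ) ≤ A.card := by exact_mod_cast hcard
      simp only [Finset.sum_const, Finset.card_univ, nsmul_eq_mul, mul_one, Finset.sum_ite_mem,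
        Finset.univ_inter]
      linarith
    have hre : (Fintype.card Γ : ℝ) - 2 * Nat.card H ≤ (indT χ γ).re := by
      have : ∑ x : Γ, (1 - if x ∈ H then (2 : ℝ) else 0) ≤ (indT χ γ).re := by
        unfold indT
        rw [Complex.re_sum]
        apply Finset.sum_le_sum
        intro y _
        rw [hv]
        split_ifs
        · have := (abs_le.mp ((Complex.abs_re_le_norm ζ).trans (ext0_norm_le χ γ))).1
          linarith
        · simp
      refine le_trans (le_of_eq ?_) this
      rw [Finset.sum_sub_distrib, ← Finset.sum_filter]
      have : (Finset.univ.filter (fun x => x ∈ H)).card = Nat.card H := by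
        rw [Nat.card_eq_fintype_card, Fintype.card_subtype]
      simp [this, mul_comm]
    rw [hT] at hre
    have : (0 : ℝ) < Nat.card H := by exact_mod_cast Nat.card_pos
    linarith
  set w : Γ → ℂ := fun x => ext0 χ' (x⁻¹ * γ * x) with hw
  have hw3 : ∀ x, w x ^ 3 = 1 := by
    intro x
    rw [hw]
    simp only
    rw [← ext0_pow χ' (hA x), ← conjpow, h3]
  have hS : ∀ g, indT χ g + ζ ^ 2 * indT χ (γ * g) + ζ * indT χ (γ ^ 2 * g) =
      3 * Nat.card H * ext0 χ g := by
    intro g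
    have hsum : indT χ g + ζ ^ 2 * indT χ (γ * g) + ζ * indT χ (γ ^ 2 * g) =
       ∑ x : Γ, if x ∈ H then 3 * ext0 χ g else 0 := by
      unfold indT
      rw [Finset.mul_sum, Finset.mul_sum, ← Finset.sum_add_distrib, ← Finset.sum_add_distrib]
      refine Finset.sum_congr rfl fun x _ => ?_
      rw [conjmul, conjmul, ext0_mul χ (hγ x), conjpow, ext0_mul χ (H.pow_mem (hγ x) 2),
        ext0_pow χ (hγ x)]
      have := sum_root_filter ζ (ext0 χ (x⁻¹ * γ * x)) hζ3 (by
        rw [hv]; split_ifs; exacts [hζ3, by simp])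
      split_ifs with hx
      · rw [ext0_conj χ hx g]
        rw [hv, if_pos hx] at this ⊢
        simp only [if_true] at this
        linear_combination this * ext0 χ g
      · rw [hv, if_neg hx] at this ⊢
        rw [if_neg hζ1.symm] at this
        linear_combination this * ext0 χ (x⁻¹ * g * x)
    rw [hsum, ← Finset.sum_filter]
    have : (Finset.univ.filter (fun x => x ∈ H)).card = Nat.card H := by
      rw [Nat.card_eq_fintype_card, Fintype.card_subtype]
    simp [this]; ring
  have hS' : ∀ g, indT χ' g + ζ ^ 2 * indT χ' (γ * g) + ζ * indT χ' (γ ^ 2 * g) =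
      ∑ x ∈ Finset.univ.filter (fun x => w x = ζ), 3 * ext0 χ' (x⁻¹ * g * x) := by
    intro g
    rw [Finset.sum_filter]
    unfold indT
    rw [Finset.mul_sum, Finset.mul_sum, ← Finset.sum_add_distrib, ← Finset.sum_add_distrib]
    refine Finset.sum_congr rfl fun x _ => ?_
    rw [conjmul, conjmul, ext0_mul χ' (hA x), conjpow, ext0_mul χ' (H'.pow_mem (hA x) 2),
      ext0_pow χ' (hA x)]
    have := sum_root_filter ζ (w x) hζ3 (hw3 x)
    split_ifs with hx
    · rw [if_pos hx] at this
      linear_combination this * ext0 χ' (x⁻¹ * g * x)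
    · rw [if_neg hx] at this
      linear_combination this * ext0 χ' (x⁻¹ * g * x)
  have hSS : ∀ g, ∑ x ∈ Finset.univ.filter (fun x => w x = ζ), ext0 χ' (x⁻¹ * g * x) =
      Nat.card H * ext0 χ g := by
    intro g
    have := (hS g).symm
    rw [hT, hT, hT, hS', ← Finset.mul_sum] at this
    linear_combination (-1/3) * this
  set B := Finset.univ.filter (fun x => w x = ζ) with hB
  have hBc : B.card = Nat.card H := by
    have := hSS 1
    simp only [mul_one, inv_mul_cancel, ext0_one, Finset.sum_const, nsmul_eq_mul] at this
    exact_mod_cast this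
  have hBne : B.Nonempty := by
    rw [← Finset.card_pos, hBc]; exact Nat.card_pos
  obtain ⟨z, hz⟩ := hBne
  have hBz : B = Finset.univ.image (fun h : H' => z * (h : Γ)) := by
    symm
    apply Finset.eq_of_subset_of_card_le
    · intro y hy
      simp only [Finset.mem_image, Finset.mem_univ, true_and] at hy
      obtain ⟨h, rfl⟩ := hy
      simp only [hB, Finset.mem_filter, Finset.mem_univ, true_and] at hz ⊢
      rw [← hz]
      simp only [hw]
      rw [← ext0_conj χ' h.2 (z⁻¹ * γ * z)]
      congr 1; group
    · rw [Finset.card_image_of_injective _ (by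
        intro a b h; exact Subtype.ext (mul_left_cancel h)), hBc, Finset.card_univ, ← hc,
        Nat.card_eq_fintype_card]
  refine ⟨z, fun g => ?_⟩
  have e : (Nat.card H : ℂ) * ext0 χ' (z⁻¹ * g * z) = Nat.card H * ext0 χ g := by
    rw [← hSS g, hBz, Finset.sum_image (by intro a _ b _ h; exact Subtype.ext (mul_left_cancel h))]
    rw [Finset.sum_congr rfl (g := fun _ => ext0 χ' (z⁻¹ * g * z))]
    · rw [← hc, Nat.card_eq_fintype_card, Finset.sum_const, Finset.card_univ, nsmul_eq_mul]
    · intro h _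
      rw [← ext0_conj χ' h.2 (z⁻¹ * g * z)]
      congr 1; group
  have e' := mul_left_cancel₀ hcH e
  rw [← ext0_ne_zero_iff χ, ← ext0_ne_zero_iff χ', e']

end GroupPart


section AnalysisPart

/-- coefficients of the logarithm of an Euler product, as a Dirichlet series -/
noncomputable def logCoeff {ι : Type*} (q : ι → ℕ) (c : ι → ℂ) (n : ℕ) : ℂ :=
  ∑' x : (fun x : ι × ℕ => q x.1 ^ (x.2 + 1)) ⁻¹' {n}, c x.1.1 ^ (x.1.2 + 1) / ((x.1.2 : ℂ) + 1)

variable {ι : Type*} (q : ι → ℕ) (c : ι → ℂ)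

lemma norm_nat_cpow_neg (n : ℕ) (hn : 0 < n) (s : ℝ) : ‖(n : ℂ) ^ (-(s : ℂ))‖ = (n : ℝ) ^ (-s) := by
  rw [Complex.norm_natCast_cpow_of_pos hn]; simp

lemma rpow_neg_le_half (n : ℕ) (hn : 2 ≤ n) (s : ℝ) (hs : 1 < s) : (n : ℝ) ^ (-s) ≤ 1 / 2 := by
  have h2 : (2 : ℝ) ≤ n := by exact_mod_cast hn
  calc (n : ℝ) ^ (-s) ≤ (n : ℝ) ^ (-1 : ℝ) := by
        apply Real.rpow_le_rpow_of_exponent_le <;> linarith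
    _ = (n : ℝ)⁻¹ := Real.rpow_neg_one _
    _ ≤ 1 / 2 := by
        rw [one_div]; exact inv_anti₀ (by norm_num) h2

lemma logTerm_norm_le (hq : ∀ i, 2 ≤ q i) (hc : ∀ i, ‖c i‖ ≤ 1) (s : ℝ) (hs : 1 < s) (x : ι × ℕ) :
    ‖(c x.1 * (q x.1 : ℂ) ^ (-(s : ℂ))) ^ (x.2 + 1) / ((x.2 : ℂ) + 1)‖ ≤
      (q x.1 : ℝ) ^ (-s) * (1 / 2) ^ x.2 := by
  have hb : ‖c x.1 * (q x.1 : ℂ) ^ (-(s : ℂ))‖ ≤ (q x.1 : ℝ) ^ (-s) := by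
    rw [norm_mul, norm_nat_cpow_neg _ (by linarith [hq x.1])]
    exact mul_le_of_le_one_left (by positivity) (hc _)
  have hh := rpow_neg_le_half (q x.1) (hq _) s hs
  have h1 : (1 : ℝ) ≤ ‖(x.2 : ℂ) + 1‖ := by
    have : ((x.2 : ℂ) + 1) = ((x.2 + 1 : ℕ) : ℂ) := by push_cast; rfl
    rw [this, Complex.norm_natCast]; push_cast; linarith [(Nat.cast_nonneg x.2 : (0:ℝ) ≤ x.2)]
  rw [norm_div, norm_pow]
  calc _ ≤ ‖c x.1 * (q x.1 : ℂ) ^ (-(s : ℂ))‖ ^ (x.2 + 1) := div_le_self (by positivity) h1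
    _ ≤ ((q x.1 : ℝ) ^ (-s)) ^ (x.2 + 1) := by gcongr
    _ = (q x.1 : ℝ) ^ (-s) * ((q x.1 : ℝ) ^ (-s)) ^ x.2 := by ring
    _ ≤ _ := by gcongr

lemma logTerm_summable (hq : ∀ i, 2 ≤ q i) (hc : ∀ i, ‖c i‖ ≤ 1) (s : ℝ) (hs : 1 < s)
    (hsum : Summable fun i => (q i : ℝ) ^ (-s)) :
    Summable fun x : ι × ℕ =>
      (c x.1 * (q x.1 : ℂ) ^ (-(s : ℂ))) ^ (x.2 + 1) / ((x.2 : ℂ) + 1) := by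
  refine Summable.of_norm_bounded ?_ (logTerm_norm_le q c hq hc s hs)
  exact Summable.mul_of_nonneg hsum (summable_geometric_of_lt_one (by norm_num) (by norm_num))
    (fun i => by positivity) (fun m => by positivity)

lemma logCoeff_term (hq : ∀ i, 2 ≤ q i) (s : ℝ) (n : ℕ) :
    LSeries.term (logCoeff q c) s n = ∑' x : (fun x : ι × ℕ => q x.1 ^ (x.2 + 1)) ⁻¹' {n},
      (c x.1.1 * (q x.1.1 : ℂ) ^ (-(s : ℂ))) ^ (x.1.2 + 1) / ((x.1.2 : ℂ) + 1) := by
  rcases eq_or_ne n 0 with rfl | hn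
  · rw [LSeries.term_zero]
    have : IsEmpty ((fun x : ι × ℕ => q x.1 ^ (x.2 + 1)) ⁻¹' {0}) := by
      refine ⟨fun x => ?_⟩
      have h := x.2
      simp only [Set.mem_preimage, Set.mem_singleton_iff] at h
      have h3 := hq x.1.1
      have h4 := eq_zero_of_pow_eq_zero h
      omega
    rw [tsum_empty]
  · rw [LSeries.term_of_ne_zero hn, logCoeff, ← tsum_div_const]
    refine tsum_congr fun x => ?_
    obtain ⟨⟨i, m⟩, h⟩ := x
    change q i ^ (m + 1) = n at h
    dsimp only
    have h5 : (n : ℂ) ^ (s : ℂ) = ((q i : ℂ) ^ (s : ℂ)) ^ (m + 1) := by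
      rw [← h, ← Complex.cpow_nat_mul, Nat.cast_pow, ← Complex.natCast_cpow_natCast_mul]
    rw [h5, mul_pow, Complex.cpow_neg, inv_pow, div_div, div_eq_mul_inv, div_eq_mul_inv, mul_inv]
    ring

lemma logCoeff_norm_lt (hq : ∀ i, 2 ≤ q i) (hc : ∀ i, ‖c i‖ ≤ 1) (s : ℝ) (hs : 1 < s) (i : ι) :
    ‖c i * (q i : ℂ) ^ (-(s : ℂ))‖ < 1 := by
  have := logTerm_norm_le q c hq hc s hs (i, 0)
  simp only [zero_add, pow_one, Nat.cast_zero, div_one, pow_zero, mul_one] at this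
  have := rpow_neg_le_half (q i) (hq _) s hs
  linarith

lemma log_inv_of_norm_lt (z : ℂ) (hz : ‖z‖ < 1) : Complex.log (1 - z)⁻¹ = -Complex.log (1 - z) := by
  rw [Complex.log_inv]
  have : 0 < (1 - z).re := by
    have := (Complex.re_le_norm z).trans_lt hz
    simp only [Complex.sub_re, Complex.one_re]; linarith
  have := (Complex.abs_arg_lt_pi_div_two_iff.2 (Or.inl this))
  intro h
  rw [h, abs_of_pos Real.pi_pos] at this
  linarith [Real.pi_pos]

lemma logCoeff_LSeriesHasSum (hq : ∀ i, 2 ≤ q i) (hc : ∀ i, ‖c i‖ ≤ 1) (s : ℝ) (hs : 1 < s)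
    (hsum : Summable fun i => (q i : ℝ) ^ (-s)) :
    LSeriesHasSum (logCoeff q c) s (∑' i, -Complex.log (1 - c i * (q i : ℂ) ^ (-(s : ℂ)))) ∧
      ∏' i, (1 - c i * (q i : ℂ) ^ (-(s : ℂ)))⁻¹ = Complex.exp (LSeries (logCoeff q c) s) := by
  have hS := logTerm_summable q c hq hc s hs hsum
  have hz := logCoeff_norm_lt q c hq hc s hs
  have h1 : HasSum (fun i => -Complex.log (1 - c i * (q i : ℂ) ^ (-(s : ℂ)))) (∑' x : ι × ℕ,
      (c x.1 * (q x.1 : ℂ) ^ (-(s : ℂ))) ^ (x.2 + 1) / ((x.2 : ℂ) + 1)) := by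
    refine hS.hasSum.prod_fiberwise (fun i => ?_)
    have h0 := Complex.hasSum_taylorSeries_neg_log' (hz i)
    dsimp only
    convert h0 using 1
  have h2 : LSeriesHasSum (logCoeff q c) s (∑' x : ι × ℕ,
      (c x.1 * (q x.1 : ℂ) ^ (-(s : ℂ))) ^ (x.2 + 1) / ((x.2 : ℂ) + 1)) := by
    have := hS.hasSum.tsum_fiberwise (fun x : ι × ℕ => q x.1 ^ (x.2 + 1))
    unfold LSeriesHasSum
    rw [funext (logCoeff_term q c hq s)]
    exact this
  have h3 := h1.tsum_eq
  refine ⟨by rw [h3]; exact h2, ?_⟩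
  rw [h2.LSeries_eq, ← h3]
  have hlog := fun i => log_inv_of_norm_lt _ (hz i)
  have := Complex.cexp_tsum_eq_tprod
    (f := fun i => (1 - c i * (q i : ℂ) ^ (-(s : ℂ)))⁻¹) (fun i => by
      apply inv_ne_zero
      intro h
      have h' := hz i
      rw [← sub_eq_zero.1 h] at h'
      simp at h') (by
      simp_rw [hlog]
      exact h1.summable)
  rw [← this]
  simp_rw [hlog]

lemma logCoeff_one (hq : ∀ i, 2 ≤ q i) : logCoeff q c 1 = 0 := by
  have : IsEmpty ((fun x : ι × ℕ => q x.1 ^ (x.2 + 1)) ⁻¹' {1}) := by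
    refine ⟨fun x => ?_⟩
    have h := x.2
    simp only [Set.mem_preimage, Set.mem_singleton_iff] at h
    have := hq x.1.1
    have := Nat.one_lt_pow (n := x.1.2 + 1) (by omega) this
    omega
  simp [logCoeff]

theorem logCoeff_eq {ι' : Type*} (q' : ι' → ℕ) (c' : ι' → ℂ)
    (hq : ∀ i, 2 ≤ q i) (hc : ∀ i, ‖c i‖ ≤ 1)
    (hsum : ∀ s : ℝ, 1 < s → Summable fun i => (q i : ℝ) ^ (-s))
    (hq' : ∀ i, 2 ≤ q' i) (hc' : ∀ i, ‖c' i‖ ≤ 1)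
    (hsum' : ∀ s : ℝ, 1 < s → Summable fun i => (q' i : ℝ) ^ (-s))
    (heq : ∀ s : ℝ, 1 < s → ∏' i, (1 - c i * (q i : ℂ) ^ (-(s : ℂ)))⁻¹ =
      ∏' i, (1 - c' i * (q' i : ℂ) ^ (-(s : ℂ)))⁻¹) (n : ℕ) (hn : n ≠ 0) :
    logCoeff q c n = logCoeff q' c' n := by
  have ha : LSeries.abscissaOfAbsConv (logCoeff q c) < ⊤ :=
    ((logCoeff_LSeriesHasSum q c hq hc 2 (by norm_num)
      (hsum 2 (by norm_num))).1.LSeriesSummable.abscissaOfAbsConv_le).trans_lt (EReal.coe_lt_top _)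
  have ha' : LSeries.abscissaOfAbsConv (logCoeff q' c') < ⊤ :=
    ((logCoeff_LSeriesHasSum q' c' hq' hc' 2 (by norm_num)
      (hsum' 2 (by norm_num))).1.LSeriesSummable.abscissaOfAbsConv_le).trans_lt (EReal.coe_lt_top _)
  refine LSeries.eq_of_LSeries_eventually_eq ha ha' ?_ hn
  have t := LSeries.tendsto_atTop ha
  have t' := LSeries.tendsto_atTop ha'
  rw [logCoeff_one q c hq] at t
  rw [logCoeff_one q' c' hq'] at t'
  have e := Metric.tendsto_nhds.1 t 1 one_pos
  have e' := Metric.tendsto_nhds.1 t' 1 one_pos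
  filter_upwards [e, e', Filter.eventually_gt_atTop 1] with s h h' hs
  have := heq s hs
  rw [(logCoeff_LSeriesHasSum q c hq hc s hs (hsum s hs)).2,
    (logCoeff_LSeriesHasSum q' c' hq' hc' s hs (hsum' s hs)).2] at this
  rw [dist_zero_right] at h h'
  have i1 := abs_lt.1 ((Complex.abs_im_le_norm _).trans_lt h)
  have i2 := abs_lt.1 ((Complex.abs_im_le_norm _).trans_lt h')
  have := Real.pi_gt_three
  exact Complex.exp_inj_of_neg_pi_lt_of_le_pi (by linarith) (by linarith) (by linarith)
    (by linarith) ‹_›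

end AnalysisPart


section ZetaPart

open scoped ENNReal

lemma tsum_pi_geometric (α : Type*) [Fintype α] (x : α → ℝ≥0∞) :
    ∑' f : α → ℕ, ∏ i, x i ^ f i = ∏ i, (1 - x i)⁻¹ := by
  revert x
  refine Fintype.induction_empty_option (P := fun α _ => ∀ x : α → ℝ≥0∞,
    ∑' f : α → ℕ, ∏ i, x i ^ f i = ∏ i, (1 - x i)⁻¹) ?_ ?_ ?_ α
  · intro α β _ e ih x
    let _ : Fintype α := Fintype.ofEquiv β e.symm
    rw [← e.prod_comp (fun i => (1 - x i)⁻¹), ← ih (fun i => x (e i)),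
      ← (e.arrowCongr (Equiv.refl ℕ)).tsum_eq]
    refine tsum_congr fun f => ?_
    rw [← e.prod_comp]
    simp
  · intro x
    simp
  · intro α _ ih x
    rw [← (Equiv.piOptionEquivProd (β := fun _ : Option α => ℕ)).symm.tsum_eq]
    rw [ENNReal.tsum_prod']
    simp only [Fintype.prod_option, Equiv.piOptionEquivProd_symm_apply]
    rw [← ih (fun i => x (some i)), ← ENNReal.tsum_geometric, ← ENNReal.tsum_mul_right]
    refine tsum_congr fun n => ?_
    rw [ENNReal.tsum_mul_left]

lemma tsum_multiset_eq_iSup {ι : Type*} (x : ι → ℝ≥0∞) :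
    ∑' s : Multiset ι, (s.map x).prod = ⨆ S : Finset ι, ∏ i ∈ S, (1 - x i)⁻¹ := by
  classical
  have key : ∀ (S : Finset ι) (f : S → ℕ),
      ((∑ i : S, f i • ({i.1} : Multiset ι)).map x).prod = ∏ i : S, x i.1 ^ f i := by
    intro S f
    have := map_sum (Multiset.mapAddMonoidHom x) (fun i : S => f i • ({i.1} : Multiset ι)) Finset.univ
    rw [Multiset.coe_mapAddMonoidHom] at this
    rw [this, Multiset.prod_sum]
    simp [Multiset.map_nsmul, Multiset.prod_nsmul]
  have inj : ∀ S : Finset ι,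
      Function.Injective (fun f : S → ℕ => ∑ i : S, f i • ({i.1} : Multiset ι)) := by
    intro S f g h
    ext i
    have := congrArg (Multiset.count i.1) h
    simp only [Multiset.count_sum', Multiset.count_nsmul, Multiset.count_singleton] at this
    simpa [Subtype.ext_iff.symm, Finset.sum_ite_eq] using this
  have e : ∀ S : Finset ι, ∏ i ∈ S, (1 - x i)⁻¹ =
      ∑' f : S → ℕ, ((∑ i : S, f i • ({i.1} : Multiset ι)).map x).prod := by
    intro S
    rw [tsum_congr (key S), tsum_pi_geometric S (fun i => x i.1)]
    exact (Finset.prod_coe_sort S (fun i => (1 - x i)⁻¹)).symm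
  apply le_antisymm
  · rw [ENNReal.tsum_eq_iSup_sum]
    refine iSup_le fun T => ?_
    let S : Finset ι := T.biUnion (fun s => s.toFinset)
    refine le_trans ?_ (le_iSup _ S)
    rw [e S]
    have hs : ∀ s ∈ T, (∑ i : S, (s.count i.1) • ({i.1} : Multiset ι)) = s := by
      intro s hs
      rw [Finset.sum_coe_sort S (fun i => (s.count i) • ({i} : Multiset ι))]
      have hsub : s.toFinset ⊆ S := fun a ha => Finset.mem_biUnion.2 ⟨s, hs, ha⟩
      rw [← Finset.sum_subset hsub]
      · exact Multiset.toFinset_sum_count_nsmul_eq s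
      · intro a _ ha
        rw [Multiset.mem_toFinset] at ha
        simp [Multiset.count_eq_zero_of_notMem ha]
    calc ∑ s ∈ T, (s.map x).prod
        = ∑ s ∈ T, ((∑ i : S, (s.count i.1) • ({i.1} : Multiset ι)).map x).prod :=
          Finset.sum_congr rfl fun s h => by rw [hs s h]
      _ = ∑ f ∈ T.image (fun s => fun i : S => s.count i.1),
            ((∑ i : S, f i • ({i.1} : Multiset ι)).map x).prod := by
          rw [Finset.sum_image]
          intro s h s' h' heq
          rw [← hs s h, ← hs s' h']
          exact Finset.sum_congr rfl fun i _ => congrArg (· • ({i.1} : Multiset ι)) (congrFun heq i)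
      _ ≤ _ := ENNReal.sum_le_tsum _
  · refine iSup_le fun S => ?_
    rw [e S]
    exact ENNReal.tsum_comp_le_tsum_of_injective (inj S) (fun s => (s.map x).prod)


open NumberField Filter Topology

/-- nonzero primes of a number field -/
abbrev NPrimes (K : Type) [Field K] [NumberField K] : Type :=
  {p : Ideal (𝓞 K) // p.IsPrime ∧ p ≠ ⊥}

variable (K : Type) [Field K] [NumberField K]

lemma idealCount_isBigO : (fun n : ℕ => ∑ k ∈ Finset.Icc 1 n,
    (Nat.card {I : Ideal (𝓞 K) // Ideal.absNorm I = k} : ℝ)) =O[atTop] fun n => (n : ℝ) ^ (1 : ℝ) := by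
  have h : Tendsto (fun n : ℕ => (∑ k ∈ Finset.Icc 1 n,
      (Nat.card {I : Ideal (𝓞 K) // Ideal.absNorm I = k} : ℝ)) / (n : ℝ)) atTop
      (𝓝 (dedekindZeta_residue K)) := by
    refine ((Ideal.tendsto_norm_le_div_atTop₀ K).comp tendsto_natCast_atTop_atTop).congr fun n ↦ ?_
    simp only [Function.comp_apply, Nat.cast_le, ← Nat.cast_sum]
    congr
    rw [← add_left_inj 1, ← Ideal.card_norm_le_eq_card_norm_le_add_one,
      show Finset.Icc 1 n = Finset.Ioc 0 n from Finset.Icc_succ_left_eq_Ioc _ _,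
      show 1 = Nat.card {I : Ideal (𝓞 K) // Ideal.absNorm I = 0} by
        simp [Ideal.absNorm_eq_zero_iff],
      Finset.sum_Ioc_add_eq_sum_Icc (n.zero_le),
      ← Finset.card_preimage_eq_sum_card_image_eq
        (fun k _ ↦ Ideal.finite_setOfPred_absNorm_eq k)]
    simp [Set.coe_eq_subtype]
  simp only [Real.rpow_one]
  refine (Asymptotics.isBigO_of_div_tendsto_nhds ?_ _ h)
  filter_upwards [eventually_ne_atTop 0] with n hn h0
  exact absurd h0 (by exact_mod_cast hn)

/-- real zeta terms -/
noncomputable def zterm (s : ℝ) (n : ℕ) : ℝ :=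
  if n = 0 then 0 else (Nat.card {I : Ideal (𝓞 K) // Ideal.absNorm I = n} : ℝ) * (n : ℝ) ^ (-s)

lemma zterm_nonneg (s : ℝ) (n : ℕ) : 0 ≤ zterm K s n := by
  unfold zterm; split_ifs <;> positivity

lemma zterm_coe (s : ℝ) (n : ℕ) : LSeries.term
    (fun n ↦ (Nat.card {I : Ideal (𝓞 K) // Ideal.absNorm I = n} : ℂ)) s n = (zterm K s n : ℂ) := by
  unfold zterm
  rw [LSeries.term_def]
  split_ifs with h
  · simp
  · push_cast
    rw [Complex.ofReal_cpow (by positivity), div_eq_mul_inv]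
    simp [Complex.cpow_neg]

lemma zterm_summable (s : ℝ) (hs : 1 < s) : Summable (zterm K s) := by
  have := LSeriesSummable_of_sum_norm_bigO_and_nonneg (idealCount_isBigO K)
    (fun _ => Nat.cast_nonneg _) zero_le_one (s := (s : ℂ)) (by simpa using hs)
  unfold LSeriesSummable at this
  push_cast at this
  rw [funext (zterm_coe K s)] at this
  exact_mod_cast this

lemma zeta_coe (s : ℝ) : dedekindZeta K s = ((∑' n, zterm K s n : ℝ) : ℂ) := by
  rw [dedekindZeta, LSeries, funext (zterm_coe K s), Complex.ofReal_tsum]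

/-- nonzero ideals correspond to multisets of primes -/
lemma multiset_bij : Function.Bijective (fun s : Multiset (NPrimes K) =>
    (⟨(s.map Subtype.val).prod, by
      intro h0
      have h := Multiset.prod_eq_zero_iff.1 (h0.trans Ideal.zero_eq_bot.symm)
      obtain ⟨p, _, hp⟩ := Multiset.mem_map.1 h
      exact p.2.2 hp⟩ : {I : Ideal (𝓞 K) // I ≠ ⊥})) := by
  constructor
  · intro s t h
    have h : (s.map Subtype.val).prod = (t.map Subtype.val).prod := congrArg Subtype.val h
    have h2 : ∀ u : Multiset (NPrimes K), ∀ p ∈ u.map Subtype.val, Prime p := by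
      intro u p hp
      obtain ⟨q, _, rfl⟩ := Multiset.mem_map.1 hp
      exact Ideal.prime_of_isPrime q.2.2 q.2.1
    have h3 := congrArg UniqueFactorizationMonoid.normalizedFactors h
    rw [UniqueFactorizationMonoid.normalizedFactors_prod_of_prime (h2 s),
      UniqueFactorizationMonoid.normalizedFactors_prod_of_prime (h2 t)] at h3
    exact Multiset.map_injective Subtype.val_injective h3
  · rintro ⟨I, hI⟩
    have hp : ∀ p ∈ UniqueFactorizationMonoid.normalizedFactors I, p.IsPrime ∧ p ≠ ⊥ := by
      intro p hp
      have := UniqueFactorizationMonoid.prime_of_normalized_factor p hp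
      exact ⟨Ideal.isPrime_of_prime this, this.ne_zero⟩
    refine ⟨(UniqueFactorizationMonoid.normalizedFactors I).attach.map
      (fun p => ⟨p.1, hp p.1 p.2⟩), ?_⟩
    ext1
    simp only [Multiset.map_map, Function.comp_def, Multiset.attach_map_val]
    exact (UniqueFactorizationMonoid.prod_normalizedFactors_eq hI).trans (normalize_eq I)

lemma zeta_iSup (s : ℝ) (hs : 1 < s) : ENNReal.ofReal (∑' n, zterm K s n) =
    ⨆ S : Finset (NPrimes K), ∏ p ∈ S, (1 - ENNReal.ofReal ((Ideal.absNorm p.1 : ℝ) ^ (-s)))⁻¹ := by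
  rw [← tsum_multiset_eq_iSup]
  let g : ℕ → ℝ≥0∞ := fun n => ENNReal.ofReal ((n : ℝ) ^ (-s))
  have h1 : ∀ u : Multiset (NPrimes K),
      (u.map (fun p => ENNReal.ofReal ((Ideal.absNorm p.1 : ℝ) ^ (-s)))).prod =
        g (Ideal.absNorm (u.map Subtype.val).prod) := by
    intro u
    induction u using Multiset.induction with
    | empty => simp [g]
    | cons p u ih =>
      rw [Multiset.map_cons, Multiset.prod_cons, ih, Multiset.map_cons, Multiset.prod_cons, map_mul]
      simp only [g]
      rw [← ENNReal.ofReal_mul (by positivity), ← Real.mul_rpow (by positivity) (by positivity)]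
      push_cast
      rfl
  rw [tsum_congr h1]
  have h2 := (Equiv.ofBijective _ (multiset_bij K)).tsum_eq (fun I => g (Ideal.absNorm I.1))
  simp only [Equiv.ofBijective_apply] at h2
  rw [h2, ← (Equiv.sigmaFiberEquiv (fun I : {I : Ideal (𝓞 K) // I ≠ ⊥} =>
    Ideal.absNorm I.1)).tsum_eq, ENNReal.tsum_sigma']
  rw [ENNReal.ofReal_tsum_of_nonneg (zterm_nonneg K s) (zterm_summable K s hs)]
  refine tsum_congr fun n => ?_
  have h3 : ∀ x : {I : {I : Ideal (𝓞 K) // I ≠ ⊥} // Ideal.absNorm I.1 = n},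
      g (Ideal.absNorm ((Equiv.sigmaFiberEquiv (fun I : {I : Ideal (𝓞 K) // I ≠ ⊥} =>
    Ideal.absNorm I.1)) ⟨n, x⟩).1) = g n := by
    intro x
    simp [x.2]
  rw [tsum_congr h3, ENNReal.tsum_const]
  unfold zterm
  split_ifs with hn
  · subst hn
    have : IsEmpty {I : {I : Ideal (𝓞 K) // I ≠ ⊥} // Ideal.absNorm I.1 = 0} :=
      ⟨fun x => x.1.2 (Ideal.absNorm_eq_zero_iff.1 x.2)⟩
    rw [ENat.card_eq_zero_iff_empty _ |>.2 this]
    simp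
  · have hfin : Finite {I : Ideal (𝓞 K) // Ideal.absNorm I = n} :=
      Ideal.finite_setOfPred_absNorm_eq n
    let e : {I : {I : Ideal (𝓞 K) // I ≠ ⊥} // Ideal.absNorm I.1 = n} ≃
        {I : Ideal (𝓞 K) // Ideal.absNorm I = n} :=
      { toFun := fun x => ⟨x.1.1, x.2⟩
        invFun := fun x => ⟨⟨x.1, fun h => hn (by rw [← x.2, h]; simp)⟩, x.2⟩
        left_inv := fun _ => rfl
        right_inv := fun _ => rfl }
    rw [ENat.card_congr e, ENat.card_eq_coe_natCard, ENNReal.ofReal_mul (by positivity)]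
    simp [g]

lemma two_le_absNorm (p : NPrimes K) : 2 ≤ Ideal.absNorm p.1 := by
  have h0 : Ideal.absNorm p.1 ≠ 0 := fun h => p.2.2 (Ideal.absNorm_eq_zero_iff.1 h)
  have h1 : Ideal.absNorm p.1 ≠ 1 := fun h => p.2.1.ne_top (Ideal.absNorm_eq_one_iff.1 h)
  omega

lemma absNorm_rpow_le_half (p : NPrimes K) (s : ℝ) (hs : 1 < s) :
    (Ideal.absNorm p.1 : ℝ) ^ (-s) ≤ 1 / 2 := rpow_neg_le_half _ (two_le_absNorm K p) s hs

lemma zeta_log (s : ℝ) (hs : 1 < s) : 0 < (∑' n, zterm K s n) ∧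
    HasSum (fun p : NPrimes K => -Real.log (1 - (Ideal.absNorm p.1 : ℝ) ^ (-s)))
      (Real.log (∑' n, zterm K s n)) := by
  set Z := ∑' n, zterm K s n with hZ
  have hsup := zeta_iSup K s hs
  rw [← hZ] at hsup
  have hx := fun p => absNorm_rpow_le_half K p s hs
  have hfac : ∀ S : Finset (NPrimes K),
      ∏ p ∈ S, (1 - ENNReal.ofReal ((Ideal.absNorm p.1 : ℝ) ^ (-s)))⁻¹ =
      ENNReal.ofReal (∏ p ∈ S, (1 - (Ideal.absNorm p.1 : ℝ) ^ (-s))⁻¹) := by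
    intro S
    rw [ENNReal.ofReal_prod_of_nonneg]
    · refine Finset.prod_congr rfl fun p _ => ?_
      rw [ENNReal.ofReal_inv_of_pos (by linarith [hx p]), ENNReal.ofReal_sub _ (by positivity)]
      simp
    · intro p _
      have := hx p
      rw [inv_nonneg]; linarith
  simp_rw [hfac] at hsup
  have hpos : ∀ S : Finset (NPrimes K), 0 < ∏ p ∈ S, (1 - (Ideal.absNorm p.1 : ℝ) ^ (-s))⁻¹ :=
    fun S => Finset.prod_pos fun p _ => by
      have := hx p
      rw [inv_pos]; linarith
  have hZ0 : 0 < Z := by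
    have h := le_iSup (fun S : Finset (NPrimes K) =>
      ENNReal.ofReal (∏ p ∈ S, (1 - (Ideal.absNorm p.1 : ℝ) ^ (-s))⁻¹)) ∅
    rw [← hsup] at h
    simp only [Finset.prod_empty, ENNReal.ofReal_one] at h
    by_contra hc
    rw [ENNReal.ofReal_of_nonpos (by linarith)] at h
    simp at h
  have hlogS : ∀ S : Finset (NPrimes K), ∑ p ∈ S, -Real.log (1 - (Ideal.absNorm p.1 : ℝ) ^ (-s)) =
      Real.log (∏ p ∈ S, (1 - (Ideal.absNorm p.1 : ℝ) ^ (-s))⁻¹) := by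
    intro S
    rw [Real.log_prod]
    · simp [Real.log_inv]
    · intro p _
      have := hx p
      apply inv_ne_zero; linarith
  refine ⟨hZ0, hasSum_of_isLUB_of_nonneg _ (fun p => ?_) ?_⟩
  · have := hx p
    have : 0 ≤ (Ideal.absNorm p.1 : ℝ) ^ (-s) := by positivity
    have := Real.log_nonpos (x := 1 - (Ideal.absNorm p.1 : ℝ) ^ (-s)) (by linarith) (by linarith)
    linarith
  · constructor
    · rintro _ ⟨S, rfl⟩
      dsimp only
      rw [hlogS]
      refine Real.log_le_log (hpos S) ?_
      have h := le_iSup (fun S : Finset (NPrimes K) =>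
        ENNReal.ofReal (∏ p ∈ S, (1 - (Ideal.absNorm p.1 : ℝ) ^ (-s))⁻¹)) S
      rw [← hsup] at h
      exact (ENNReal.ofReal_le_ofReal_iff hZ0.le).1 h
    · intro b hb
      rw [Real.log_le_iff_le_exp hZ0, ← ENNReal.ofReal_le_ofReal_iff (by positivity), hsup]
      refine iSup_le fun S => ENNReal.ofReal_le_ofReal ?_
      rw [← Real.log_le_iff_le_exp (hpos S), ← hlogS]
      exact hb ⟨S, rfl⟩

lemma neg_log_bounds (x : ℝ) (h0 : 0 ≤ x) (h1 : x ≤ 1 / 2) :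
    x ≤ -Real.log (1 - x) ∧ -Real.log (1 - x) ≤ x + 2 * x ^ 2 := by
  constructor
  · have := Real.log_le_sub_one_of_pos (x := 1 - x) (by linarith)
    linarith
  · have := Real.one_sub_inv_le_log_of_pos (x := 1 - x) (by linarith)
    have h2 : (1 - x)⁻¹ ≤ 1 + x + 2 * x ^ 2 := by
      rw [inv_le_iff_one_le_mul₀ (by linarith)]
      nlinarith [mul_nonneg (mul_nonneg h0 h0) (by linarith : (0:ℝ) ≤ 1 - 2 * x)]
    linarith

lemma primes_summable (s : ℝ) (hs : 1 < s) :
    Summable fun p : NPrimes K => (Ideal.absNorm p.1 : ℝ) ^ (-s) :=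
  Summable.of_nonneg_of_le (fun p => by positivity)
    (fun p => (neg_log_bounds _ (by positivity) (absNorm_rpow_le_half K p s hs)).1)
    (zeta_log K s hs).2.summable

lemma tendsto_logInv : Tendsto (fun s : ℝ => Real.log (1 / (s - 1))) (𝓝[>] 1) atTop := by
  refine Real.tendsto_log_atTop.comp ?_
  simp only [one_div]
  refine tendsto_inv_nhdsGT_zero.comp ?_
  refine tendsto_nhdsWithin_iff.2 ⟨?_, ?_⟩
  · have : Tendsto (fun s : ℝ => s - 1) (𝓝 1) (𝓝 (1 - 1)) := by
      exact (continuous_id.sub continuous_const).tendsto 1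
    rw [sub_self] at this
    exact this.mono_left nhdsWithin_le_nhds
  · filter_upwards [self_mem_nhdsWithin] with s hs
    simpa using hs

/-- the prime sum has logarithmic growth -/
theorem primes_tendsto : Tendsto (fun s : ℝ => (∑' p : NPrimes K, (Ideal.absNorm p.1 : ℝ) ^ (-s)) /
    Real.log (1 / (s - 1))) (𝓝[>] 1) (𝓝 1) := by
  have hl := tendsto_logInv
  have hres : Tendsto (fun s : ℝ => Real.log ((s - 1) * ∑' n, zterm K s n)) (𝓝[>] 1)
      (𝓝 (Real.log (dedekindZeta_residue K))) := by
    refine ((Real.continuousAt_log (dedekindZeta_residue_ne_zero K)).tendsto).comp ?_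
    have := tendsto_sub_one_mul_dedekindZeta_nhdsGT K
    have h2 := (Complex.continuous_re.tendsto _).comp this
    simp only [Complex.ofReal_re] at h2
    refine h2.congr fun s => ?_
    simp only [Function.comp_apply, zeta_coe]
    rw [← Complex.ofReal_one, ← Complex.ofReal_sub, ← Complex.ofReal_mul, Complex.ofReal_re]
  set C := ∑' p : NPrimes K, 2 * (Ideal.absNorm p.1 : ℝ) ^ (-(2 : ℝ)) with hC
  have hsum2 : Summable fun p : NPrimes K => 2 * (Ideal.absNorm p.1 : ℝ) ^ (-(2 : ℝ)) :=
    (primes_summable K 2 (by norm_num)).mul_left 2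
  have hdiv : ∀ D : ℝ, Tendsto (fun s : ℝ => 1 + (Real.log ((s - 1) * ∑' n, zterm K s n) - D) /
      Real.log (1 / (s - 1))) (𝓝[>] 1) (𝓝 1) := by
    intro D
    have := (hres.sub_const D).div_atTop hl
    simpa using this.const_add 1
  refine tendsto_of_tendsto_of_tendsto_of_le_of_le' (hdiv C) (hdiv 0) ?_ ?_
  all_goals
    filter_upwards [self_mem_nhdsWithin, hl.eventually_gt_atTop 0] with s hs hlpos
    have hs : 1 < s := hs
    obtain ⟨hZ, hsum⟩ := zeta_log K s hs
    have hlog : Real.log ((s - 1) * ∑' n, zterm K s n) =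
        Real.log (∑' n, zterm K s n) - Real.log (1 / (s - 1)) := by
      rw [Real.log_mul (by linarith) hZ.ne', one_div, Real.log_inv]; ring
    rw [hlog, ← hsum.tsum_eq]
    have hps := primes_summable K s hs
  · rw [div_add' _ _ _ hlpos.ne' |> fun h => (add_comm _ _).trans h]
    gcongr
    have : ∑' p : NPrimes K, -Real.log (1 - (Ideal.absNorm p.1 : ℝ) ^ (-s)) ≤
        ∑' p : NPrimes K, ((Ideal.absNorm p.1 : ℝ) ^ (-s) +
          2 * (Ideal.absNorm p.1 : ℝ) ^ (-(2 : ℝ))) := by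
      refine hsum.summable.tsum_le_tsum (fun p => ?_) (hps.add hsum2)
      refine (neg_log_bounds _ (by positivity) (absNorm_rpow_le_half K p s hs)).2.trans ?_
      gcongr
      rw [← Real.rpow_natCast, ← Real.rpow_mul (by positivity)]
      have := two_le_absNorm K p
      refine Real.rpow_le_rpow_of_exponent_le ?_ ?_
      · have : (2 : ℝ) ≤ Ideal.absNorm p.1 := by exact_mod_cast this
        linarith
      · push_cast; linarith
    rw [hps.tsum_add hsum2] at this
    linarith
  · rw [div_add' _ _ _ hlpos.ne' |> fun h => (add_comm _ _).trans h]
    gcongr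
    have : ∑' p : NPrimes K, (Ideal.absNorm p.1 : ℝ) ^ (-s) ≤
        ∑' p : NPrimes K, -Real.log (1 - (Ideal.absNorm p.1 : ℝ) ^ (-s)) :=
      hps.tsum_le_tsum (fun p => (neg_log_bounds _ (by positivity)
        (absNorm_rpow_le_half K p s hs)).1) hsum.summable
    linarith

end ZetaPart


section ZetaPart2

open NumberField Filter Topology

variable (K : Type) [Field K] [NumberField K]

variable {K} in
/-- residue characteristic -/
noncomputable def rc (p : NPrimes K) : ℕ := Ideal.absNorm (Ideal.under ℤ p.1)

variable {K} in
lemma rc_prime (p : NPrimes K) : (rc p).Prime := by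
  have := p.2.1
  have : NeZero p.1 := ⟨p.2.2⟩
  exact Nat.absNorm_under_prime p.1

variable {K} in
lemma rc_mem (p : NPrimes K) : ((rc p : ℕ) : 𝓞 K) ∈ p.1 := Int.absNorm_under_mem p.1

variable {K} in
lemma rc_unique (p : NPrimes K) (n : ℕ) (hn : n.Prime) (h : (n : 𝓞 K) ∈ p.1) : rc p = n := by
  have h2 : ((n : ℤ) : 𝓞 K) ∈ p.1 := by exact_mod_cast h
  rw [Int.cast_mem_ideal_iff] at h2
  have h3 : rc p ∣ n := by exact_mod_cast h2
  exact (Nat.prime_dvd_prime_iff_eq (rc_prime p) hn).1 h3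

variable {K} in
lemma absNorm_eq_rc_pow (p : NPrimes K) : ∃ f, 1 ≤ f ∧ Ideal.absNorm p.1 = rc p ^ f := by
  have : p.1.LiesOver (Ideal.span {((rc p : ℕ) : ℤ)}) := Int.liesOver_span_absNorm p.1
  have h := Ideal.absNorm_eq_pow_inertiaDeg' p.1 (p := rc p) (rc_prime p)
  refine ⟨_, ?_, h⟩
  rw [Nat.one_le_iff_ne_zero]
  intro h0
  rw [h0, pow_zero] at h
  have := two_le_absNorm K p
  omega

lemma rc_fiber (n : ℕ) : {p : NPrimes K | rc p = n}.Finite ∧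
    {p : NPrimes K | rc p = n}.ncard ≤ Module.finrank ℚ K := by
  by_cases hn : n.Prime
  · have hp0 : Ideal.span {(n : ℤ)} ≠ ⊥ := by simpa using hn.ne_zero
    have hpr : (Ideal.span {(n : ℤ)}).IsPrime := by
      rw [Ideal.span_singleton_prime (by exact_mod_cast hn.ne_zero)]
      exact Nat.prime_iff_prime_int.1 hn
    have : (Ideal.span {(n : ℤ)}).IsMaximal := hpr.isMaximal hp0
    have hc := Ideal.card_primesOverFinset_le_finrank (𝓞 K) ℚ K hp0
    have himg : Subtype.val '' {p : NPrimes K | rc p = n} ⊆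
        (IsDedekindDomain.primesOverFinset (Ideal.span {(n : ℤ)}) (𝓞 K) : Set (Ideal (𝓞 K))) := by
      rintro _ ⟨p, hp, rfl⟩
      rw [IsDedekindDomain.coe_primesOverFinset hp0]
      refine ⟨p.2.1, ?_⟩
      rw [← show rc p = n from hp]
      exact Int.liesOver_span_absNorm p.1
    have hf : {p : NPrimes K | rc p = n}.Finite :=
      Set.Finite.of_finite_image ((Finset.finite_toSet _).subset himg)
        Subtype.val_injective.injOn
    refine ⟨hf, ?_⟩
    rw [← Set.ncard_image_of_injective _ (Subtype.val_injective (p := fun p : Ideal (𝓞 K) => p.IsPrime ∧ p ≠ ⊥))]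
    refine (Set.ncard_le_ncard himg (Finset.finite_toSet _)).trans ?_
    rwa [Set.ncard_coe_finset]
  · have : {p : NPrimes K | rc p = n} = ∅ := by
      ext p
      simp only [Set.mem_ofPred_eq, Set.mem_empty_iff_false, iff_false]
      rintro rfl
      exact hn (rc_prime p)
    simp [this]

lemma rc_summable : Summable fun p : NPrimes K => ((rc p : ℝ) ^ 2)⁻¹ := by
  classical
  have hs : Summable fun n : ℕ => (((n : ℝ)) ^ 2)⁻¹ := Real.summable_nat_pow_inv.2 (by norm_num)
  refine summable_of_sum_le (c := Module.finrank ℚ K * ∑' n : ℕ, (((n : ℝ)) ^ 2)⁻¹)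
    (fun p => by positivity) fun u => ?_
  rw [Finset.sum_comp (fun n : ℕ => (((n : ℝ)) ^ 2)⁻¹) rc, ← tsum_mul_left]
  refine (Finset.sum_le_sum (g := fun n : ℕ => Module.finrank ℚ K * (((n : ℝ)) ^ 2)⁻¹)
    fun n _ => ?_).trans ((hs.mul_left _).sum_le_tsum _ fun n _ => by positivity)
  rw [nsmul_eq_mul]
  gcongr
  refine le_trans ?_ (rc_fiber K n).2
  rw [← Set.ncard_coe_finset]
  refine Set.ncard_le_ncard ?_ (rc_fiber K n).1
  intro p hp
  simpa using (Finset.mem_filter.1 hp).2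

/-- number of primes of given norm -/
noncomputable def normCount (n : ℕ) : ℕ := Nat.card {p : NPrimes K // Ideal.absNorm p.1 = n}

lemma finite_norm_eq (n : ℕ) : Finite {p : NPrimes K // Ideal.absNorm p.1 = n} := by
  have hfin : Finite {I : Ideal (𝓞 K) // Ideal.absNorm I = n} :=
      Ideal.finite_setOfPred_absNorm_eq n
  exact Finite.of_injective (β := {I : Ideal (𝓞 K) // Ideal.absNorm I = n})
    (fun x => ⟨x.1.1, x.2⟩) (fun x y h => by
      exact Subtype.ext (Subtype.ext (congrArg Subtype.val h :)))

open scoped Classical in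
/-- summand over good primes -/
noncomputable def gterm (B : Set ℕ) (s : ℝ) (n : ℕ) : ℝ :=
  if n.Prime ∧ n ∉ B then (n : ℝ) ^ (-s) else 0

lemma gterm_nonneg (B : Set ℕ) (s : ℝ) (n : ℕ) : 0 ≤ gterm B s n := by
  unfold gterm; split_ifs <;> positivity

lemma gterm_le (B : Set ℕ) (s : ℝ) (n : ℕ) : gterm B s n ≤ (n : ℝ) ^ (-s) := by
  unfold gterm; split_ifs
  · exact le_rfl
  · positivity

lemma gterm_hasSum (B : Set ℕ) (s : ℝ) (hs : 1 < s) :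
    HasSum (fun n => normCount K n * gterm B s n)
      (∑' p : NPrimes K, gterm B s (Ideal.absNorm p.1)) := by
  have h1 : Summable (fun p : NPrimes K => gterm B s (Ideal.absNorm p.1)) :=
    Summable.of_nonneg_of_le (fun _ => gterm_nonneg _ _ _) (fun _ => gterm_le _ _ _)
      (primes_summable K s hs)
  have := h1.hasSum.tsum_fiberwise (fun p : NPrimes K => Ideal.absNorm p.1)
  have e2 : (fun n => (normCount K n : ℝ) * gterm B s n) = (fun n : ℕ => ∑' b : (fun p : NPrimes K => Ideal.absNorm p.1) ⁻¹' {n}, gterm B s (Ideal.absNorm b.1.1)) := ?_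
  · rw [e2]; exact this
  ext n
  have e : ∀ x : (fun p : NPrimes K => Ideal.absNorm p.1) ⁻¹' {n},
      gterm B s (Ideal.absNorm x.1.1) = gterm B s n := fun x => by
    rw [show Ideal.absNorm x.1.1 = n from x.2]
  rw [tsum_congr e, tsum_const, nsmul_eq_mul]
  rfl

theorem gterm_tendsto (B : Set ℕ) (hB : B.Finite) :
    Tendsto (fun s : ℝ => (∑' n, normCount K n * gterm B s n) / Real.log (1 / (s - 1)))
      (𝓝[>] 1) (𝓝 1) := by
  classical
  have hl := tendsto_logInv
  let e : NPrimes K → ℝ := fun p => ((rc p : ℝ) ^ 2)⁻¹ +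
    if Ideal.absNorm p.1 ∈ B then (1 : ℝ) else 0
  have he : Summable e := by
    refine (rc_summable K).add (summable_of_hasFiniteSupport ?_)
    have : {p : NPrimes K | Ideal.absNorm p.1 ∈ B}.Finite := by
      have : {p : NPrimes K | Ideal.absNorm p.1 ∈ B} =
        ⋃ n ∈ B, {p : NPrimes K | Ideal.absNorm p.1 = n} := by ext; simp
      rw [this]
      exact hB.biUnion fun n _ => finite_norm_eq K n
    refine this.subset fun p hp => ?_
    by_contra hc
    exact hp (if_neg hc)
  have hdiv : Tendsto (fun s : ℝ => (∑' p : NPrimes K, (Ideal.absNorm p.1 : ℝ) ^ (-s)) /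
      Real.log (1 / (s - 1)) - (∑' p, e p) / Real.log (1 / (s - 1))) (𝓝[>] 1) (𝓝 1) := by
    simpa using (primes_tendsto K).sub (hl.const_div_atTop (∑' p, e p))
  refine tendsto_of_tendsto_of_tendsto_of_le_of_le' hdiv (primes_tendsto K) ?_ ?_
  all_goals
    filter_upwards [self_mem_nhdsWithin, hl.eventually_gt_atTop 0] with s hs hlpos
    have hs : 1 < s := hs
    rw [(gterm_hasSum K B s hs).tsum_eq]
    have h1 : Summable (fun p : NPrimes K => gterm B s (Ideal.absNorm p.1)) :=
      Summable.of_nonneg_of_le (fun _ => gterm_nonneg _ _ _) (fun _ => gterm_le _ _ _)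
        (primes_summable K s hs)
  · rw [← sub_div]
    gcongr
    rw [← Summable.tsum_sub (primes_summable K s hs) he]
    refine ((primes_summable K s hs).sub he).tsum_le_tsum (fun p => ?_) h1
    have h2 : (1 : ℝ) ≤ Ideal.absNorm p.1 := by
      have := two_le_absNorm K p
      exact_mod_cast (by omega : 1 ≤ Ideal.absNorm p.1)
    have h3 : (Ideal.absNorm p.1 : ℝ) ^ (-s) ≤ 1 := Real.rpow_le_one_of_one_le_of_nonpos h2 (by linarith)
    have h4 : (0:ℝ) ≤ ((rc p : ℝ) ^ 2)⁻¹ := by positivity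
    by_cases hb : Ideal.absNorm p.1 ∈ B
    · have := gterm_nonneg B s (Ideal.absNorm p.1)
      simp only [e, hb, if_true]
      linarith
    · by_cases hpr : (Ideal.absNorm p.1).Prime
      · simp only [gterm, e, hpr, hb, not_false_eq_true, and_self, if_true, if_false]
        linarith
      · simp only [gterm, e, hpr, hb, false_and, if_false, add_zero, sub_nonpos]
        obtain ⟨f, hf, hN⟩ := absNorm_eq_rc_pow p
        have hf2 : 2 ≤ f := by
          rcases hf.lt_or_eq with h | h
          · exact h
          · rw [← h, pow_one] at hN
            rw [hN] at hpr
            exact absurd (rc_prime p) hpr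
        have h5 : ((rc p : ℝ) ^ 2) ≤ Ideal.absNorm p.1 := by
          rw [hN]
          exact_mod_cast Nat.pow_le_pow_right (rc_prime p).pos hf2
        have h6 : (0 : ℝ) < (rc p : ℝ) ^ 2 := by
          have := (rc_prime p).pos
          positivity
        calc (Ideal.absNorm p.1 : ℝ) ^ (-s) ≤ (Ideal.absNorm p.1 : ℝ) ^ (-1 : ℝ) :=
              Real.rpow_le_rpow_of_exponent_le h2 (by linarith)
          _ = (Ideal.absNorm p.1 : ℝ)⁻¹ := Real.rpow_neg_one _
          _ ≤ _ := inv_anti₀ h6 h5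
  · refine div_le_div_of_nonneg_right ?_ hlpos.le
    exact h1.tsum_le_tsum (fun p => gterm_le _ _ _) (primes_summable K s hs)

end ZetaPart2


section LocalPart

open NumberField
open scoped Pointwise

lemma galRestrict_eq_smul {F E : Type} [Field F] [NumberField F] [Field E] [NumberField E]
    [Algebra F E] (σ : E ≃ₐ[F] E) (y : 𝓞 E) :
    galRestrict (𝓞 F) F E (𝓞 E) σ y = σ • y := by
  apply RingOfIntegers.ext
  have := algebraMap_galRestrict_apply (𝓞 F) (K := F) (L := E) (B := 𝓞 E) σ y
  exact this

lemma coe_smul_int {F E : Type} [Field F] [Field E] [NumberField E]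
    [Algebra F E] (σ : E ≃ₐ[F] E) (y : 𝓞 E) : ((σ • y : 𝓞 E) : E) = σ (y : E) := rfl

lemma smul_algebraMap_int {F E : Type} [Field F] [NumberField F] [Field E] [NumberField E]
    [Algebra F E] (σ : E ≃ₐ[F] E) (y : 𝓞 F) :
    σ • (algebraMap (𝓞 F) (𝓞 E) y) = algebraMap (𝓞 F) (𝓞 E) y := by
  apply RingOfIntegers.ext
  exact σ.commutes (y : F)

instance smulCommInt {F E : Type} [Field F] [NumberField F] [Field E] [NumberField E]
    [Algebra F E] : SMulCommClass (E ≃ₐ[F] E) (𝓞 F) (𝓞 E) where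
  smul_comm σ a b := by
    rw [Algebra.smul_def, Algebra.smul_def, smul_mul', smul_algebraMap_int]

lemma invInt {F E : Type} [Field F] [NumberField F] [Field E] [NumberField E]
    [Algebra F E] [IsGalois F E] : Algebra.IsInvariant (𝓞 F) (𝓞 E) (E ≃ₐ[F] E) where
  isInvariant b hb := by
    have h1 : ∀ σ : E ≃ₐ[F] E, σ (b : E) = b := fun σ => congrArg (algebraMap (𝓞 E) E) (hb σ)
    obtain ⟨k, hk⟩ := (IsGalois.mem_range_algebraMap_iff_fixed (F := F) (b : E)).2 h1
    have hi : IsIntegral ℤ k := by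
      have : IsIntegral ℤ (algebraMap F E k) := by rw [hk]; exact b.2
      exact (isIntegral_algebraMap_iff (algebraMap F E).injective).1 this
    exact ⟨⟨k, hi⟩, RingOfIntegers.ext hk⟩

lemma invIntQ {E : Type} [Field E] [NumberField E]
    [IsGalois ℚ E] : Algebra.IsInvariant ℤ (𝓞 E) (E ≃ₐ[ℚ] E) where
  isInvariant b hb := by
    have h1 : ∀ σ : E ≃ₐ[ℚ] E, σ (b : E) = b := fun σ => congrArg (algebraMap (𝓞 E) E) (hb σ)
    obtain ⟨k, hk⟩ := (IsGalois.mem_range_algebraMap_iff_fixed (F := ℚ) (b : E)).2 h1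
    have hi : IsIntegral ℤ k := by
      have : IsIntegral ℤ (algebraMap ℚ E k) := by rw [hk]; exact b.2
      exact (isIntegral_algebraMap_iff (algebraMap ℚ E).injective).1 this
    obtain ⟨n, hn⟩ := IsIntegrallyClosed.isIntegral_iff.1 hi
    refine ⟨n, RingOfIntegers.ext ?_⟩
    have : (b : E) = n := by rw [← hk, ← hn]; simp
    rw [this]; simp

lemma finite_quot_prime {E : Type} [Field E] [NumberField E] (Q : Ideal (𝓞 E)) (h : Q ≠ ⊥) :
    Finite (𝓞 E ⧸ Q) := Ideal.finiteQuotientOfFreeOfNeBot Q h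

lemma exists_frob {F E : Type} [Field F] [NumberField F] [Field E] [NumberField E]
    [Algebra F E] [IsGalois F E] (Q : Ideal (𝓞 E)) [Q.IsPrime] (h : Q ≠ ⊥) :
    ∃ σ : E ≃ₐ[F] E, ∀ y : 𝓞 E,
      σ • y - y ^ Ideal.absNorm (Q.comap (algebraMap (𝓞 F) (𝓞 E))) ∈ Q := by
  have := finite_quot_prime Q h
  have := invInt (F := F) (E := E)
  obtain ⟨σ, hσ⟩ := IsArithFrobAt.exists_of_isInvariant (𝓞 F) (E ≃ₐ[F] E) Q
  exact ⟨σ, fun y => hσ y⟩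

lemma exists_frob_int {E : Type} [Field E] [NumberField E]
    [IsGalois ℚ E] (Q : Ideal (𝓞 E)) [Q.IsPrime] (h : Q ≠ ⊥) (p : ℕ) (hp : p.Prime)
    (hpQ : (p : 𝓞 E) ∈ Q) :
    ∃ σ : E ≃ₐ[ℚ] E, ∀ y : 𝓞 E, σ • y - y ^ p ∈ Q := by
  have := finite_quot_prime Q h
  have := invIntQ (E := E)
  obtain ⟨σ, hσ⟩ := IsArithFrobAt.exists_of_isInvariant ℤ (E ≃ₐ[ℚ] E) Q
  refine ⟨σ, fun y => ?_⟩
  have h1 := hσ y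
  have h2 : rc (⟨Q, ‹_›, h⟩ : NPrimes E) = p := rc_unique _ p hp hpQ
  have h3 : Nat.card (ℤ ⧸ Q.under ℤ) = p := by
    rw [← h2]; rfl
  rw [h3] at h1
  exact h1

lemma exists_conj {F E : Type} [Field F] [NumberField F] [Field E] [NumberField E]
    [Algebra F E] [IsGalois F E] (Q Q' : Ideal (𝓞 E)) [Q.IsPrime] [Q'.IsPrime]
    (h : Q.comap (algebraMap (𝓞 F) (𝓞 E)) = Q'.comap (algebraMap (𝓞 F) (𝓞 E))) :
    ∃ σ : E ≃ₐ[F] E, ∀ y : 𝓞 E, y ∈ Q' ↔ σ • y ∈ Q := by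
  have := invInt (F := F) (E := E)
  obtain ⟨σ, hσ⟩ := Algebra.IsInvariant.exists_smul_of_under_eq (𝓞 F) (𝓞 E) (E ≃ₐ[F] E) Q' Q h.symm
  refine ⟨σ, fun y => ?_⟩
  rw [hσ]
  exact (Ideal.smul_mem_pointwise_smul_iff (a := σ) (S := Q') (x := y)).symm

lemma exists_conj_int {E : Type} [Field E] [NumberField E]
    [IsGalois ℚ E] (Q Q' : NPrimes E) (h : rc Q = rc Q') :
    ∃ σ : E ≃ₐ[ℚ] E, ∀ y : 𝓞 E, y ∈ Q'.1 ↔ σ • y ∈ Q.1 := by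
  have := invIntQ (E := E)
  have := Q.2.1
  have := Q'.2.1
  have hu : Q'.1.under ℤ = Q.1.under ℤ := by
    have key : ∀ P : NPrimes E, P.1.under ℤ = Ideal.span {(rc P : ℤ)} := by
      intro P
      exact (Int.ideal_span_absNorm_eq_self (P.1.under ℤ)).symm
    rw [key, key, h]
  obtain ⟨σ, hσ⟩ := Algebra.IsInvariant.exists_smul_of_under_eq ℤ (𝓞 E) (E ≃ₐ[ℚ] E) Q'.1 Q.1 hu
  refine ⟨σ, fun y => ?_⟩
  rw [hσ]
  exact (Ideal.smul_mem_pointwise_smul_iff (a := σ) (S := Q'.1) (x := y)).symm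

/-- primes with trivial inertia outside a finite set -/
lemma finite_bad {F E : Type} [Field F] [Field E] [NumberField E]
    [Algebra F E] [Finite (E ≃ₐ[F] E)] :
    {Q : NPrimes E | ∃ τ : E ≃ₐ[F] E, τ ≠ 1 ∧ ∀ y : 𝓞 E, τ • y - y ∈ Q.1}.Finite := by
  have hex : ∀ τ : E ≃ₐ[F] E, τ ≠ 1 → ∃ y : 𝓞 E, τ • y - y ≠ 0 := by
    intro τ hτ
    by_contra! hc
    apply hτ
    ext x
    obtain ⟨a, b, hb, rfl⟩ := IsFractionRing.div_surjective (A := 𝓞 E) x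
    have h1 : ∀ y : 𝓞 E, τ (y : E) = y := fun y => by
      have := congrArg (algebraMap (𝓞 E) E) (sub_eq_zero.1 (hc y))
      exact this
    rw [map_div₀]
    exact congrArg₂ (· / ·) (h1 a) (h1 b)
  choose! y hy using hex
  have : {Q : NPrimes E | ∃ τ : E ≃ₐ[F] E, τ ≠ 1 ∧ ∀ y : 𝓞 E, τ • y - y ∈ Q.1} ⊆
      ⋃ τ : {τ : E ≃ₐ[F] E // τ ≠ 1}, {Q : NPrimes E | τ.1 • y τ.1 - y τ.1 ∈ Q.1} := by
    rintro Q ⟨τ, hτ, h⟩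
    exact Set.mem_iUnion.2 ⟨⟨τ, hτ⟩, h _⟩
  refine (Set.finite_iUnion fun τ => ?_).subset this
  have hne : Ideal.span {τ.1 • y τ.1 - y τ.1} ≠ ⊥ := by
    rw [Ne, Ideal.span_singleton_eq_bot]
    exact hy _ τ.2
  have hf : {I : Ideal (𝓞 E) | Ideal.span {τ.1 • y τ.1 - y τ.1} ≤ I}.Finite := by
    have := UniqueFactorizationMonoid.fintypeSubtypeDvd _ hne
    have h2 : {I : Ideal (𝓞 E) | I ∣ Ideal.span {τ.1 • y τ.1 - y τ.1}}.Finite :=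
      @Set.toFinite _ _ (@Finite.of_fintype _ this)
    refine h2.subset fun I hI => Ideal.dvd_iff_le.2 hI
  refine Set.Finite.of_finite_image (f := Subtype.val) (hf.subset ?_) Subtype.val_injective.injOn
  rintro _ ⟨Q, hQ, rfl⟩
  exact (Ideal.span_singleton_le_iff_mem _).2 hQ

end LocalPart


section LocalPart2

open NumberField
open scoped Pointwise

/-- residue degree -/
noncomputable def rf {K : Type} [Field K] [NumberField K] (P : NPrimes K) : ℕ :=
  (absNorm_eq_rc_pow P).choose

lemma rf_pos {K : Type} [Field K] [NumberField K] (P : NPrimes K) : 1 ≤ rf P :=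
  (absNorm_eq_rc_pow P).choose_spec.1

lemma absNorm_eq {K : Type} [Field K] [NumberField K] (P : NPrimes K) :
    Ideal.absNorm P.1 = rc P ^ rf P := (absNorm_eq_rc_pow P).choose_spec.2

lemma card_quot {K : Type} [Field K] [NumberField K] (P : NPrimes K) :
    Nat.card (𝓞 K ⧸ P.1) = rc P ^ rf P := by
  rw [← absNorm_eq]; rfl

lemma dvd_of_frob_id {K : Type} [Field K] [NumberField K] (P : NPrimes K) (i : ℕ)
    (h : ∀ y : 𝓞 K, y ^ (rc P ^ i) - y ∈ P.1) : rf P ∣ i := by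
  have := finite_quot_prime P.1 P.2.2
  have hP := P.2.1
  have : P.1.IsMaximal := hP.isMaximal P.2.2
  let _ := Ideal.Quotient.field P.1
  obtain ⟨g, hg⟩ := IsCyclic.exists_generator (α := (𝓞 K ⧸ P.1)ˣ)
  have h1 : orderOf g = rc P ^ rf P - 1 := by
    rw [orderOf_eq_card_of_forall_mem_zpowers hg, Nat.card_units, card_quot]
  have h2 : g ^ (rc P ^ i - 1) = 1 := by
    obtain ⟨y, hy⟩ := Ideal.Quotient.mk_surjective (I := P.1) (g : 𝓞 K ⧸ P.1)
    have h3 : (g : 𝓞 K ⧸ P.1) ^ (rc P ^ i) = g := by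
      rw [← hy, ← map_pow]
      exact Ideal.Quotient.eq.2 (h y)
    have h4 : g ^ (rc P ^ i) = g := Units.ext (by simpa using h3)
    have h5 : 1 ≤ rc P ^ i := Nat.one_le_pow _ _ (rc_prime P).pos
    have h6 : g ^ (rc P ^ i - 1) * g = g := by
      rw [← pow_succ, Nat.sub_add_cancel h5, h4]
    simpa using h6
  have h7 := orderOf_dvd_of_pow_eq_one h2
  rw [h1] at h7
  have h8 := Nat.pow_sub_one_gcd_pow_sub_one (rc P) (rf P) i
  rw [Nat.gcd_eq_left h7] at h8
  have hp := (rc_prime P).two_le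
  have h9 : rc P ^ rf P = rc P ^ (rf P).gcd i := by
    have a1 : 1 ≤ rc P ^ rf P := Nat.one_le_pow _ _ (rc_prime P).pos
    have a2 : 1 ≤ rc P ^ (rf P).gcd i := Nat.one_le_pow _ _ (rc_prime P).pos
    omega
  have h10 := Nat.pow_right_injective hp h9
  rw [h10]; exact Nat.gcd_dvd_right _ _

lemma stab_frob {E : Type} [Field E] [NumberField E] (Q : NPrimes E) (g : E ≃ₐ[ℚ] E)
    (h : ∀ y : 𝓞 E, y ∈ Q.1 ↔ g • y ∈ Q.1) :
    ∃ j : ℕ, ∀ y : 𝓞 E, g • y - y ^ (rc Q ^ j) ∈ Q.1 := by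
  have := finite_quot_prime Q.1 Q.2.2
  have hP := Q.2.1
  have : Q.1.IsMaximal := hP.isMaximal Q.2.2
  let _ := Ideal.Quotient.field Q.1
  haveI : Fact (rc Q).Prime := ⟨rc_prime Q⟩
  haveI : CharP (𝓞 E ⧸ Q.1) (rc Q) := by
    refine (CharP.charP_iff_prime_eq_zero (rc_prime Q)).2 ?_
    have := Ideal.Quotient.eq_zero_iff_mem.2 (rc_mem Q)
    simpa using this
  letI : Algebra (ZMod (rc Q)) (𝓞 E ⧸ Q.1) := ZMod.algebra _ _
  let φ0 : (𝓞 E ⧸ Q.1) →+* (𝓞 E ⧸ Q.1) := Ideal.quotientMap Q.1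
    (MulSemiringAction.toRingHom (E ≃ₐ[ℚ] E) (𝓞 E) g) (fun y hy => (h y).1 hy)
  have hcomm : ∀ r : ZMod (rc Q), φ0 (algebraMap (ZMod (rc Q)) (𝓞 E ⧸ Q.1) r) =
      algebraMap (ZMod (rc Q)) (𝓞 E ⧸ Q.1) r := by
    intro r
    have h0 : (φ0.comp (algebraMap (ZMod (rc Q)) (𝓞 E ⧸ Q.1))) =
      algebraMap (ZMod (rc Q)) (𝓞 E ⧸ Q.1) := Subsingleton.elim _ _
    exact congrArg (fun f : ZMod (rc Q) →+* (𝓞 E ⧸ Q.1) => f r) h0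
  let φ : (𝓞 E ⧸ Q.1) →ₐ[ZMod (rc Q)] (𝓞 E ⧸ Q.1) := { φ0 with commutes' := hcomm }
  obtain ⟨j, hj⟩ := (FiniteField.bijective_frobeniusAlgHom_pow (ZMod (rc Q)) (𝓞 E ⧸ Q.1)).2 φ
  refine ⟨j, fun y => ?_⟩
  have h1 : φ (Ideal.Quotient.mk Q.1 y) = Ideal.Quotient.mk Q.1 (g • y) := rfl
  rw [← hj] at h1
  simp only [AlgHom.coe_pow, FiniteField.coe_frobeniusAlgHom, pow_iterate, ZMod.card] at h1
  rw [← map_pow] at h1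
  exact Ideal.Quotient.eq.1 h1.symm

/-- subgroup of automorphisms fixing K -/
def fixH (K Ω : Type) [Field K] [NumberField K] [Field Ω] [NumberField Ω] [Algebra K Ω] :
    Subgroup (Ω ≃ₐ[ℚ] Ω) where
  carrier := {g | ∀ k : K, g (algebraMap K Ω k) = algebraMap K Ω k}
  mul_mem' := fun {a b} ha hb k => by
    show a (b _) = _
    rw [hb, ha]
  one_mem' := fun k => rfl
  inv_mem' := fun {a} ha k => by
    show a.symm _ = _
    rw [AlgEquiv.symm_apply_eq, ha]

variable {K Ω : Type} [Field K] [NumberField K] [Field Ω] [NumberField Ω] [Algebra K Ω]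

lemma mem_fixH {g : Ω ≃ₐ[ℚ] Ω} :
    g ∈ fixH K Ω ↔ ∀ k : K, g (algebraMap K Ω k) = algebraMap K Ω k := Iff.rfl

/-- element of fixH as a K-automorphism -/
noncomputable def toGal : fixH K Ω →* (Ω ≃ₐ[K] Ω) where
  toFun g := AlgEquiv.ofRingEquiv (f := (g.1 : Ω ≃ₐ[ℚ] Ω).toRingEquiv) (fun k => g.2 k)
  map_one' := rfl
  map_mul' _ _ := rfl

@[simp] lemma toGal_apply (g : fixH K Ω) (x : Ω) : toGal g x = g.1 x := rfl
lemma toGal_smul (g : fixH K Ω) (x : 𝓞 Ω) : toGal g • x = g.1 • x := rfl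

/-- converse -/
noncomputable def ofGal (σ : Ω ≃ₐ[K] Ω) : fixH K Ω :=
  ⟨σ.restrictScalars ℚ, fun k => σ.commutes k⟩

lemma ofGal_smul (σ : Ω ≃ₐ[K] Ω) (x : 𝓞 Ω) : (ofGal σ).1 • x = σ • x := rfl
lemma toGal_ofGal (σ : Ω ≃ₐ[K] Ω) : toGal (ofGal σ) = σ := rfl

lemma fixH_smul_int {g : Ω ≃ₐ[ℚ] Ω} (hg : g ∈ fixH K Ω) (k : 𝓞 K) :
    g • (algebraMap (𝓞 K) (𝓞 Ω) k) = algebraMap (𝓞 K) (𝓞 Ω) k :=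
  RingOfIntegers.ext (hg k)

lemma comap_ne_bot (Q : NPrimes Ω) : Q.1.comap (algebraMap (𝓞 K) (𝓞 Ω)) ≠ ⊥ := by
  intro h
  have h1 : ((rc Q : ℕ) : 𝓞 K) ∈ Q.1.comap (algebraMap (𝓞 K) (𝓞 Ω)) := by
    rw [Ideal.mem_comap, map_natCast]; exact rc_mem Q
  rw [h, Ideal.mem_bot, Nat.cast_eq_zero] at h1
  exact (rc_prime Q).ne_zero h1

/-- restriction of primes -/
def resP (K : Type) [Field K] [NumberField K] [Algebra K Ω] (Q : NPrimes Ω) : NPrimes K :=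
  ⟨Q.1.comap (algebraMap (𝓞 K) (𝓞 Ω)), by
    have := Q.2.1
    exact ⟨Ideal.comap_isPrime _ _, comap_ne_bot Q⟩⟩

lemma mem_resP (Q : NPrimes Ω) (y : 𝓞 K) : y ∈ (resP K Q).1 ↔ algebraMap (𝓞 K) (𝓞 Ω) y ∈ Q.1 :=
  Iff.rfl

lemma rc_resP (Q : NPrimes Ω) : rc (resP K Q) = rc Q := by
  refine rc_unique _ _ (rc_prime Q) ?_
  rw [mem_resP, map_natCast]; exact rc_mem Q

/-- twist of primes -/
def tw (Q : NPrimes Ω) (x : Ω ≃ₐ[ℚ] Ω) : NPrimes Ω :=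
  ⟨Q.1.comap (MulSemiringAction.toRingHom (Ω ≃ₐ[ℚ] Ω) (𝓞 Ω) x), by
    have := Q.2.1
    refine ⟨Ideal.comap_isPrime _ _, fun h => ?_⟩
    have h1 : ((rc Q : ℕ) : 𝓞 Ω) ∈ Q.1.comap (MulSemiringAction.toRingHom (Ω ≃ₐ[ℚ] Ω) (𝓞 Ω) x) := by
      rw [Ideal.mem_comap, map_natCast]; exact rc_mem Q
    rw [h, Ideal.mem_bot, Nat.cast_eq_zero] at h1
    exact (rc_prime Q).ne_zero h1⟩

lemma mem_tw (Q : NPrimes Ω) (x : Ω ≃ₐ[ℚ] Ω) (y : 𝓞 Ω) : y ∈ (tw Q x).1 ↔ x • y ∈ Q.1 := Iff.rfl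

lemma rc_tw (Q : NPrimes Ω) (x : Ω ≃ₐ[ℚ] Ω) : rc (tw Q x) = rc Q := by
  refine rc_unique _ _ (rc_prime Q) ?_
  show MulSemiringAction.toRingHom (Ω ≃ₐ[ℚ] Ω) (𝓞 Ω) x ((rc Q : ℕ) : 𝓞 Ω) ∈ Q.1
  rw [map_natCast]; exact rc_mem Q

/-- the prime of K below the twist -/
def px (K : Type) [Field K] [NumberField K] [Algebra K Ω] (Q : NPrimes Ω) (x : Ω ≃ₐ[ℚ] Ω) :
    NPrimes K := resP K (tw Q x)

lemma mem_px (Q : NPrimes Ω) (x : Ω ≃ₐ[ℚ] Ω) (y : 𝓞 K) :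
    y ∈ (px K Q x).1 ↔ x • algebraMap (𝓞 K) (𝓞 Ω) y ∈ Q.1 := Iff.rfl

lemma rc_px (Q : NPrimes Ω) (x : Ω ≃ₐ[ℚ] Ω) : rc (px K Q x) = rc Q := by
  rw [px, rc_resP, rc_tw]

lemma frob_pow {Q : NPrimes Ω} {F : Ω ≃ₐ[ℚ] Ω} {p : ℕ} (hF : ∀ y : 𝓞 Ω, F • y - y ^ p ∈ Q.1) (i : ℕ)
    (y : 𝓞 Ω) : F ^ i • y - y ^ (p ^ i) ∈ Q.1 := by
  induction i generalizing y with
  | zero => simp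
  | succ n ih =>
    have h1 := ih (F • y)
    have h2 : (F • y) ^ (p ^ n) - (y ^ p) ^ (p ^ n) ∈ Q.1 :=
      Q.1.mem_of_dvd (sub_dvd_pow_sub_pow _ _ _) (hF y)
    have h3 := Q.1.add_mem h1 h2
    rw [sub_add_sub_cancel, ← mul_smul, ← pow_succ, ← pow_mul, ← pow_succ'] at h3
    exact h3

lemma frob_unique {F E : Type} [Field F] [Field E] [NumberField E] [Algebra F E]
    {Q : Ideal (𝓞 E)} (hI : ∀ τ : E ≃ₐ[F] E, (∀ y : 𝓞 E, τ • y - y ∈ Q) → τ = 1)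
    {a b : E ≃ₐ[F] E} {n : ℕ} (ha : ∀ y : 𝓞 E, a • y - y ^ n ∈ Q)
    (hb : ∀ y : 𝓞 E, b • y - y ^ n ∈ Q) : a = b := by
  have : a * b⁻¹ = 1 := hI _ fun y => by
    have h := Q.sub_mem (ha (b⁻¹ • y)) (hb (b⁻¹ • y))
    rw [sub_sub_sub_cancel_right, ← mul_smul, smul_inv_smul] at h
    exact h
  exact mul_inv_eq_one.1 this

/-- standing assumptions on a good prime with Frobenius -/
structure GoodFrob (Q : NPrimes Ω) (F : Ω ≃ₐ[ℚ] Ω) : Prop where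
  frob : ∀ y : 𝓞 Ω, F • y - y ^ rc Q ∈ Q.1
  inert : ∀ τ : Ω ≃ₐ[ℚ] Ω, (∀ y : 𝓞 Ω, τ • y - y ∈ Q.1) → τ = 1

variable {Q : NPrimes Ω} {F : Ω ≃ₐ[ℚ] Ω}

lemma GoodFrob.frobK [IsGalois ℚ Ω] (h : GoodFrob Q F) (x : Ω ≃ₐ[ℚ] Ω) :
    x⁻¹ * F ^ rf (px K Q x) * x ∈ fixH K Ω := by
  have : IsGalois K Ω := IsGalois.tower_top_of_isGalois ℚ K Ω
  have := (tw Q x).2.1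
  obtain ⟨σ, hσ⟩ := exists_frob (F := K) (tw Q x).1 (tw Q x).2.2
  have hN : Ideal.absNorm ((tw Q x).1.comap (algebraMap (𝓞 K) (𝓞 Ω))) = rc Q ^ rf (px K Q x) := by
    rw [← rc_px (K := K) Q x]
    exact absNorm_eq (px K Q x)
  rw [hN] at hσ
  have h1 : x * (ofGal σ).1 * x⁻¹ = F ^ rf (px K Q x) := by
    refine frob_unique h.inert (n := rc Q ^ rf (px K Q x)) (fun y => ?_) (frob_pow h.frob _)
    have := hσ (x⁻¹ • y)
    rw [← ofGal_smul, mem_tw, smul_sub, smul_pow', smul_inv_smul] at this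
    rw [mul_smul, mul_smul]; exact this
  rw [← h1]
  have : x⁻¹ * (x * (ofGal σ).1 * x⁻¹) * x = (ofGal σ).1 := by group
  rw [this]
  exact (ofGal σ).2

lemma GoodFrob.conj_pow_mem_iff [IsGalois ℚ Ω] (h : GoodFrob Q F) (x : Ω ≃ₐ[ℚ] Ω) (i : ℕ) :
    x⁻¹ * F ^ i * x ∈ fixH K Ω ↔ rf (px K Q x) ∣ i := by
  constructor
  · intro hi
    apply dvd_of_frob_id
    intro y
    rw [rc_px, mem_px]
    have h1 := fixH_smul_int hi y
    have h2 := frob_pow h.frob i (x • algebraMap (𝓞 K) (𝓞 Ω) y)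
    have h3 : F ^ i • x • algebraMap (𝓞 K) (𝓞 Ω) y = x • algebraMap (𝓞 K) (𝓞 Ω) y := by
      rw [mul_smul, mul_smul, inv_smul_eq_iff] at h1
      exact h1
    rw [h3] at h2
    rw [map_sub, map_pow, smul_sub, smul_pow']
    have := Q.1.neg_mem h2
    rwa [neg_sub] at this
  · rintro ⟨q, rfl⟩
    have h1 := Subgroup.pow_mem _ (h.frobK (K := K) x) q
    have h2 : (x⁻¹ * F ^ rf (px K Q x) * x) ^ q = x⁻¹ * F ^ (rf (px K Q x) * q) * x := by
      have := conj_pow (i := q) (a := x⁻¹) (b := F ^ rf (px K Q x))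
      rw [inv_inv] at this
      rw [this, pow_mul]
    rwa [h2] at h1

lemma px_mul_fixH (x : Ω ≃ₐ[ℚ] Ω) {g : Ω ≃ₐ[ℚ] Ω} (hg : g ∈ fixH K Ω) :
    px K Q (x * g) = px K Q x := by
  apply Subtype.ext
  ext y
  rw [mem_px, mem_px, mul_smul, fixH_smul_int hg]

lemma GoodFrob.stab (h : GoodFrob Q F) (y : 𝓞 Ω) : F • y ∈ Q.1 ↔ y ∈ Q.1 := by
  have h1 := h.frob y
  have hP := Q.2.1
  constructor
  · intro h2
    have := Q.1.sub_mem h2 h1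
    rw [sub_sub_cancel] at this
    exact hP.mem_of_pow_mem _ this
  · intro h2
    have := Q.1.add_mem h1 (Q.1.pow_mem_of_mem h2 (rc Q) (rc_prime Q).pos)
    simpa using this

lemma GoodFrob.px_pow_mul (h : GoodFrob Q F) (x : Ω ≃ₐ[ℚ] Ω) (i : ℕ) :
    px K Q (F ^ i * x) = px K Q x := by
  induction i with
  | zero => simp
  | succ n ih =>
    rw [← ih]
    apply Subtype.ext
    ext y
    rw [mem_px, mem_px, pow_succ', mul_assoc, mul_smul F, h.stab]

lemma GoodFrob.exists_of_px_eq [IsGalois ℚ Ω] (h : GoodFrob Q F) {x x0 : Ω ≃ₐ[ℚ] Ω}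
    (hx : px K Q x = px K Q x0) :
    ∃ j : ℕ, ∃ g ∈ fixH K Ω, x = F ^ j * x0 * g := by
  have : IsGalois K Ω := IsGalois.tower_top_of_isGalois ℚ K Ω
  have := (tw Q x).2.1
  have := (tw Q x0).2.1
  obtain ⟨σ, hσ⟩ := exists_conj (F := K) (tw Q x).1 (tw Q x0).1 (congrArg Subtype.val hx)
  -- y ∈ Q^{x0} ↔ σ y ∈ Q^x
  obtain ⟨j, hj⟩ := stab_frob Q (x * (ofGal σ).1 * x0⁻¹) (fun y => by
    have := hσ (x0⁻¹ • y)
    rw [mem_tw, mem_tw, smul_inv_smul] at this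
    rw [this, mul_smul, mul_smul]; rfl)
  have h1 := frob_unique h.inert hj (frob_pow h.frob j)
  refine ⟨j, (ofGal σ).1⁻¹, Subgroup.inv_mem _ (ofGal σ).2, ?_⟩
  rw [← h1]; group

lemma px_surj [IsGalois ℚ Ω] (Q : NPrimes Ω) (P : NPrimes K) (hP : rc P = rc Q) : ∃ x, px K Q x = P := by
  have := P.2.1
  obtain ⟨R, hR1, hR2⟩ := Ideal.exists_ideal_over_prime_of_isIntegral_of_isDomain
    (S := 𝓞 Ω) P.1 (by
      rw [(RingHom.injective_iff_ker_eq_bot _).1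
        (FaithfulSMul.algebraMap_injective (𝓞 K) (𝓞 Ω))]
      exact bot_le)
  have hRne : R ≠ ⊥ := by
    rintro rfl
    apply P.2.2
    rw [← hR2]
    exact (RingHom.injective_iff_ker_eq_bot _).1 (FaithfulSMul.algebraMap_injective (𝓞 K) (𝓞 Ω))
  let R' : NPrimes Ω := ⟨R, hR1, hRne⟩
  have hRP : resP K R' = P := Subtype.ext hR2
  obtain ⟨σ, hσ⟩ := exists_conj_int Q R' (by rw [← hP, ← hRP, rc_resP])
  refine ⟨σ, ?_⟩
  rw [← hRP]
  apply Subtype.ext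
  ext y
  rw [mem_px, mem_resP, ← hσ]

end LocalPart2


section LocalPart3

open NumberField

variable {K Ω : Type} [Field K] [NumberField K] [Field Ω] [NumberField Ω] [Algebra K Ω]
variable {Q : NPrimes Ω} {F : Ω ≃ₐ[ℚ] Ω}

lemma GoodFrob.fib_card [IsGalois ℚ Ω] (h : GoodFrob Q F) (x0 : Ω ≃ₐ[ℚ] Ω) :
    Nat.card {x // px K Q x = px K Q x0} = rf (px K Q x0) * Nat.card (fixH K Ω) := by
  set f := rf (px K Q x0) with hf
  have hfpos : 1 ≤ f := rf_pos _
  let e : Fin f × fixH K Ω → {x // px K Q x = px K Q x0} := fun a =>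
    ⟨F ^ a.1.1 * x0 * a.2.1, by rw [px_mul_fixH _ a.2.2, h.px_pow_mul]⟩
  have he : Function.Bijective e := by
    constructor
    · have key : ∀ (i j : Fin f) (a b : fixH K Ω), i.1 ≤ j.1 →
          F ^ i.1 * x0 * a.1 = F ^ j.1 * x0 * b.1 → i = j := by
        intro i j a b hij hab
        have h1 : x0⁻¹ * F ^ (j.1 - i.1) * x0 = a.1 * b.1⁻¹ := by
          obtain ⟨d, hd⟩ := Nat.exists_eq_add_of_le hij
          rw [hd, Nat.add_sub_cancel_left]
          rw [hd, pow_add, mul_assoc, mul_assoc, mul_assoc, mul_left_cancel_iff] at hab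
          have h2 : a.1 = x0⁻¹ * (F ^ d * (x0 * b.1)) := by rw [← hab]; group
          rw [h2]; group
        have h2 : f ∣ j.1 - i.1 := by
          refine (h.conj_pow_mem_iff (K := K) x0 _).1 ?_
          rw [h1]
          exact (fixH K Ω).mul_mem a.2 ((fixH K Ω).inv_mem b.2)
        have h3 := Nat.eq_zero_of_dvd_of_lt h2 (by have := j.2; omega)
        exact Fin.ext (by omega)
      rintro ⟨i, a⟩ ⟨j, b⟩ hab
      have hab' : F ^ i.1 * x0 * a.1 = F ^ j.1 * x0 * b.1 := congrArg Subtype.val hab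
      have hij : i = j := by
        rcases le_total i.1 j.1 with hl | hl
        · exact key i j a b hl hab'
        · exact (key j i b a hl hab'.symm).symm
      subst hij
      rw [mul_left_cancel_iff] at hab'
      rw [Subtype.ext hab']
    · rintro ⟨x, hx⟩
      obtain ⟨j, g, hg, rfl⟩ := h.exists_of_px_eq hx
      have hm : x0⁻¹ * F ^ (f * (j / f)) * x0 ∈ fixH K Ω :=
        (h.conj_pow_mem_iff x0 _).2 (Dvd.intro _ rfl)
      refine ⟨(⟨j % f, Nat.mod_lt _ hfpos⟩, ⟨_, (fixH K Ω).mul_mem hm hg⟩), Subtype.ext ?_⟩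
      show F ^ (j % f) * x0 * (x0⁻¹ * F ^ (f * (j / f)) * x0 * g) = F ^ j * x0 * g
      conv_rhs => rw [← Nat.mod_add_div j f, pow_add]
      group
  rw [← Nat.card_eq_of_bijective e he, Nat.card_prod, Nat.card_fin]

open scoped Classical in
lemma GoodFrob.sum_px [IsGalois ℚ Ω] (h : GoodFrob Q F) (φ : NPrimes K → ℂ) :
    ∑ x : Ω ≃ₐ[ℚ] Ω, φ (px K Q x) =
      ∑ P ∈ (rc_fiber K (rc Q)).1.toFinset, (rf P : ℂ) * Nat.card (fixH K Ω) * φ P := by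
  rw [Finset.sum_comp φ (px K Q)]
  have him : Finset.univ.image (px K Q) = (rc_fiber K (rc Q)).1.toFinset := by
    ext P
    simp only [Finset.mem_image, Finset.mem_univ, true_and, Set.Finite.mem_toFinset,
      Set.mem_ofPred_eq]
    constructor
    · rintro ⟨x, rfl⟩; exact rc_px Q x
    · exact px_surj Q P
  rw [him]
  refine Finset.sum_congr rfl fun P hP => ?_
  obtain ⟨x0, rfl⟩ := px_surj Q P (by simpa using hP)
  have h1 := h.fib_card (K := K) x0
  rw [nsmul_eq_mul, ← Nat.cast_mul, ← h1]
  congr 2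
  rw [Nat.card_eq_fintype_card, Fintype.card_subtype]

open scoped Classical in
lemma logCoeff_prime_pow (c : NPrimes K → ℂ) (p k : ℕ) (hp : p.Prime) (hk : 1 ≤ k) :
    logCoeff (fun P : NPrimes K => Ideal.absNorm P.1) c (p ^ k) =
      ∑ P ∈ (rc_fiber K p).1.toFinset,
        if rf P ∣ k then c P ^ (k / rf P) / ((k / rf P : ℕ) : ℂ) else 0 := by
  have hmem : ∀ (P : NPrimes K) (m : ℕ), Ideal.absNorm P.1 ^ (m + 1) = p ^ k ↔
      rc P = p ∧ rf P * (m + 1) = k := by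
    intro P m
    rw [absNorm_eq, ← pow_mul]
    constructor
    · intro h
      have h1 : rc P = p := by
        have : rc P ∣ p ^ k := by
          rw [← h]
          exact dvd_pow_self _ (Nat.mul_ne_zero (by have := rf_pos P; omega) (by omega))
        exact (Nat.prime_dvd_prime_iff_eq (rc_prime P) hp).1 ((rc_prime P).dvd_of_dvd_pow this)
      refine ⟨h1, ?_⟩
      rw [h1] at h
      exact Nat.pow_right_injective hp.two_le h
    · rintro ⟨h1, h2⟩
      rw [h1, h2]
  unfold logCoeff
  rw [← Finset.sum_filter]
  set S := {P ∈ (rc_fiber K p).1.toFinset | rf P ∣ k} with hS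
  have hS' : ∀ P, P ∈ S ↔ rc P = p ∧ rf P ∣ k := by intro P; simp [hS]
  rw [← Finset.tsum_subtype S (fun P => c P ^ (k / rf P) / ((k / rf P : ℕ) : ℂ))]
  have hq : ∀ P : NPrimes K, rf P ∣ k → k / rf P - 1 + 1 = k / rf P := fun P hd =>
    Nat.sub_add_cancel (Nat.div_pos (Nat.le_of_dvd hk hd) (rf_pos P))
  let e : {P // P ∈ S} ≃ ((fun x : NPrimes K × ℕ => Ideal.absNorm x.1.1 ^ (x.2 + 1)) ⁻¹' {p ^ k}) :=
    { toFun := fun P => ⟨(P.1, k / rf P.1 - 1), by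
        have := (hS' _).1 P.2
        show _ = _
        rw [hmem, hq _ this.2]
        exact ⟨this.1, Nat.mul_div_cancel' this.2⟩⟩
      invFun := fun x => ⟨x.1.1, by
        have := (hmem x.1.1 x.1.2).1 x.2
        exact (hS' _).2 ⟨this.1, Dvd.intro _ this.2⟩⟩
      left_inv := fun P => rfl
      right_inv := fun x => by
        have := (hmem x.1.1 x.1.2).1 x.2
        apply Subtype.ext
        refine Prod.ext rfl ?_
        show k / rf x.1.1 - 1 = x.1.2
        have h5 : k / rf x.1.1 = x.1.2 + 1 := Nat.div_eq_of_eq_mul_right (rf_pos _) this.2.symm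
        rw [h5]; rfl }
  rw [← e.tsum_eq]
  refine tsum_congr fun P => ?_
  have := (hS' _).1 P.2
  show c P.1 ^ (k / rf P.1 - 1 + 1) / (((k / rf P.1 - 1 : ℕ) : ℂ) + 1) = _
  rw [← Nat.cast_succ, Nat.succ_eq_add_one, hq _ this.2]

lemma conj_pow' {G : Type*} [Group G] (x a : G) (n : ℕ) : (x⁻¹ * a * x) ^ n = x⁻¹ * a ^ n * x := by
  have := conj_pow (i := n) (a := x⁻¹) (b := a)
  rwa [inv_inv] at this

theorem GoodFrob.identity [IsGalois ℚ Ω] (h : GoodFrob Q F) (c : NPrimes K → ℂ)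
    (χ : fixH K Ω →* ℂˣ)
    (hc : ∀ x, c (px K Q x) = ext0 χ (x⁻¹ * F ^ rf (px K Q x) * x)) (k : ℕ) (hk : 1 ≤ k) :
    (k : ℂ) * Nat.card (fixH K Ω) *
      logCoeff (fun P : NPrimes K => Ideal.absNorm P.1) c (rc Q ^ k) = indT χ (F ^ k) := by
  classical
  rw [logCoeff_prime_pow c _ k (rc_prime Q) hk]
  have h1 : ∀ x, ext0 χ (x⁻¹ * F ^ k * x) =
      (fun P : NPrimes K => if rf P ∣ k then c P ^ (k / rf P) else 0) (px K Q x) := by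
    intro x
    by_cases hd : rf (px K Q x) ∣ k
    · simp only [hd, if_true]
      rw [hc, ← ext0_pow _ (h.frobK x), conj_pow', ← pow_mul, Nat.mul_div_cancel' hd]
    · simp only [hd, if_false]
      rw [ext0_of_not_mem]
      rwa [h.conj_pow_mem_iff]
  unfold indT
  rw [Finset.sum_congr rfl fun x _ => h1 x]
  rw [h.sum_px (fun P : NPrimes K => if rf P ∣ k then c P ^ (k / rf P) else 0), Finset.mul_sum]
  refine Finset.sum_congr rfl fun P _ => ?_
  split_ifs with hd
  · obtain ⟨q, rfl⟩ := hd
    have hq : q ≠ 0 := by rintro rfl; simp at hk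
    have hf := rf_pos P
    rw [Nat.mul_div_cancel_left _ hf]
    have : (q : ℂ) ≠ 0 := by exact_mod_cast hq
    push_cast
    field_simp
  · simp

lemma GoodFrob.normCount [IsGalois ℚ Ω] (h : GoodFrob Q F) :
    normCount K (rc Q) * Nat.card (fixH K Ω) =
      Nat.card {x : Ω ≃ₐ[ℚ] Ω // x⁻¹ * F * x ∈ fixH K Ω} := by
  classical
  have h1 := h.sum_px (K := K) (fun P => if rf P = 1 then 1 else 0)
  have h2 : ∀ x, rf (px K Q x) = 1 ↔ x⁻¹ * F * x ∈ fixH K Ω := by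
    intro x
    have := h.conj_pow_mem_iff (K := K) x 1
    rw [pow_one] at this
    rw [this, Nat.dvd_one]
  simp only [h2] at h1
  rw [Finset.sum_boole] at h1
  rw [Nat.card_eq_fintype_card (α := {x : Ω ≃ₐ[ℚ] Ω // x⁻¹ * F * x ∈ fixH K Ω}),
    Fintype.card_subtype]
  have h3 : _root_.normCount K (rc Q) = ({P ∈ (rc_fiber K (rc Q)).1.toFinset | rf P = 1}).card := by
    have hS : ∀ P : NPrimes K, P ∈ {P ∈ (rc_fiber K (rc Q)).1.toFinset | rf P = 1} ↔
        Ideal.absNorm P.1 = rc Q := by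
      intro P
      simp only [Finset.mem_filter, Set.Finite.mem_toFinset, Set.mem_ofPred_eq]
      constructor
      · rintro ⟨a, b⟩
        rw [absNorm_eq, a, b, pow_one]
      · intro a
        rw [absNorm_eq] at a
        have h5 : rc P = rc Q := by
          refine (Nat.prime_dvd_prime_iff_eq (rc_prime P) (rc_prime Q)).1 ?_
          rw [← a]
          exact dvd_pow_self _ (by have := rf_pos P; omega)
        refine ⟨h5, ?_⟩
        rw [h5] at a
        exact Nat.pow_right_injective (rc_prime Q).two_le (a.trans (pow_one _).symm)
    rw [_root_.normCount, ← Nat.card_eq_finsetCard]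
    exact Nat.card_congr (Equiv.subtypeEquivRight fun P => (hS P).symm)
  rw [h3]
  apply Nat.cast_injective (R := ℂ)
  · refine Eq.trans ?_ h1.symm
    rw [Nat.cast_mul, Finset.card_eq_sum_ones, Finset.sum_filter]
    push_cast
    rw [Finset.sum_mul]
    refine Finset.sum_congr rfl fun P _ => ?_
    split_ifs with hh
    · simp [hh]
    · simp

end LocalPart3


section LocalPart4

open NumberField

open scoped Classical in
/-- Frobenius value of the character -/
noncomputable def artC {K N : Type} [Field K] [NumberField K] [Field N]
    [NumberField N] [Algebra K N] (χ : (N ≃ₐ[K] N) →* ℂˣ) (p : NPrimes K) : ℂ :=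
  if h : ∃ σ : N ≃ₐ[K] N, ∃ Q : Ideal (𝓞 N), Q.IsPrime ∧ Q ≠ ⊥ ∧
      Q.comap (algebraMap (𝓞 K) (𝓞 N)) = p.1 ∧
      (∀ x : 𝓞 N, galRestrict (𝓞 K) K N (𝓞 N) σ x - x ^ Ideal.absNorm p.1 ∈ Q) ∧
      (∀ τ : N ≃ₐ[K] N, (∀ x : 𝓞 N, galRestrict (𝓞 K) K N (𝓞 N) τ x - x ∈ Q) → χ τ = 1)
  then (χ h.choose : ℂ) else 0

variable {K N : Type} [Field K] [NumberField K] [Field N] [NumberField N] [Algebra K N]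

lemma localArtinFactor_eq (χ : (N ≃ₐ[K] N) →* ℂˣ) (p : NPrimes K) (s : ℂ) :
    localArtinFactor K N χ p.1 s = (1 - artC χ p * (Ideal.absNorm p.1 : ℂ) ^ (-s))⁻¹ := by
  unfold localArtinFactor artC
  split_ifs with h
  · rfl
  · simp

lemma norm_artC_le [FiniteDimensional K N] (χ : (N ≃ₐ[K] N) →* ℂˣ) (p : NPrimes K) :
    ‖artC χ p‖ ≤ 1 := by
  unfold artC
  split_ifs with h
  · apply le_of_eq
    have h1 : (χ h.choose : ℂ) ^ orderOf h.choose = 1 := by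
      rw [← Units.val_pow_eq_pow_val, ← map_pow, pow_orderOf_eq_one]; simp
    exact Complex.norm_eq_one_of_pow_eq_one h1 (orderOf_pos _).ne'
  · simp

variable {Ω : Type} [Field Ω] [NumberField Ω] [Algebra K Ω] [Algebra N Ω] [IsScalarTower K N Ω]

/-- the character pulled back to the subgroup of Gal(Ω/ℚ) -/
noncomputable def chiK [Normal K N] (χ : (N ≃ₐ[K] N) →* ℂˣ) : fixH K Ω →* ℂˣ :=
  χ.comp ((AlgEquiv.restrictNormalHom N).comp toGal)

lemma algebraMap_restrict [Normal K N] (g : fixH K Ω) (y : N) :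
    algebraMap N Ω (AlgEquiv.restrictNormalHom N (toGal g) y) = g.1 (algebraMap N Ω y) :=
  AlgEquiv.restrictNormal_commutes (toGal g) N y

lemma algebraMap_restrict_int [Normal K N] (g : fixH K Ω) (y : 𝓞 N) :
    algebraMap (𝓞 N) (𝓞 Ω) (AlgEquiv.restrictNormalHom N (toGal g) • y) =
      g.1 • (algebraMap (𝓞 N) (𝓞 Ω) y) :=
  RingOfIntegers.ext (algebraMap_restrict g (y : N))

lemma resP_resP (Q : NPrimes Ω) : resP K (resP N Q) = resP K Q := by
  apply Subtype.ext
  ext y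
  rw [mem_resP, mem_resP, mem_resP]
  have : algebraMap (𝓞 N) (𝓞 Ω) (algebraMap (𝓞 K) (𝓞 N) y) = algebraMap (𝓞 K) (𝓞 Ω) y :=
    RingOfIntegers.ext (IsScalarTower.algebraMap_apply K N Ω (y : K)).symm
  rw [this]

variable {Q : NPrimes Ω} {F : Ω ≃ₐ[ℚ] Ω}

theorem GoodFrob.artC_px [IsGalois ℚ Ω] [IsGalois K N] (h : GoodFrob Q F)
    (hab : ∀ σ τ : N ≃ₐ[K] N, σ * τ = τ * σ)
    (hN : ∀ R : NPrimes N, rc R = rc Q → ∀ τ : N ≃ₐ[K] N, (∀ y : 𝓞 N, τ • y - y ∈ R.1) → τ = 1)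
    (χ : (N ≃ₐ[K] N) →* ℂˣ) (x : Ω ≃ₐ[ℚ] Ω) :
    artC χ (px K Q x) = ext0 (chiK (Ω := Ω) χ) (x⁻¹ * F ^ rf (px K Q x) * x) := by
  set f := rf (px K Q x) with hf
  have hm : x⁻¹ * F ^ f * x ∈ fixH K Ω := h.frobK x
  rw [ext0_of_mem _ hm]
  set σN : N ≃ₐ[K] N := AlgEquiv.restrictNormalHom N (toGal ⟨_, hm⟩) with hσN
  have hval : (chiK (Ω := Ω) χ ⟨_, hm⟩) = χ σN := rfl
  rw [hval]
  let R : NPrimes N := resP N (tw Q x)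
  have hRK : resP K R = px K Q x := resP_resP _
  have hrcR : rc R = rc Q := by rw [rc_resP, rc_tw]
  have habs : Ideal.absNorm (px K Q x).1 = rc Q ^ f := by rw [absNorm_eq, rc_px]
  have hfrob : ∀ y : 𝓞 N, σN • y - y ^ Ideal.absNorm (px K Q x).1 ∈ R.1 := by
    intro y
    rw [mem_resP, map_sub, map_pow, hσN, algebraMap_restrict_int, mem_tw, habs, smul_sub, smul_pow',
      mul_smul, mul_smul, smul_inv_smul]
    exact frob_pow h.frob _ _
  have hex : ∃ σ : N ≃ₐ[K] N, ∃ Q' : Ideal (𝓞 N), Q'.IsPrime ∧ Q' ≠ ⊥ ∧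
      Q'.comap (algebraMap (𝓞 K) (𝓞 N)) = (px K Q x).1 ∧
      (∀ x' : 𝓞 N, galRestrict (𝓞 K) K N (𝓞 N) σ x' - x' ^ Ideal.absNorm (px K Q x).1 ∈ Q') ∧
      (∀ τ : N ≃ₐ[K] N, (∀ x : 𝓞 N, galRestrict (𝓞 K) K N (𝓞 N) τ x - x ∈ Q') → χ τ = 1) := by
    refine ⟨σN, R.1, R.2.1, R.2.2, congrArg Subtype.val hRK, fun y => ?_, fun τ hτ => ?_⟩
    · rw [galRestrict_eq_smul]; exact hfrob y
    · rw [hN R hrcR τ fun y => by rw [← galRestrict_eq_smul]; exact hτ y, map_one]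
  rw [artC, dif_pos hex]
  obtain ⟨Q', hQ1, hQ2, hQ3, hQ4, -⟩ := hex.choose_spec
  have hR1 := R.2.1
  obtain ⟨ρ, hρ⟩ := exists_conj (F := K) R.1 Q' (by rw [hQ3]; exact congrArg Subtype.val hRK)
  have h1 : hex.choose = σN := by
    refine frob_unique (hN R hrcR) (n := Ideal.absNorm (px K Q x).1) (fun y => ?_) hfrob
    have h2 := hQ4 (ρ⁻¹ • y)
    rw [galRestrict_eq_smul, hρ, smul_sub, smul_pow', smul_inv_smul, ← mul_smul, ← mul_smul,
      hab ρ, mul_assoc, mul_inv_cancel, mul_one] at h2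
    exact h2
  rw [h1]

/-- good rational primes form a cofinite set -/
lemma exists_bad_finset (F E : Type) [Field F] [Field E] [NumberField E]
    [Algebra F E] [Finite (E ≃ₐ[F] E)] :
    ∃ B : Set ℕ, B.Finite ∧ ∀ Q : NPrimes E, rc Q ∉ B →
      ∀ τ : E ≃ₐ[F] E, (∀ y : 𝓞 E, τ • y - y ∈ Q.1) → τ = 1 := by
  refine ⟨rc '' _, (finite_bad (F := F) (E := E)).image _, fun Q hQ τ hτ => ?_⟩
  by_contra hne
  exact hQ ⟨Q, ⟨τ, hne, hτ⟩, rfl⟩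

end LocalPart4


section DensityPart

open NumberField Filter Topology

variable {Ω : Type} [Field Ω] [NumberField Ω]

lemma GoodFrob.tw {Q : NPrimes Ω} {F : Ω ≃ₐ[ℚ] Ω} (h : GoodFrob Q F) (x : Ω ≃ₐ[ℚ] Ω) :
    GoodFrob (tw Q x) (x⁻¹ * F * x) where
  frob y := by
    rw [mem_tw, rc_tw, smul_sub, smul_pow', mul_smul, mul_smul, smul_inv_smul]
    exact h.frob _
  inert τ hτ := by
    have h1 : x * τ * x⁻¹ = 1 := h.inert _ fun y => by
      have := hτ (x⁻¹ • y)
      rw [mem_tw, smul_sub, smul_inv_smul] at this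
      rw [mul_smul, mul_smul]; exact this
    have h2 : τ = x⁻¹ * (x * τ * x⁻¹) * x := by group
    rw [h2, h1]; group

lemma exists_prime_over (p : ℕ) (hp : p.Prime) : ∃ Q : NPrimes Ω, rc Q = p := by
  have h1 : ¬ IsUnit ((p : ℕ) : 𝓞 Ω) := by
    intro hu
    have h2 := Ideal.span_singleton_eq_top.2 hu
    have h3 := Ideal.absNorm_eq_one_iff.2 h2
    have h4 : Ideal.absNorm (Ideal.span {((p : ℕ) : 𝓞 Ω)}) = p ^ Module.finrank ℤ (𝓞 Ω) := by
      exact Ideal.absNorm_span_natCast p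
    rw [h4] at h3
    have h5 : Module.finrank ℤ (𝓞 Ω) ≠ 0 := by
      rw [RingOfIntegers.rank]; exact Module.finrank_pos.ne'
    rcases Nat.pow_eq_one.1 h3 with h | h
    · exact hp.one_lt.ne' h
    · exact h5 h
  obtain ⟨M, hM, hpM⟩ := exists_max_ideal_of_mem_nonunits (mem_nonunits_iff.2 h1)
  have hne : M ≠ ⊥ := by
    rintro rfl
    rw [Ideal.mem_bot, Nat.cast_eq_zero] at hpM
    exact hp.ne_zero hpM
  exact ⟨⟨M, hM.isPrime, hne⟩, rc_unique _ p hp hpM⟩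

instance numberField_fixedField (D : Subgroup (Ω ≃ₐ[ℚ] Ω)) :
    NumberField (IntermediateField.fixedField D) := NumberField.of_intermediateField _

lemma fixH_fixedField (D : Subgroup (Ω ≃ₐ[ℚ] Ω)) :
    fixH (IntermediateField.fixedField D) Ω = D := by
  conv_rhs => rw [← IntermediateField.fixingSubgroup_fixedField D]
  ext g
  rw [mem_fixH, IntermediateField.mem_fixingSubgroup_iff]
  exact ⟨fun h x hx => h ⟨x, hx⟩, fun h x => h x.1 x.2⟩

lemma subgroup_card_decomp {Γ : Type*} [Group Γ] [Finite Γ] (D : Subgroup Γ) [Fintype (Subgroup Γ)]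
    [DecidableLE (Subgroup Γ)] (y : Γ → Γ) :
    Nat.card {x // y x ∈ D} = ∑ D' : Subgroup Γ,
      if D' ≤ D then Nat.card {x // Subgroup.zpowers (y x) = D'} else 0 := by
  classical
  have := Fintype.ofFinite Γ
  simp only [Nat.card_eq_fintype_card, Fintype.card_subtype]
  rw [Finset.card_eq_sum_card_fiberwise (f := fun x => Subgroup.zpowers (y x))
    (t := Finset.univ) (by simp)]
  refine Finset.sum_congr rfl fun D' _ => ?_
  split_ifs with h
  · congr 1
    ext x
    simp only [Finset.mem_filter, Finset.mem_univ, true_and, and_iff_right_iff_imp]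
    rintro rfl
    exact h (Subgroup.mem_zpowers _)
  · rw [Finset.card_eq_zero, Finset.filter_eq_empty_iff]
    simp only [Finset.mem_filter, Finset.mem_univ, true_and]
    rintro x hx rfl
    exact h (Subgroup.zpowers_le.2 hx)

theorem frobenius_exists [IsGalois ℚ Ω] (B : Set ℕ) (hB : B.Finite) (g : Ω ≃ₐ[ℚ] Ω) :
    ∃ (Q : NPrimes Ω) (F : Ω ≃ₐ[ℚ] Ω), GoodFrob Q F ∧ rc Q ∉ B ∧ ∃ k, 1 ≤ k ∧ F ^ k = g := by
  classical
  obtain ⟨B1, hB1, hbad⟩ := exists_bad_finset ℚ Ω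
  set B' := B ∪ B1 with hB'
  have hB'f : B'.Finite := hB.union hB1
  have hex : ∀ p : ℕ, p.Prime ∧ p ∉ B' → ∃ (Q : NPrimes Ω) (F : Ω ≃ₐ[ℚ] Ω), GoodFrob Q F ∧ rc Q = p := by
    rintro p ⟨hp, hpB⟩
    obtain ⟨Q, hQ⟩ := exists_prime_over (Ω := Ω) p hp
    have := Q.2.1
    obtain ⟨F, hF⟩ := exists_frob_int Q.1 Q.2.2 (rc Q) (rc_prime Q) (rc_mem Q)
    exact ⟨Q, F, ⟨hF, hbad Q (fun h => hpB (by rw [← hQ]; exact Or.inr h))⟩, hQ⟩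
  choose! q σ hgood hrc using hex
  let a : Subgroup (Ω ≃ₐ[ℚ] Ω) → ℕ → ℕ := fun D n => Nat.card {x : Ω ≃ₐ[ℚ] Ω // x⁻¹ * σ n * x ∈ D}
  let e : Subgroup (Ω ≃ₐ[ℚ] Ω) → ℕ → ℕ := fun D n =>
    Nat.card {x : Ω ≃ₐ[ℚ] Ω // Subgroup.zpowers (x⁻¹ * σ n * x) = D}
  have hae : ∀ D n, a D n = ∑ D' : Subgroup (Ω ≃ₐ[ℚ] Ω), if D' ≤ D then e D' n else 0 := fun D n =>
    subgroup_card_decomp D (fun x => x⁻¹ * σ n * x)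
  have hale : ∀ D n, e D n ≤ a D n := by
    intro D n
    rw [hae]
    refine le_trans ?_ (Finset.single_le_sum (fun _ _ => Nat.zero_le _) (Finset.mem_univ D))
    rw [if_pos le_rfl]
  have haterm : ∀ D s n, (a D n : ℝ) * gterm B' s n =
      Nat.card D * (normCount (IntermediateField.fixedField D) n * gterm B' s n) := by
    intro D s n
    by_cases hn : n.Prime ∧ n ∉ B'
    · have h1 := (hgood n hn).normCount (K := IntermediateField.fixedField D)
      rw [fixH_fixedField, hrc n hn] at h1
      have : (a D n : ℝ) = normCount (IntermediateField.fixedField D) n * Nat.card D := by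
        exact_mod_cast h1.symm
      rw [this]; ring
    · simp [gterm, hn]
  have hasum : ∀ D s, 1 < s → Summable fun n => (a D n : ℝ) * gterm B' s n := by
    intro D s hs
    simp only [haterm]
    exact (gterm_hasSum (IntermediateField.fixedField D) B' s hs).summable.mul_left _
  have hesum : ∀ D s, 1 < s → Summable fun n => (e D n : ℝ) * gterm B' s n := by
    intro D s hs
    refine Summable.of_nonneg_of_le (fun n => mul_nonneg (Nat.cast_nonneg _) (gterm_nonneg _ _ _))
      (fun n => ?_) (hasum D s hs)
    exact mul_le_mul_of_nonneg_right (by exact_mod_cast hale D n) (gterm_nonneg _ _ _)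
  have halim : ∀ D, Tendsto (fun s => (∑' n, (a D n : ℝ) * gterm B' s n) / Real.log (1 / (s - 1)))
      (𝓝[>] 1) (𝓝 (Nat.card D)) := by
    intro D
    have h1 := (gterm_tendsto (IntermediateField.fixedField D) B' hB'f).const_mul (Nat.card D : ℝ)
    rw [mul_one] at h1
    refine h1.congr fun s => ?_
    simp only [haterm]
    rw [tsum_mul_left, mul_div_assoc]
  have hdec : ∀ D s, 1 < s → (∑' n, (a D n : ℝ) * gterm B' s n) =
      ∑ D' : Subgroup (Ω ≃ₐ[ℚ] Ω), if D' ≤ D then ∑' n, (e D' n : ℝ) * gterm B' s n else 0 := by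
    intro D s hs
    rw [← Finset.sum_filter, ← Summable.tsum_finsetSum (fun D' _ => hesum D' s hs)]
    refine tsum_congr fun n => ?_
    rw [hae, ← Finset.sum_mul, ← Finset.sum_filter]
    push_cast
    rfl
  have helim : ∀ D, Tendsto (fun s => (∑' n, (e D n : ℝ) * gterm B' s n) / Real.log (1 / (s - 1)))
      (𝓝[>] 1) (𝓝 (Nat.card {x : Ω ≃ₐ[ℚ] Ω // Subgroup.zpowers x = D})) := by
    intro D
    induction D using WellFoundedLT.induction with
    | ind D ih =>
    have h1 : Tendsto (fun s => (∑' n, (a D n : ℝ) * gterm B' s n) / Real.log (1 / (s - 1)) -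
        ∑ D' ∈ Finset.univ.filter (fun D' => D' < D),
          (∑' n, (e D' n : ℝ) * gterm B' s n) / Real.log (1 / (s - 1))) (𝓝[>] 1)
        (𝓝 (Nat.card D - ∑ D' ∈ Finset.univ.filter (fun D' => D' < D),
          (Nat.card {x : Ω ≃ₐ[ℚ] Ω // Subgroup.zpowers x = D'} : ℝ))) :=
      (halim D).sub (tendsto_finsetSum _ fun D' hD' => ih D' (Finset.mem_filter.1 hD').2)
    have hsplit : ∀ φ : Subgroup (Ω ≃ₐ[ℚ] Ω) → ℝ, (∑ D', if D' ≤ D then φ D' else 0) =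
        φ D + ∑ D' ∈ Finset.univ.filter (fun D' => D' < D), φ D' := by
      intro φ
      rw [← Finset.sum_filter, ← Finset.sum_insert (s := Finset.univ.filter (fun D' => D' < D))
        (a := D) (by simp)]
      refine Finset.sum_congr ?_ fun _ _ => rfl
      ext D'
      simp [le_iff_eq_or_lt]
    have h2 : (Nat.card D : ℝ) - ∑ D' ∈ Finset.univ.filter (fun D' => D' < D),
          (Nat.card {x : Ω ≃ₐ[ℚ] Ω // Subgroup.zpowers x = D'} : ℝ) =
        Nat.card {x : Ω ≃ₐ[ℚ] Ω // Subgroup.zpowers x = D} := by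
      have h3 := subgroup_card_decomp D (fun x => x)
      have h4 := hsplit (fun D' => (Nat.card {x : Ω ≃ₐ[ℚ] Ω // Subgroup.zpowers x = D'} : ℝ))
      have h5 : (Nat.card D : ℝ) = ∑ D' : Subgroup (Ω ≃ₐ[ℚ] Ω), if D' ≤ D then
          (Nat.card {x : Ω ≃ₐ[ℚ] Ω // Subgroup.zpowers x = D'} : ℝ) else 0 := by
        have : Nat.card D = Nat.card {x // x ∈ D} := rfl
        rw [this, h3]
        push_cast
        rfl
      rw [h5, h4]; ring
    rw [h2] at h1
    refine h1.congr' ?_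
    filter_upwards [self_mem_nhdsWithin] with s hs
    rw [hdec D s hs, hsplit (fun D' => ∑' n, (e D' n : ℝ) * gterm B' s n), add_div, Finset.sum_div]
    ring
  -- conclusion
  have hpos : (0 : ℝ) < Nat.card {x : Ω ≃ₐ[ℚ] Ω // Subgroup.zpowers x = Subgroup.zpowers g} := by
    have : Nonempty {x : Ω ≃ₐ[ℚ] Ω // Subgroup.zpowers x = Subgroup.zpowers g} := ⟨⟨g, rfl⟩⟩
    exact_mod_cast Nat.card_pos
  have hne : ∃ n, n.Prime ∧ n ∉ B' ∧ e (Subgroup.zpowers g) n ≠ 0 := by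
    by_contra! hc
    have hz : ∀ s n, (e (Subgroup.zpowers g) n : ℝ) * gterm B' s n = 0 := by
      intro s n
      by_cases hn : n.Prime ∧ n ∉ B'
      · rw [hc n hn.1 hn.2]; simp
      · simp [gterm, hn]
    have h1 := helim (Subgroup.zpowers g)
    simp only [hz, tsum_zero, zero_div] at h1
    exact hpos.ne (tendsto_nhds_unique tendsto_const_nhds h1)
  obtain ⟨n, hn, hnB, hen⟩ := hne
  obtain ⟨⟨x, hx⟩⟩ : Nonempty {x : Ω ≃ₐ[ℚ] Ω // Subgroup.zpowers (x⁻¹ * σ n * x) = Subgroup.zpowers g} := by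
    by_contra hc
    rw [not_nonempty_iff] at hc
    exact hen Nat.card_of_isEmpty
  refine ⟨tw (q n ⟨hn, hnB⟩) x, x⁻¹ * σ n * x, (hgood n ⟨hn, hnB⟩).tw x, ?_, ?_⟩
  · rw [rc_tw, hrc n ⟨hn, hnB⟩]
    exact fun h => hnB (Or.inl h)
  · have hg : g ∈ Subgroup.zpowers (x⁻¹ * σ n * x) := by rw [hx]; exact Subgroup.mem_zpowers g
    rw [← mem_powers_iff_mem_zpowers] at hg
    obtain ⟨k, hk⟩ := hg
    have hk : (x⁻¹ * σ n * x) ^ k = g := hk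
    refine ⟨k + orderOf (x⁻¹ * σ n * x), ?_, ?_⟩
    · have := orderOf_pos (x⁻¹ * σ n * x); omega
    · rw [pow_add, pow_orderOf_eq_one, mul_one, hk]

end DensityPart


section CombinePart

open NumberField

lemma equiv_of_range_eq {A A' Ω : Type} [Field A] [Field A'] [Field Ω] (f : A →+* Ω) (f' : A' →+* Ω)
    (h : f.fieldRange = f'.fieldRange) : Nonempty (A ≃+* A') := by
  let e1 : A ≃+* f.fieldRange := RingEquiv.ofBijective f.rangeRestrictField f.rangeRestrictField_bijective
  let e2 : A' ≃+* f'.fieldRange :=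
    RingEquiv.ofBijective f'.rangeRestrictField f'.rangeRestrictField_bijective
  let e3 : f.fieldRange ≃+* f'.fieldRange := RingEquiv.subfieldCongr h
  exact ⟨(e1.trans e3).trans e2.symm⟩

variable {K K' Ω : Type} [Field K] [NumberField K] [Field K'] [NumberField K']
  [Field Ω] [NumberField Ω] [Algebra K Ω] [Algebra K' Ω]

lemma mem_range_iff_fixed [IsGalois ℚ Ω] (w : Ω) :
    w ∈ (algebraMap K Ω).fieldRange ↔ ∀ g ∈ fixH K Ω, g w = w := by
  have : IsGalois K Ω := IsGalois.tower_top_of_isGalois ℚ K Ω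
  constructor
  · rintro ⟨k, rfl⟩ g hg
    exact hg k
  · intro h
    obtain ⟨k, hk⟩ := (IsGalois.mem_range_algebraMap_iff_fixed (F := K) w).2
      (fun σ => h _ (ofGal σ).2)
    exact ⟨k, hk⟩

lemma field_iso_of_conj [IsGalois ℚ Ω] (z : Ω ≃ₐ[ℚ] Ω)
    (hz : ∀ g, g ∈ fixH K Ω ↔ z⁻¹ * g * z ∈ fixH K' Ω) : Nonempty (K ≃+* K') := by
  refine equiv_of_range_eq (algebraMap K Ω) ((z : Ω →+* Ω).comp (algebraMap K' Ω)) ?_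
  have hzi : ∀ w, z (z⁻¹ w) = w := fun w => z.apply_symm_apply w
  have hzi' : ∀ w, z⁻¹ (z w) = w := fun w => z.symm_apply_apply w
  ext w
  have h1 : w ∈ ((z : Ω →+* Ω).comp (algebraMap K' Ω)).fieldRange ↔
      z⁻¹ w ∈ (algebraMap K' Ω).fieldRange := by
    constructor
    · rintro ⟨k, rfl⟩
      refine ⟨k, ?_⟩
      exact (hzi' _).symm
    · rintro ⟨k, hk⟩
      refine ⟨k, ?_⟩
      show z (algebraMap K' Ω k) = w
      rw [hk, hzi]
  rw [h1, mem_range_iff_fixed, mem_range_iff_fixed]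
  constructor
  · intro h g hg
    have h2 := h (z * g * z⁻¹) ((hz _).2 (by convert hg using 1; group))
    have h3 : z (g (z⁻¹ w)) = w := h2
    conv_rhs => rw [← h3]
    exact (hzi' _).symm
  · intro h g hg
    have h2 := h _ ((hz g).1 hg)
    have h3 : z⁻¹ (g (z (z⁻¹ w))) = z⁻¹ w := h2
    rw [hzi] at h3
    exact z⁻¹.injective h3

variable {N N' : Type} [Field N] [NumberField N] [Algebra K N] [Field N'] [NumberField N']
  [Algebra K' N'] [Algebra N Ω] [IsScalarTower K N Ω] [Algebra N' Ω] [IsScalarTower K' N' Ω]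

theorem hT_of_L [IsGalois ℚ Ω] [IsGalois K N] [IsGalois K' N']
    (hab : ∀ σ τ : N ≃ₐ[K] N, σ * τ = τ * σ) (hab' : ∀ σ τ : N' ≃ₐ[K'] N', σ * τ = τ * σ)
    (χ : (N ≃ₐ[K] N) →* ℂˣ) (χ' : (N' ≃ₐ[K'] N') →* ℂˣ)
    (hL : ∀ s : ℂ, 1 < s.re → artinLFunction K N χ s = artinLFunction K' N' χ' s)
    (g : Ω ≃ₐ[ℚ] Ω) :
    (Nat.card (fixH K' Ω) : ℂ) * indT (chiK (Ω := Ω) χ) g =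
      (Nat.card (fixH K Ω) : ℂ) * indT (chiK (Ω := Ω) χ') g := by
  obtain ⟨B1, hB1, hb1⟩ := exists_bad_finset K N
  obtain ⟨B2, hB2, hb2⟩ := exists_bad_finset K' N'
  obtain ⟨Q, F, hgood, hQ, k, hk, rfl⟩ := frobenius_exists (B1 ∪ B2) (hB1.union hB2) g
  have e1 := hgood.identity (K := K) (artC χ) (chiK (Ω := Ω) χ)
    (fun x => hgood.artC_px hab (fun R hR => hb1 R (fun h => hQ (Or.inl (hR ▸ h)))) χ x) k hk
  have e2 := hgood.identity (K := K') (artC χ') (chiK (Ω := Ω) χ')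
    (fun x => hgood.artC_px hab' (fun R hR => hb2 R (fun h => hQ (Or.inr (hR ▸ h)))) χ' x) k hk
  have e3 := logCoeff_eq (fun P : NPrimes K => Ideal.absNorm P.1) (artC χ)
    (fun P : NPrimes K' => Ideal.absNorm P.1) (artC χ')
    (fun P => two_le_absNorm K P) (norm_artC_le χ) (fun s hs => primes_summable K s hs)
    (fun P => two_le_absNorm K' P) (norm_artC_le χ') (fun s hs => primes_summable K' s hs)
    (fun s hs => by
      have := hL s (by simpa using hs)
      unfold artinLFunction at this
      simp only [← localArtinFactor_eq]
      exact this) (rc Q ^ k) (pow_ne_zero _ (rc_prime Q).ne_zero)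
  rw [← e1, ← e2, e3]
  ring

theorem iso_of_L [IsGalois ℚ Ω] [IsGalois K N] [IsGalois K' N']
    (hab : ∀ σ τ : N ≃ₐ[K] N, σ * τ = τ * σ) (hab' : ∀ σ τ : N' ≃ₐ[K'] N', σ * τ = τ * σ)
    (χ : (N ≃ₐ[K] N) →* ℂˣ) (χ' : (N' ≃ₐ[K'] N') →* ℂˣ)
    (hL : ∀ s : ℂ, 1 < s.re → artinLFunction K N χ s = artinLFunction K' N' χ' s)
    (γ : Ω ≃ₐ[ℚ] Ω) (hγ : ∀ x, x⁻¹ * γ * x ∈ fixH K Ω)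
    (hγ1 : ∀ x ∉ fixH K Ω, ext0 (chiK (Ω := Ω) χ) (x⁻¹ * γ * x) = 1)
    (hζ1 : ext0 (chiK (Ω := Ω) χ) γ ≠ 1) (hζ3 : ext0 (chiK (Ω := Ω) χ) γ ^ 3 = 1) :
    Nonempty (K ≃+* K') := by
  obtain ⟨z, hz⟩ := conj_of_indT (chiK (Ω := Ω) χ) (chiK (Ω := Ω) χ')
    (hT_of_L hab hab' χ χ' hL) γ hγ hγ1 hζ1 hζ3
  exact field_iso_of_conj z hz

end CombinePart


section CubicPart

open Polynomial

/-- the simplest cubic polynomial -/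
noncomputable def cubicP {R : Type*} [CommRing R] (t : R) : R[X] :=
  X ^ 3 - C t * X ^ 2 + C (t - 3) * X + 1

lemma cubicP_eval {R : Type*} [CommRing R] (t r : R) :
    (cubicP t).eval r = r ^ 3 - t * r ^ 2 + (t - 3) * r + 1 := by
  simp [cubicP]

lemma cubicP_map {R S : Type*} [CommRing R] [CommRing S] (f : R →+* S) (t : R) :
    (cubicP t).map f = cubicP (f t) := by
  have h3 : f 3 = 3 := map_ofNat f 3
  simp [cubicP, h3]

lemma cubicP_derivative_eval {R : Type*} [CommRing R] (t r : R) :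
    (cubicP t).derivative.eval r = 3 * r ^ 2 - 2 * t * r + (t - 3) := by
  simp [cubicP]; ring

lemma cubicP_natDegree {R : Type*} [CommRing R] [Nontrivial R] (t : R) :
    (cubicP t).natDegree = 3 := by
  unfold cubicP; compute_degree!

lemma cubicP_monic {R : Type*} [CommRing R] [Nontrivial R] (t : R) : (cubicP t).Monic := by
  unfold cubicP; monicity!

lemma cubicP_factor {F : Type*} [Field F] (t α : F) (h : (cubicP t).eval α = 0) :
    α ≠ 0 ∧ 1 - α ≠ 0 ∧
    cubicP t = (X - C α) * (X - C ((1 - α)⁻¹)) * (X - C (1 - α⁻¹)) := by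
  rw [cubicP_eval] at h
  have h0 : α ≠ 0 := by rintro rfl; simp at h
  have h1 : 1 - α ≠ 0 := by
    intro h1
    have : α = 1 := by linear_combination -h1
    subst this
    have : (-1 : F) = 0 := by linear_combination h
    exact one_ne_zero (neg_eq_zero.1 this)
  refine ⟨h0, h1, ?_⟩
  have hs : t = α + (1 - α)⁻¹ + (1 - α⁻¹) := by
    field_simp
    linear_combination h
  have hs2 : t - 3 = α * (1 - α)⁻¹ + α * (1 - α⁻¹) + (1 - α)⁻¹ * (1 - α⁻¹) := by
    rw [hs]
    field_simp
    ring
  have hs3 : -1 = α * (1 - α)⁻¹ * (1 - α⁻¹) := by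
    field_simp
    ring
  unfold cubicP
  rw [hs2]
  nth_rw 1 [hs]
  have hC : (1 : F[X]) = - (C α * C ((1 - α)⁻¹) * C (1 - α⁻¹)) := by
    rw [← C_mul, ← C_mul, ← hs3]; simp
  rw [hC]
  simp only [C_add, C_mul]
  ring

lemma cubicP_irreducible {F : Type*} [Field F] (t : F) (h : ∀ r, (cubicP t).eval r ≠ 0) :
    Irreducible (cubicP t) := by
  rw [Polynomial.irreducible_iff_roots_eq_zero_of_degree_le_three]
  · rw [Multiset.eq_zero_iff_forall_notMem]
    intro r hr
    exact h r (mem_roots'.1 hr).2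
  · rw [cubicP_natDegree]; norm_num
  · rw [cubicP_natDegree]

theorem cubic_extension {K : Type} [Field K] [NumberField K] (t : K)
    (h : ∀ r, (cubicP t).eval r ≠ 0) :
    ∃ (N : Type) (_ : Field N) (_ : NumberField N) (_ : Algebra K N) (_ : FiniteDimensional K N)
      (_ : IsGalois K N) (α : N), Module.finrank K N = 3 ∧
      (cubicP (algebraMap K N t)).eval α = 0 ∧
      (∀ σ : N ≃ₐ[K] N, σ α = α → σ = 1) ∧
      (∀ σ τ : N ≃ₐ[K] N, σ * τ = τ * σ) ∧
      ∃ χ : (N ≃ₐ[K] N) →* ℂˣ, (∀ σ, χ σ = 1 → σ = 1) ∧ ∀ σ, χ σ ^ 3 = 1 := by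
  have hirr := cubicP_irreducible t h
  have : Fact (Irreducible (cubicP t)) := ⟨hirr⟩
  let N := AdjoinRoot (cubicP t)
  let pb := AdjoinRoot.powerBasis hirr.ne_zero
  have hfd : FiniteDimensional K N := pb.finite
  have hfr : Module.finrank K N = 3 := by
    rw [pb.finrank, AdjoinRoot.powerBasis_dim, cubicP_natDegree]
  have hcz : CharZero N := charZero_of_injective_algebraMap (algebraMap K N).injective
  have hfdQ : FiniteDimensional ℚ N := Module.Finite.trans K N
  have hnf : NumberField N := { to_charZero := hcz, to_finiteDimensional := hfdQ }
  let α : N := AdjoinRoot.root (cubicP t)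
  have hroot : (cubicP (algebraMap K N t)).eval α = 0 := by
    rw [← cubicP_map, eval_map]
    exact AdjoinRoot.eval₂_root _
  have hfix : ∀ σ : N ≃ₐ[K] N, σ α = α → σ = 1 := by
    intro σ hσ
    have : (σ : N →ₐ[K] N) = AlgHom.id K N := AdjoinRoot.algHom_ext hσ
    ext y
    exact congrArg (fun f : N →ₐ[K] N => f y) this
  have hspl : ((cubicP t).map (algebraMap K N)).Splits := by
    rw [cubicP_map, (cubicP_factor _ _ hroot).2.2]
    exact ((Splits.X_sub_C _).mul (Splits.X_sub_C _)).mul (Splits.X_sub_C _)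
  have hsf : IsSplittingField K N (cubicP t) := by
    refine ⟨hspl, ?_⟩
    rw [eq_top_iff, ← AdjoinRoot.adjoinRoot_eq_top (f := cubicP t)]
    apply Algebra.adjoin_mono
    rw [Set.singleton_subset_iff, mem_rootSet']
    refine ⟨?_, ?_⟩
    · rw [cubicP_map]; exact (cubicP_monic _).ne_zero
    · exact AdjoinRoot.eval₂_root _
  have hnorm : Normal K N := Normal.of_isSplittingField (cubicP t)
  have hgal : IsGalois K N := { }
  have hcard : Nat.card (N ≃ₐ[K] N) = 3 := by rw [IsGalois.card_aut_eq_finrank, hfr]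
  have hp3 : Fact (Nat.Prime 3) := ⟨Nat.prime_three⟩
  have hcyc : IsCyclic (N ≃ₐ[K] N) := isCyclic_of_prime_card hcard
  have hab : ∀ σ τ : N ≃ₐ[K] N, σ * τ = τ * σ := fun σ τ =>
    (IsCyclic.commGroup (α := N ≃ₐ[K] N)).mul_comm σ τ
  let _ : CommGroup (N ≃ₐ[K] N) := { (inferInstance : Group (N ≃ₐ[K] N)) with mul_comm := hab }
  have hnt : Nontrivial (N ≃ₐ[K] N) := Finite.one_lt_card_iff_nontrivial.1 (by rw [hcard]; norm_num)
  obtain ⟨σ0, hσ0⟩ := exists_ne (1 : N ≃ₐ[K] N)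
  obtain ⟨χ, hχ⟩ := CommGroup.exists_apply_ne_one_of_hasEnoughRootsOfUnity (N ≃ₐ[K] N) ℂ hσ0
  refine ⟨N, inferInstance, hnf, inferInstance, hfd, hgal, α, hfr, hroot, hfix, hab, χ, ?_, ?_⟩
  · have hk : χ.ker = ⊥ := by
      have hpc : Fact (Nat.card (N ≃ₐ[K] N)).Prime := ⟨by rw [hcard]; exact Nat.prime_three⟩
      refine (Subgroup.eq_bot_or_eq_top_of_prime_card χ.ker).resolve_right fun htop => hχ ?_
      have : σ0 ∈ χ.ker := by rw [htop]; trivial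
      exact this
    intro σ hσ
    have : σ ∈ χ.ker := hσ
    rw [hk] at this
    exact this
  · intro σ
    rw [← map_pow, ← hcard, pow_card_eq_one', map_one]

end CubicPart


section SetupPart

open NumberField Polynomial Filter Topology

theorem exists_compositum (N N' : Type) [Field N] [NumberField N] [Field N'] [NumberField N'] :
    ∃ (Ω : Type) (_ : Field Ω) (_ : NumberField Ω) (_ : Algebra N Ω) (_ : Algebra N' Ω),
      IsGalois ℚ Ω := by
  let A := AlgebraicClosure ℚ
  let i : N →ₐ[ℚ] A := IsAlgClosed.lift
  let j : N' →ₐ[ℚ] A := IsAlgClosed.lift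
  have : FiniteDimensional ℚ i.fieldRange := i.toLinearMap.finiteDimensional_range
  have : FiniteDimensional ℚ j.fieldRange := j.toLinearMap.finiteDimensional_range
  let M : IntermediateField ℚ A := i.fieldRange ⊔ j.fieldRange
  have hM : FiniteDimensional ℚ M := IntermediateField.finiteDimensional_sup _ _
  let Ω : IntermediateField ℚ A := IntermediateField.normalClosure ℚ M A
  have hle : M ≤ Ω := by
    have := M.val.fieldRange_le_normalClosure
    rwa [IntermediateField.fieldRange_val] at this
  have hfd : FiniteDimensional ℚ Ω := normalClosure.is_finiteDimensional ℚ M A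
  have hnA : Normal ℚ A := by
    have h := @IsAlgClosure.normal ℚ (AlgebraicClosure ℚ) _ _
      (AlgebraicClosure.instAlgebra ℚ) inferInstance
    convert h
    exact Subsingleton.elim _ _
  have hn : Normal ℚ Ω := normalClosure.normal ℚ M A
  have hg : IsGalois ℚ Ω := { }
  have hnf : NumberField Ω := { to_charZero := inferInstance, to_finiteDimensional := hfd }
  let i' : N →ₐ[ℚ] Ω := i.codRestrict Ω.toSubalgebra fun x => hle (le_sup_left (a := i.fieldRange) ⟨x, rfl⟩)
  let j' : N' →ₐ[ℚ] Ω := j.codRestrict Ω.toSubalgebra fun x => hle (le_sup_right (b := j.fieldRange) ⟨x, rfl⟩)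
  exact ⟨Ω, inferInstance, hnf, i'.toRingHom.toAlgebra, j'.toRingHom.toAlgebra, hg⟩

lemma intCast_mem_NPrimes {E : Type} [Field E] [NumberField E] (Q : NPrimes E) (n : ℤ) :
    (n : 𝓞 E) ∈ Q.1 ↔ (rc Q : ℤ) ∣ n := by
  rw [Int.cast_mem_ideal_iff]; rfl

lemma int_of_frob {E : Type} [Field E] [NumberField E] (Q : NPrimes E) (z : 𝓞 E)
    (hz : z ^ rc Q - z ∈ Q.1) : ∃ a : ℤ, z - a ∈ Q.1 := by
  have hQ := Q.2.1
  have hp : Fact (rc Q).Prime := ⟨rc_prime Q⟩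
  have hch : CharP (𝓞 E ⧸ Q.1) (rc Q) := by
    refine (CharP.charP_iff_prime_eq_zero (rc_prime Q)).2 ?_
    rw [← map_natCast (Ideal.Quotient.mk Q.1)]
    exact Ideal.Quotient.eq_zero_iff_mem.2 (rc_mem Q)
  let _ := ZMod.algebra (𝓞 E ⧸ Q.1) (rc Q)
  have h1 : (∏ a : ZMod (rc Q), (X - C a)) = (X ^ rc Q - X : (ZMod (rc Q))[X]) := by
    have h2 := FiniteField.roots_X_pow_card_sub_X (ZMod (rc Q))
    rw [ZMod.card] at h2
    have hdeg := FiniteField.X_pow_card_sub_X_natDegree_eq (ZMod (rc Q)) (rc_prime Q).one_lt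
    have h3 := prod_multiset_X_sub_C_of_monic_of_roots_card_eq (p := (X ^ rc Q - X : (ZMod (rc Q))[X]))
      (monic_X_pow_sub (by rw [degree_X]; exact_mod_cast (rc_prime Q).one_lt)) (by
        rw [h2, hdeg]; simp)
    rw [h2] at h3
    exact h3
  have h4 := congrArg (aeval (Ideal.Quotient.mk Q.1 z)) h1
  rw [map_prod] at h4
  simp only [map_sub, aeval_X, aeval_C, map_pow] at h4
  have h5 : (Ideal.Quotient.mk Q.1 z) ^ rc Q - Ideal.Quotient.mk Q.1 z = 0 := by
    rw [← map_pow, ← map_sub]; exact Ideal.Quotient.eq_zero_iff_mem.2 hz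
  rw [h5, Finset.prod_eq_zero_iff] at h4
  obtain ⟨a, -, ha⟩ := h4
  refine ⟨a.cast, ?_⟩
  rw [← Ideal.Quotient.eq_zero_iff_mem, map_sub, map_intCast, ← ha]
  congr 1
  conv_rhs => rw [← ZMod.intCast_zmod_cast a]
  rw [map_intCast]

lemma exists_split_prime (K : Type) [Field K] [NumberField K] (B : Set ℕ) (hB : B.Finite) :
    ∃ p : ℕ, p.Prime ∧ p ∉ B ∧ ∀ P : NPrimes K, rc P = p → ∀ y : 𝓞 K, ∃ a : ℤ, y - a ∈ P.1 := by
  obtain ⟨Ω, _, _, _, _, hG⟩ := exists_compositum K K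
  have h1 := gterm_tendsto Ω B hB
  have h2 : ∃ n, (normCount Ω n : ℝ) ≠ 0 ∧ n.Prime ∧ n ∉ B := by
    by_contra hcon
    push Not at hcon
    have h3 : ∀ s n, (normCount Ω n : ℝ) * gterm B s n = 0 := by
      intro s n
      by_cases h : (normCount Ω n : ℝ) = 0
      · rw [h, zero_mul]
      · unfold gterm
        rw [if_neg (fun hh => hh.2 (hcon n h hh.1)), mul_zero]
    simp only [h3, tsum_zero, zero_div] at h1
    exact zero_ne_one (tendsto_nhds_unique tendsto_const_nhds h1)
  obtain ⟨n, hn, hnp, hnB⟩ := h2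
  refine ⟨n, hnp, hnB, ?_⟩
  intro P hP
  have hne : Nonempty {p : NPrimes Ω // Ideal.absNorm p.1 = n} := by
    by_contra hcon
    rw [not_nonempty_iff] at hcon
    apply hn
    unfold normCount
    simp
  obtain ⟨Q, hQ⟩ := hne
  have hrf := absNorm_eq Q
  rw [hQ] at hrf
  have hrc : rc Q = n := by
    have : rc Q ∣ n := by rw [hrf]; exact dvd_pow_self _ (by have := rf_pos Q; omega)
    exact (Nat.prime_dvd_prime_iff_eq (rc_prime Q) hnp).1 this
  have hfr : ∀ y : 𝓞 Ω, y ^ n - y ∈ Q.1 := by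
    intro y
    have := finite_quot_prime Q.1 Q.2.2
    have hQp := Q.2.1
    have : Q.1.IsMaximal := hQp.isMaximal Q.2.2
    let _ := Ideal.Quotient.field Q.1
    have := Fintype.ofFinite (𝓞 Ω ⧸ Q.1)
    have hc : Fintype.card (𝓞 Ω ⧸ Q.1) = n := by
      rw [← Nat.card_eq_fintype_card, ← hQ]; rfl
    have h6 := FiniteField.pow_card (Ideal.Quotient.mk Q.1 y)
    rw [hc] at h6
    rw [← Ideal.Quotient.eq_zero_iff_mem, map_sub, map_pow, h6, sub_self]
  obtain ⟨x, rfl⟩ := px_surj Q P (hP.trans hrc.symm)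
  intro y
  apply int_of_frob
  rw [mem_px, hP, map_sub, map_pow, smul_sub, smul_pow']
  exact hfr _

lemma exists_theta (K : Type) [Field K] [NumberField K] :
    ∃ (θ : 𝓞 K) (f : ℤ[X]), IntermediateField.adjoin ℚ {(θ : K)} = ⊤ ∧ aeval θ f = 0 ∧
      aeval θ f.derivative ≠ 0 := by
  obtain ⟨α, hα⟩ := Field.exists_primitive_element ℚ K
  have halg : IsAlgebraic ℤ α := (IsFractionRing.isAlgebraic_iff ℤ ℚ K).2 (Algebra.IsAlgebraic.isAlgebraic α)
  obtain ⟨n, hn, hint⟩ := halg.exists_integral_multiple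
  let θ : 𝓞 K := ⟨n • α, hint⟩
  have hθ : (θ : K) = n * α := by
    show n • α = n * α
    rw [zsmul_eq_mul]
  have hn' : (n : K) ≠ 0 := by exact_mod_cast hn
  refine ⟨θ, minpoly ℤ (θ : K), ?_, ?_, ?_⟩
  · rw [eq_top_iff, ← hα, IntermediateField.adjoin_simple_le_iff]
    have h1 := IntermediateField.mem_adjoin_simple_self ℚ (θ : K)
    have h2 : α = ((n : ℚ)⁻¹ : ℚ) • (θ : K) := by
      rw [hθ, Algebra.smul_def]
      simp
      field_simp
    rw [h2]
    exact IntermediateField.smul_mem _ h1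
  · apply RingOfIntegers.ext
    show algebraMap (𝓞 K) K _ = algebraMap (𝓞 K) K 0
    rw [map_zero, ← aeval_algebraMap_apply]
    exact minpoly.aeval ℤ (θ : K)
  · intro h0
    have h1 : aeval (θ : K) (minpoly ℤ (θ : K)).derivative = 0 := by
      have := congrArg (algebraMap (𝓞 K) K) h0
      rw [← aeval_algebraMap_apply, map_zero] at this
      exact this
    have hmin : minpoly ℚ (θ : K) = (minpoly ℤ (θ : K)).map (algebraMap ℤ ℚ) :=
      minpoly.isIntegrallyClosed_eq_field_fractions' ℚ hint
    have hsep : (minpoly ℚ (θ : K)).Separable := (minpoly.irreducible (Algebra.IsIntegral.isIntegral _)).separable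
    have h2 := hsep.aeval_derivative_ne_zero (minpoly.aeval ℚ (θ : K))
    rw [hmin, derivative_map, aeval_map_algebraMap] at h2
    exact h2 h1

lemma exists_no_root (p : ℕ) [hp : Fact p.Prime] : ∃ c : ZMod p, ∀ r : ZMod p, (cubicP c).eval r ≠ 0 := by
  by_contra hcon
  push Not at hcon
  choose r hr using hcon
  have hinj : Function.Injective r := by
    intro c d hcd
    have h1 := hr c
    have h2 := hr d
    rw [← hcd] at h2
    obtain ⟨h3, h4, -⟩ := cubicP_factor _ _ h1
    rw [cubicP_eval] at h1 h2
    have h5 : (c - d) * (r c * (1 - r c)) = 0 := by linear_combination h1 - h2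
    rcases mul_eq_zero.1 h5 with h | h
    · exact sub_eq_zero.1 h
    · exact absurd h (mul_ne_zero h3 h4)
  obtain ⟨c, hc⟩ := (Finite.injective_iff_surjective.1 hinj) 0
  exact (cubicP_factor _ _ (hr c)).1 hc

lemma finite_rc_mem {K : Type} [Field K] [NumberField K] (d : 𝓞 K) (hd : d ≠ 0) :
    {n : ℕ | ∃ P : NPrimes K, rc P = n ∧ d ∈ P.1}.Finite := by
  have hN : (Ideal.absNorm (Ideal.span {d})) ≠ 0 := by
    rw [Ne, Ideal.absNorm_eq_zero_iff, Ideal.span_singleton_eq_bot]; exact hd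
  refine (Nat.divisors (Ideal.absNorm (Ideal.span {d}))).finite_toSet.subset ?_
  rintro n ⟨P, rfl, hP⟩
  rw [Finset.mem_coe, Nat.mem_divisors]
  refine ⟨?_, hN⟩
  have h1 : Ideal.absNorm P.1 ∣ Ideal.absNorm (Ideal.span {d}) :=
    Ideal.absNorm_dvd_absNorm_of_le ((Ideal.span_singleton_le_iff_mem _).2 hP)
  rw [absNorm_eq] at h1
  exact (dvd_pow_self _ (by have := rf_pos P; omega)).trans h1

/-- all the local data used to build the cubic extension -/
structure CubicSetup (K : Type) [Field K] [NumberField K] where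
  p : ℕ
  hp : p.Prime
  hp3 : 3 < p
  hint : ∀ P : NPrimes K, rc P = p → ∀ y : 𝓞 K, ∃ a : ℤ, y - a ∈ P.1
  θ : 𝓞 K
  f : ℤ[X]
  hθ : IntermediateField.adjoin ℚ {(θ : K)} = ⊤
  hf : aeval θ f = 0
  hf' : ∀ P : NPrimes K, rc P = p → aeval θ f.derivative ∉ P.1
  c0 : ℤ
  hc0 : ∀ a : ℤ, ¬ (p : ℤ) ∣ (cubicP c0).eval a
  c1 : ℤ
  hc1 : (p : ℤ) ∣ 2 * c1 - 3
  P1 : NPrimes K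
  hP1 : rc P1 = p
  t : 𝓞 K
  ht0 : t - c0 ∈ P1.1
  ht1 : ∀ P : NPrimes K, rc P = p → P ≠ P1 → t - c1 ∈ P.1

theorem exists_setup (K : Type) [Field K] [NumberField K] : Nonempty (CubicSetup K) := by
  classical
  obtain ⟨θ, f, hθ, hf, hf'⟩ := exists_theta K
  obtain ⟨p, hp, hpB, hint⟩ := exists_split_prime K
    ({2, 3} ∪ {n : ℕ | ∃ P : NPrimes K, rc P = n ∧ aeval θ f.derivative ∈ P.1})
    ((Set.toFinite _).union (finite_rc_mem _ hf'))
  simp only [Set.mem_union, Set.mem_insert_iff, Set.mem_singleton_iff, Set.mem_ofPred_eq,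
    not_or, not_exists, not_and] at hpB
  have hfp : Fact p.Prime := ⟨hp⟩
  have hp3 : 3 < p := by have := hp.two_le; omega
  obtain ⟨c, hc⟩ := exists_no_root p
  obtain ⟨P1, hP1⟩ := exists_prime_over (Ω := K) p hp
  have hfin := (rc_fiber K p).1
  obtain ⟨t, ht⟩ := IsDedekindDomain.exists_forall_sub_mem_ideal (s := hfin.toFinset)
    (fun P : NPrimes K => P.1) (fun _ => 1)
    (fun P _ => (Ideal.prime_iff_isPrime P.2.2).2 P.2.1)
    (fun P _ P' _ h h' => h (Subtype.ext h'))
    (fun P => if P.1 = P1 then (((c.cast : ℤ) : 𝓞 K)) else ((((p + 3) / 2 : ℕ) : ℤ) : 𝓞 K))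
  refine ⟨⟨p, hp, hp3, hint, θ, f, hθ, hf, hpB.2, c.cast, ?_, ((p + 3) / 2 : ℕ), ?_, P1, hP1, t, ?_, ?_⟩⟩
  · intro a ha
    apply hc (a : ZMod p)
    have := (ZMod.intCast_zmod_eq_zero_iff_dvd _ p).2 ha
    rw [cubicP_eval] at this ⊢
    push_cast at this
    exact this
  · have hodd : p % 2 = 1 := hp.eq_two_or_odd.resolve_left hpB.1.1
    refine ⟨1, ?_⟩
    push_cast
    omega
  · have := ht P1 (by simpa using hP1)
    simpa using this
  · intro P hP hne
    have := ht P (by simpa using hP)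
    rw [if_neg hne, pow_one] at this
    exact this

lemma CubicSetup.no_root {K : Type} [Field K] [NumberField K] (S : CubicSetup K) (r : K) :
    (cubicP (S.t : K)).eval r ≠ 0 := by
  intro h
  have hi : IsIntegral (𝓞 K) r := by
    refine ⟨cubicP S.t, cubicP_monic _, ?_⟩
    rw [← eval_map, cubicP_map]; exact h
  obtain ⟨r', rfl⟩ := (IsIntegralClosure.isIntegral_iff (A := 𝓞 K)).1 (isIntegral_trans (R := ℤ) r hi)
  obtain ⟨a, ha⟩ := S.hint S.P1 S.hP1 r'
  have h0 : (cubicP S.t).eval r' = 0 := by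
    apply RingOfIntegers.ext
    show algebraMap (𝓞 K) K _ = algebraMap (𝓞 K) K 0
    rw [map_zero, ← h, ← cubicP_map, eval_map, eval₂_at_apply]
  apply S.hc0 a
  rw [← S.hP1, ← intCast_mem_NPrimes]
  rw [cubicP_eval] at h0 ⊢
  rw [← Ideal.Quotient.eq_zero_iff_mem] at ha ⊢
  have h1 := congrArg (Ideal.Quotient.mk S.P1.1) h0
  have h2 := Ideal.Quotient.eq_zero_iff_mem.2 S.ht0
  push_cast
  simp only [map_sub, map_add, map_mul, map_pow, map_one, map_ofNat, map_zero, map_intCast] at *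
  rw [sub_eq_zero] at ha h2
  rw [← ha, ← h2]
  exact h1

end SetupPart


section FrobChoice

open NumberField Polynomial

lemma simple_root {R : Type*} [CommRing R] [IsDomain R] (Q : Ideal R) [Q.IsPrime] (f : R[X]) (y y' : R)
    (hy : f.eval y = 0) (hy' : f.eval y' = 0) (h : y' - y ∈ Q) (hd : f.derivative.eval y ∉ Q) :
    y' = y := by
  obtain ⟨k, hk⟩ := f.binomExpansion y (y' - y)
  rw [add_sub_cancel, hy, hy'] at hk
  have h1 : (y' - y) * (f.derivative.eval y + k * (y' - y)) = 0 := by linear_combination -hk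
  rcases mul_eq_zero.1 h1 with h2 | h2
  · exact sub_eq_zero.1 h2
  · exfalso
    apply hd
    have h3 : f.derivative.eval y = -(k * (y' - y)) := by linear_combination h2
    rw [h3]
    exact Q.neg_mem (Q.mul_mem_left _ h)

lemma frob_of_int {E : Type} [Field E] [NumberField E] (Q : NPrimes E) (z : 𝓞 E) (a : ℤ)
    (h : z - a ∈ Q.1) : z ^ rc Q - z ∈ Q.1 := by
  have hp : Fact (rc Q).Prime := ⟨rc_prime Q⟩
  have h1 : (rc Q : ℤ) ∣ a ^ rc Q - a := by
    rw [← ZMod.intCast_zmod_eq_zero_iff_dvd]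
    push_cast
    rw [ZMod.pow_card, sub_self]
  have h2 := (intCast_mem_NPrimes Q _).2 h1
  rw [← Ideal.Quotient.eq_zero_iff_mem] at h h2 ⊢
  push_cast at h2
  simp only [map_sub, map_pow, map_intCast] at *
  rw [sub_eq_zero] at h
  rw [h, h2]

variable {K Ω : Type} [Field K] [NumberField K] [Field Ω] [NumberField Ω] [Algebra K Ω]

lemma tw_frob {Q : NPrimes Ω} {F : Ω ≃ₐ[ℚ] Ω} (hF : ∀ y : 𝓞 Ω, F • y - y ^ rc Q ∈ Q.1)
    (x : Ω ≃ₐ[ℚ] Ω) (z : 𝓞 Ω) (a : ℤ) (h : z - a ∈ (tw Q x).1) :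
    (x⁻¹ * F * x) • z - z ∈ (tw Q x).1 := by
  have h1 := frob_of_int (tw Q x) z a h
  rw [rc_tw] at h1
  have h2 : (x⁻¹ * F * x) • z - z ^ rc Q ∈ (tw Q x).1 := by
    rw [mem_tw, smul_sub, smul_pow', mul_smul, mul_smul, smul_inv_smul]
    exact hF _
  have h3 := (tw Q x).1.add_mem h2 h1
  rwa [sub_add_sub_cancel] at h3

lemma aeval_smul_int (g : Ω ≃ₐ[ℚ] Ω) (f : ℤ[X]) (z : 𝓞 Ω) : aeval (g • z) f = g • aeval z f :=
  aeval_algHom_apply (MulSemiringAction.toAlgHom ℤ (𝓞 Ω) g) z f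

lemma mem_fixH_of_theta (S : CubicSetup K) (g : Ω ≃ₐ[ℚ] Ω)
    (h : g • algebraMap (𝓞 K) (𝓞 Ω) S.θ = algebraMap (𝓞 K) (𝓞 Ω) S.θ) : g ∈ fixH K Ω := by
  rw [mem_fixH]
  have h0 : g (algebraMap K Ω (S.θ : K)) = algebraMap K Ω (S.θ : K) :=
    congrArg (algebraMap (𝓞 Ω) Ω) h
  let i : K →ₐ[ℚ] Ω := (algebraMap K Ω).toRatAlgHom
  let j : K →ₐ[ℚ] Ω := g.toAlgHom.comp i
  have hij : j = i := by
    let E : IntermediateField ℚ K := (AlgHom.equalizer j i).toIntermediateField (fun y hy => by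
      have hy' : j y = i y := hy
      show j y⁻¹ = i y⁻¹
      rw [map_inv₀, map_inv₀, hy'])
    have hE : (⊤ : IntermediateField ℚ K) ≤ E := by
      rw [← S.hθ, IntermediateField.adjoin_simple_le_iff]
      exact h0
    ext y
    exact hE (x := y) trivial
  intro k
  exact congrArg (fun f : K →ₐ[ℚ] Ω => f k) hij

/-- simple root argument for theta -/
lemma theta_eq (S : CubicSetup K) (Q : NPrimes Ω) (hQ : rc Q = S.p) (g : Ω ≃ₐ[ℚ] Ω)
    (h : g • algebraMap (𝓞 K) (𝓞 Ω) S.θ - algebraMap (𝓞 K) (𝓞 Ω) S.θ ∈ Q.1) : g ∈ fixH K Ω := by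
  apply mem_fixH_of_theta S
  have hQp := Q.2.1
  have hroot : aeval (algebraMap (𝓞 K) (𝓞 Ω) S.θ) S.f = 0 := by
    rw [aeval_algebraMap_apply, S.hf, map_zero]
  refine simple_root Q.1 (S.f.map (algebraMap ℤ (𝓞 Ω))) _ _ ?_ ?_ h ?_
  · rw [eval_map_algebraMap]; exact hroot
  · rw [eval_map_algebraMap, aeval_smul_int, hroot, smul_zero]
  · rw [derivative_map, eval_map_algebraMap, aeval_algebraMap_apply, ← mem_resP]
    exact S.hf' _ (by rw [rc_resP, hQ])

lemma conj_mem (S : CubicSetup K) {Q : NPrimes Ω} (hQ : rc Q = S.p) {F : Ω ≃ₐ[ℚ] Ω}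
    (hF : ∀ y : 𝓞 Ω, F • y - y ^ rc Q ∈ Q.1) (x : Ω ≃ₐ[ℚ] Ω) : x⁻¹ * F * x ∈ fixH K Ω := by
  apply theta_eq S (tw Q x) (by rw [rc_tw, hQ])
  obtain ⟨a, ha⟩ := S.hint (resP K (tw Q x)) (by rw [rc_resP, rc_tw, hQ]) S.θ
  rw [mem_resP, map_sub, map_intCast] at ha
  exact tw_frob hF x _ a ha

lemma px_ne (S : CubicSetup K) {Q : NPrimes Ω} (hQ : rc Q = S.p) (hQ1 : resP K Q = S.P1)
    (x : Ω ≃ₐ[ℚ] Ω) (hx : x ∉ fixH K Ω) : resP K (tw Q x) ≠ S.P1 := by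
  intro h
  apply hx
  apply theta_eq S Q hQ
  obtain ⟨a, ha⟩ := S.hint S.P1 S.hP1 S.θ
  have h1 := ha
  rw [← h, mem_resP, mem_tw, map_sub, map_intCast, smul_sub] at h1
  have hxa : x • ((a : ℤ) : 𝓞 Ω) = a := by
    exact map_intCast (MulSemiringAction.toRingHom (Ω ≃ₐ[ℚ] Ω) (𝓞 Ω) x) a
  rw [← hQ1, mem_resP, map_sub, map_intCast] at ha
  rw [hxa] at h1
  have h2 := Q.1.sub_mem h1 ha
  rwa [sub_sub_sub_cancel_right] at h2

lemma cubic_split {R : Type*} [CommRing R] (Q : Ideal R) [Q.IsPrime] (p : ℕ) (hp : p % 2 = 1)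
    (hpQ : (p : R) ∈ Q) (h2 : (2 : R) ∉ Q) (h9 : (9 : R) ∉ Q) (t α : R) (ht : 2 * t - 3 ∈ Q)
    (h : (cubicP t).eval α = 0) :
    (∃ a : ℤ, α - a ∈ Q) ∧ (cubicP t).derivative.eval α ∉ Q := by
  rw [cubicP_eval] at h
  rw [cubicP_derivative_eval]
  have h1 : ((α + 1) * (α - 2)) * (2 * α - 1) ∈ Q := by
    have : ((α + 1) * (α - 2)) * (2 * α - 1) = (α ^ 2 - α) * (2 * t - 3) := by
      linear_combination 2 * h
    rw [this]; exact Q.mul_mem_left _ ht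
  have hP : Q.IsPrime := inferInstance
  constructor
  · rcases hP.mem_or_mem h1 with h3 | h3
    · rcases hP.mem_or_mem h3 with h4 | h4
      · exact ⟨-1, by simpa using h4⟩
      · exact ⟨2, by simpa using h4⟩
    · refine ⟨((p + 1) / 2 : ℕ), ?_⟩
      have h5 : 2 * (α - ((((p + 1) / 2 : ℕ) : ℤ) : R)) ∈ Q := by
        have h6 : (2 : R) * (((p + 1) / 2 : ℕ) : R) = p + 1 := by
          have : 2 * ((p + 1) / 2) = p + 1 := by omega
          exact_mod_cast congrArg (Nat.cast : ℕ → R) this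
        have h7 : 2 * (α - ((((p + 1) / 2 : ℕ) : ℤ) : R)) = (2 * α - 1) - p := by
          rw [Int.cast_natCast]
          linear_combination -h6
        rw [h7]
        exact Q.sub_mem h3 hpQ
      exact (hP.mem_or_mem h5).resolve_left h2
  · intro hd
    have hw : 12 * α ^ 2 - 12 * α - 6 ∈ Q := by
      have : 12 * α ^ 2 - 12 * α - 6 = 4 * (3 * α ^ 2 - 2 * t * α + (t - 3)) +
          (4 * α - 2) * (2 * t - 3) := by ring
      rw [this]
      exact Q.add_mem (Q.mul_mem_left _ hd) (Q.mul_mem_left _ ht)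
    rcases hP.mem_or_mem h1 with h3 | h3
    · have h4 : (2 : R) * 9 ∈ Q := by
        have : (2 : R) * 9 = (12 * α ^ 2 - 12 * α - 6) - 12 * ((α + 1) * (α - 2)) := by ring
        rw [this]
        exact Q.sub_mem hw (Q.mul_mem_left _ h3)
      rcases hP.mem_or_mem h4 with h | h
      · exact h2 h
      · exact h9 h
    · apply h9
      have : (9 : R) = 3 * (2 * α - 1) * (2 * α - 1) - (12 * α ^ 2 - 12 * α - 6) := by ring
      rw [this]
      exact Q.sub_mem (Q.mul_mem_left _ h3) hw

theorem good_gamma [IsGalois ℚ Ω] (S : CubicSetup K) {N : Type} [Field N] [NumberField N]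
    [Algebra K N] [Algebra N Ω] [IsScalarTower K N Ω] [IsGalois K N] (α : N)
    (hα : (cubicP (algebraMap K N (S.t : K))).eval α = 0)
    (hfix : ∀ σ : N ≃ₐ[K] N, σ α = α → σ = 1)
    (χ : (N ≃ₐ[K] N) →* ℂˣ) (hχ : ∀ σ, χ σ = 1 → σ = 1) (hχ3 : ∀ σ, χ σ ^ 3 = 1) :
    ∃ γ : Ω ≃ₐ[ℚ] Ω, (∀ x, x⁻¹ * γ * x ∈ fixH K Ω) ∧
      (∀ x ∉ fixH K Ω, ext0 (chiK (Ω := Ω) χ) (x⁻¹ * γ * x) = 1) ∧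
      ext0 (chiK (Ω := Ω) χ) γ ≠ 1 ∧ ext0 (chiK (Ω := Ω) χ) γ ^ 3 = 1 := by
  obtain ⟨Q0, hQ0⟩ := exists_prime_over (Ω := Ω) S.p S.hp
  obtain ⟨x0, hx0⟩ := px_surj Q0 S.P1 (S.hP1.trans hQ0.symm)
  obtain ⟨Q, hQ, hQ1⟩ : ∃ Q : NPrimes Ω, rc Q = S.p ∧ resP K Q = S.P1 :=
    ⟨tw Q0 x0, by rw [rc_tw, hQ0], hx0⟩
  have hQp := Q.2.1
  obtain ⟨F, hF⟩ := exists_frob_int Q.1 Q.2.2 (rc Q) (rc_prime Q) (rc_mem Q)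
  have hmem := conj_mem S hQ hF
  have hFmem : F ∈ fixH K Ω := by simpa using hmem 1
  -- the root in the ring of integers
  let tΩ : 𝓞 Ω := algebraMap (𝓞 K) (𝓞 Ω) S.t
  have hαi : IsIntegral (𝓞 K) α := by
    refine ⟨cubicP S.t, cubicP_monic _, ?_⟩
    rw [← eval_map, cubicP_map]; exact hα
  obtain ⟨α', hα'⟩ := (IsIntegralClosure.isIntegral_iff (A := 𝓞 N)).1 (isIntegral_trans (R := ℤ) α hαi)
  let αΩ : 𝓞 Ω := algebraMap (𝓞 N) (𝓞 Ω) α'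
  have hαΩ : (αΩ : Ω) = algebraMap N Ω α := by
    rw [← hα']; rfl
  have htΩ : algebraMap (𝓞 Ω) Ω tΩ = algebraMap N Ω (algebraMap K N (S.t : K)) := by
    rw [← IsScalarTower.algebraMap_apply K N Ω]; rfl
  have hroot : (cubicP tΩ).eval αΩ = 0 := by
    apply RingOfIntegers.ext
    show algebraMap (𝓞 Ω) Ω _ = algebraMap (𝓞 Ω) Ω 0
    rw [map_zero, ← eval₂_at_apply, ← eval_map, cubicP_map, htΩ]
    have h1 := congrArg (algebraMap N Ω) hα
    rw [← eval₂_at_apply, ← eval_map, cubicP_map, map_zero, ← hαΩ] at h1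
    exact h1
  have hres : ∀ g : fixH K Ω, g.1 • αΩ = αΩ ↔ AlgEquiv.restrictNormalHom N (toGal g) = 1 := by
    intro g
    constructor
    · intro h
      apply hfix
      apply (algebraMap N Ω).injective
      rw [algebraMap_restrict, ← hαΩ]
      exact congrArg (algebraMap (𝓞 Ω) Ω) h
    · intro h
      have h1 := algebraMap_restrict_int g α'
      rw [h, one_smul] at h1
      exact h1.symm
  refine ⟨F, hmem, ?_, ?_, ?_⟩
  · intro x hx
    rw [ext0_of_mem _ (hmem x)]
    have hne := px_ne S hQ hQ1 x hx
    have h1 := S.ht1 _ (by rw [rc_resP, rc_tw, hQ]) hne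
    rw [mem_resP, map_sub, map_intCast] at h1
    have hrcx : rc (tw Q x) = S.p := by rw [rc_tw, hQ]
    have h2 : ((2 * S.c1 - 3 : ℤ) : 𝓞 Ω) ∈ (tw Q x).1 := by
      rw [intCast_mem_NPrimes, hrcx]; exact S.hc1
    have h3 : 2 * tΩ - 3 ∈ (tw Q x).1 := by
      have h4 := (tw Q x).1.add_mem ((tw Q x).1.mul_mem_left 2 h1) h2
      have h5 : 2 * tΩ - 3 = 2 * (algebraMap (𝓞 K) (𝓞 Ω) S.t - S.c1) + ((2 * S.c1 - 3 : ℤ) : 𝓞 Ω) := by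
        show 2 * algebraMap (𝓞 K) (𝓞 Ω) S.t - 3 = _
        push_cast
        ring
      rw [h5]; exact h4
    have hQx := (tw Q x).2.1
    have hp3 := S.hp3
    have n2 : (2 : 𝓞 Ω) ∉ (tw Q x).1 := by
      intro h
      have h' : ((2 : ℤ) : 𝓞 Ω) ∈ (tw Q x).1 := by exact_mod_cast h
      rw [intCast_mem_NPrimes, hrcx] at h'
      have := Int.le_of_dvd (by norm_num) h'
      omega
    have n9 : (9 : 𝓞 Ω) ∉ (tw Q x).1 := by
      intro h
      have h' : ((9 : ℤ) : 𝓞 Ω) ∈ (tw Q x).1 := by exact_mod_cast h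
      rw [intCast_mem_NPrimes, hrcx] at h'
      have h'' : S.p ∣ 3 ^ 2 := by exact_mod_cast h'
      have := Nat.le_of_dvd (by norm_num) (S.hp.dvd_of_dvd_pow h'')
      omega
    have hodd : S.p % 2 = 1 := S.hp.eq_two_or_odd.resolve_left (by omega)
    obtain ⟨⟨a, ha⟩, hd⟩ := cubic_split (tw Q x).1 S.p hodd (hrcx ▸ rc_mem (tw Q x)) n2 n9 tΩ αΩ h3 hroot
    have h6 := tw_frob hF x αΩ a ha
    have h7 : (cubicP tΩ).eval ((x⁻¹ * F * x) • αΩ) = 0 := by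
      have h8 := congrArg (fun z => (x⁻¹ * F * x) • z) hroot
      have h9 : (x⁻¹ * F * x) • tΩ = tΩ := fixH_smul_int (hmem x) S.t
      have h10 : (x⁻¹ * F * x) • ((cubicP tΩ).eval αΩ) =
          (cubicP ((x⁻¹ * F * x) • tΩ)).eval ((x⁻¹ * F * x) • αΩ) := by
        have h11 := eval₂_at_apply (p := cubicP tΩ)
          (MulSemiringAction.toRingHom (Ω ≃ₐ[ℚ] Ω) (𝓞 Ω) (x⁻¹ * F * x)) αΩ
        rw [← eval_map, cubicP_map] at h11
        exact h11.symm
      simp only [smul_zero] at h8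
      rw [h10, h9] at h8
      exact h8
    have h12 := simple_root (tw Q x).1 (cubicP tΩ) αΩ _ hroot h7 h6 hd
    have h13 := (hres ⟨_, hmem x⟩).1 h12
    show ((χ (AlgEquiv.restrictNormalHom N (toGal ⟨_, hmem x⟩)) : ℂˣ) : ℂ) = 1
    rw [h13, map_one, Units.val_one]
  · rw [ext0_of_mem _ hFmem]
    intro h
    have h1 : χ (AlgEquiv.restrictNormalHom N (toGal ⟨F, hFmem⟩)) = 1 := Units.ext h
    have h2 := (hres ⟨F, hFmem⟩).2 (hχ _ h1)
    have h3 := hF αΩ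
    have h4 : F • αΩ = αΩ := h2
    rw [h4] at h3
    obtain ⟨a, ha⟩ := int_of_frob Q αΩ (by
      have := Q.1.neg_mem h3
      rwa [neg_sub] at this)
    have h5 := S.ht0
    rw [← hQ1, mem_resP, map_sub, map_intCast] at h5
    apply S.hc0 a
    rw [← hQ, ← intCast_mem_NPrimes]
    rw [cubicP_eval] at hroot ⊢
    rw [← Ideal.Quotient.eq_zero_iff_mem] at ha h5 ⊢
    have h6 := congrArg (Ideal.Quotient.mk Q.1) hroot
    push_cast
    simp only [map_sub, map_add, map_mul, map_pow, map_one, map_ofNat, map_zero, map_intCast] at *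
    rw [sub_eq_zero] at ha h5
    rw [← ha, ← h5]
    exact h6
  · rw [ext0_of_mem _ hFmem]
    have := hχ3 (AlgEquiv.restrictNormalHom N (toGal ⟨F, hFmem⟩))
    have h2 := congrArg (Units.val) this
    rw [Units.val_pow_eq_pow_val, Units.val_one] at h2
    exact h2

end FrobChoice

/-- For every number field `K` there exist a finite abelian extension `N_K/K` of degree three
and a character `χ` of `Gal(N_K/K)` such that: whenever `K'` is a number field, `N_{K'}/K'` a
finite abelian extension and `χ'` a character of `Gal(N_{K'}/K')` with
`L_K(χ, s) = L_{K'}(χ', s)`, the fields `K` and `K'` are isomorphic. -/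
theorem stmt_2 (K : Type) [Field K] [NumberField K] :
    ∃ (E : FiniteAbelianExtension K) (χ : (E.N ≃ₐ[K] E.N) →* ℂˣ),
      Module.finrank K E.N = 3 ∧
      ∀ (K' : Type) [Field K'] [NumberField K'] (E' : FiniteAbelianExtension K')
        (χ' : (E'.N ≃ₐ[K'] E'.N) →* ℂˣ),
        (∀ s : ℂ, 1 < s.re → artinLFunction K E.N χ s = artinLFunction K' E'.N χ' s) →
        Nonempty (K ≃+* K') := by
  obtain ⟨S⟩ := exists_setup K
  obtain ⟨N, _, _, _, hfd, hgal, α, hfr, hα, hfix, hab, χ, hχ, hχ3⟩ :=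
    cubic_extension (S.t : K) S.no_root
  let E : FiniteAbelianExtension K := { N := N, abelian := hab }
  refine ⟨E, χ, hfr, ?_⟩
  intro K' _ _ E' χ' hL
  obtain ⟨Ω, _, _, _, _, hΩ⟩ := exists_compositum N E'.N
  let _ : Algebra K Ω := ((algebraMap N Ω).comp (algebraMap K N)).toAlgebra
  let _ : Algebra K' Ω := ((algebraMap E'.N Ω).comp (algebraMap K' E'.N)).toAlgebra
  have _ : IsScalarTower K N Ω := IsScalarTower.of_algebraMap_eq' rfl
  have _ : IsScalarTower K' E'.N Ω := IsScalarTower.of_algebraMap_eq' rfl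
  obtain ⟨γ, h1, h2, h3, h4⟩ := good_gamma (Ω := Ω) S α hα hfix χ hχ hχ3
  exact iso_of_L (N := N) (N' := E'.N) hab E'.abelian χ χ' hL γ h1 h2 h3 h4
end

section
/- Let G be a finite group, H ≤ G a subgroup of index n, and l an odd prime. Fix left coset representatives X₁,…,Xₙ of G/H with X₁ representing the coset H. Let G̃ = C_l^n ⋊ G, where C_l ⊂ ℂ^× is the cyclic group of l-th roots of unity and G acts on C_l^n by permuting coordinates according to its action on the cosets X₁,…,Xₙ; let H̃ = C_l^n ⋊ H ≤ G̃, and let χ: H̃ → C_l be the character sending (ζ₁,…,ζₙ, h) to ζ₁. Then for every subgroup H̃' ≤ G̃ and every one-dimensional character χ': H̃' → ℂ^×, if the induced representations satisfy Ind_{H̃'}^{G̃}(χ') ≅ Ind_{H̃}^{G̃}(χ), then H̃' and H̃ are conjugate subgroups of G̃. -/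
noncomputable section

/-- The carrier of the representation of `G` induced from a one-dimensional character
`χ : H → ℂˣ` of a subgroup `H ≤ G`: the space of functions `f : G → ℂ` with
`f (h * g) = χ h * f g`. -/
def IndCarrier {G : Type} [Group G] (H : Subgroup G) (χ : H →* ℂˣ) : Submodule ℂ (G → ℂ) where
  carrier := {f | ∀ (h : H) (g : G), f (↑h * g) = (χ h : ℂ) * f g}
  add_mem' := fun ha hb h g => by
    simp only [Set.mem_setOf_eq] at *
    simp [ha h g, hb h g, mul_add]
  zero_mem' := fun h g => by simp
  smul_mem' := fun c a ha h g => by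
    simp only [Set.mem_setOf_eq] at *
    simp [ha h g]
    ring

/-- The representation of `G` induced from the one-dimensional character `χ` of `H ≤ G`,
realized on `IndCarrier H χ` by right translation. -/
def ind {G : Type} [Group G] (H : Subgroup G) (χ : H →* ℂˣ) :
    Representation ℂ G (IndCarrier H χ) where
  toFun g :=
    { toFun := fun f => ⟨fun x => f.1 (x * g), fun h x => by
        simpa [mul_assoc] using f.2 h (x * g)⟩
      map_add' := fun f₁ f₂ => rfl
      map_smul' := fun c f => rfl }
  map_one' := by
    ext f x
    simp
  map_mul' g₁ g₂ := by
    ext f x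
    simp [mul_assoc]

/-- Two representations are equivalent if there is a `ℂ`-linear equivalence intertwining the
two actions. -/
def RepEquiv {G V W : Type} [Group G] [AddCommGroup V] [Module ℂ V] [AddCommGroup W]
    [Module ℂ W] (ρ : Representation ℂ G V) (τ : Representation ℂ G W) : Prop :=
  ∃ e : V ≃ₗ[ℂ] W, ∀ (g : G) (v : V), e (ρ g v) = τ g (e v)

/-- The direct sum of two representations. -/
def prodRep {G V W : Type} [Group G] [AddCommGroup V] [Module ℂ V] [AddCommGroup W]
    [Module ℂ W] (ρ : Representation ℂ G V) (τ : Representation ℂ G W) :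
    Representation ℂ G (V × W) where
  toFun g := (ρ g).prodMap (τ g)
  map_one' := by ext <;> simp
  map_mul' g₁ g₂ := by ext <;> simp

/-- A representation is irreducible if the space is nonzero and the only invariant submodules
are `⊥` and `⊤`. -/
def IsIrreducibleRep {G V : Type} [Group G] [AddCommGroup V] [Module ℂ V]
    (ρ : Representation ℂ G V) : Prop :=
  Nontrivial V ∧ ∀ p : Submodule ℂ V, (∀ g : G, ∀ v ∈ p, ρ g v ∈ p) → p = ⊥ ∨ p = ⊤

/-- The complex conjugate of a one-dimensional character. -/
def conjChar {H : Type} [Group H] (χ : H →* ℂˣ) : H →* ℂˣ :=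
  (Units.map (starRingEnd ℂ).toMonoidHom).comp χ
/-- `C_l`: the group of `l`-th roots of unity in `ℂˣ`. -/
abbrev rootsC (l : ℕ) : Subgroup ℂˣ := rootsOfUnity l ℂ

variable (G : Type) [Group G] (H : Subgroup G) (l : ℕ)

/-- The automorphism of `C_l^{G/H}` permuting the coordinates according to the left
translation action of `g` on the cosets `G/H`. -/
def permAut (g : G) : ((G ⧸ H) → rootsC l) ≃* ((G ⧸ H) → rootsC l) where
  toFun f x := f (g⁻¹ • x)
  invFun f x := f (g • x)
  left_inv f := funext fun x => by simp
  right_inv f := funext fun x => by simp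
  map_mul' f₁ f₂ := rfl

/-- The action of `G` on `C_l^{G/H}` by permuting the coordinates as `G` permutes the left
cosets `G/H`. -/
def permHom : G →* MulAut ((G ⧸ H) → rootsC l) where
  toFun := permAut G H l
  map_one' := MulEquiv.ext fun f => funext fun x => by
    show f ((1 : G)⁻¹ • x) = f x
    rw [inv_one, one_smul]
  map_mul' g₁ g₂ := MulEquiv.ext fun f => funext fun x => by
    show f ((g₁ * g₂)⁻¹ • x) = f (g₂⁻¹ • g₁⁻¹ • x)
    rw [mul_inv_rev, mul_smul]

/-- `G̃ = C_l^{G/H} ⋊ G`. -/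
abbrev Gtil := ((G ⧸ H) → rootsC l) ⋊[permHom G H l] G

/-- `H̃ = C_l^{G/H} ⋊ H`, as a subgroup of `G̃`: the elements whose `G`-component lies
in `H`. -/
def Htil : Subgroup (Gtil G H l) := Subgroup.comap SemidirectProduct.rightHom H

/-- The character `χ : H̃ → C_l ⊆ ℂˣ` given by projection onto the coordinate indexed by the
trivial coset `H ∈ G/H`. -/
def chiTil : Htil G H l →* ℂˣ where
  toFun x := ((x.1.left ((1 : G) : G ⧸ H) : ℂˣ))
  map_one' := by simp
  map_mul' x y := by
    have hxy : (x * y).1.left = x.1.left * permHom G H l x.1.right y.1.left :=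
      SemidirectProduct.mul_left x.1 y.1
    have hmem : x.1.right ∈ H := x.2
    have hco : (x.1.right)⁻¹ • ((1 : G) : G ⧸ H) = ((1 : G) : G ⧸ H) := by
      show ((x.1.right⁻¹ * 1 : G) : G ⧸ H) = ((1 : G) : G ⧸ H)
      rw [mul_one]
      exact (QuotientGroup.eq).2 (by simpa using hmem)
    calc ((x * y).1.left ((1 : G) : G ⧸ H) : ℂˣ)
        = ((x.1.left ((1 : G) : G ⧸ H) * y.1.left ((x.1.right)⁻¹ • ((1 : G) : G ⧸ H)) : rootsC l) : ℂˣ) := by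
          rw [hxy]; rfl
      _ = (x.1.left ((1 : G) : G ⧸ H) : ℂˣ) * (y.1.left ((1 : G) : G ⧸ H) : ℂˣ) := by
          rw [hco]; push_cast; rfl

/-- The delta function at the trivial coset, as an element of the induced representation. -/
def deltaInd {K : Type} [Group K] (L : Subgroup K) (ψ : L →* ℂˣ) : IndCarrier L ψ := by
  classical
  exact ⟨fun g => if h : g ∈ L then (ψ ⟨g, h⟩ : ℂ) else 0, by
    intro h g
    by_cases hg : g ∈ L
    · have hm : (h : K) * g ∈ L := L.mul_mem h.2 hg
      have e1 : (⟨(h : K) * g, hm⟩ : L) = h * ⟨g, hg⟩ := rfl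
      simp only [hm, hg, dif_pos, e1, map_mul, Units.val_mul]
    · have hm : (h : K) * g ∉ L := fun hc => hg ((L.mul_mem_cancel_left h.2).1 hc)
      simp [hm, hg]⟩

theorem deltaInd_of_mem {K : Type} [Group K] (L : Subgroup K) (ψ : L →* ℂˣ) (g : K)
    (hg : g ∈ L) : (deltaInd L ψ).1 g = (ψ ⟨g, hg⟩ : ℂ) := by
  simp [deltaInd, hg]

theorem deltaInd_of_not_mem {K : Type} [Group K] (L : Subgroup K) (ψ : L →* ℂˣ) (g : K)
    (hg : g ∉ L) : (deltaInd L ψ).1 g = 0 := by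
  simp [deltaInd, hg]

theorem deltaInd_one {K : Type} [Group K] (L : Subgroup K) (ψ : L →* ℂˣ) :
    (deltaInd L ψ).1 1 = 1 := by
  rw [deltaInd_of_mem L ψ 1 L.one_mem]
  have : (⟨1, L.one_mem⟩ : L) = 1 := rfl
  rw [this]; simp

theorem ind_apply {K : Type} [Group K] (L : Subgroup K) (ψ : L →* ℂˣ) (g x : K)
    (f : IndCarrier L ψ) : (ind L ψ g f).1 x = f.1 (x * g) := rfl

theorem ind_delta {K : Type} [Group K] (L : Subgroup K) (ψ : L →* ℂˣ) (h : L) :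
    ind L ψ h (deltaInd L ψ) = (ψ h : ℂ) • deltaInd L ψ := by
  apply Subtype.ext
  funext x
  rw [ind_apply]
  show _ = (ψ h : ℂ) * (deltaInd L ψ).1 x
  by_cases hx : x ∈ L
  · have hm : x * h ∈ L := L.mul_mem hx h.2
    rw [deltaInd_of_mem L ψ _ hx, deltaInd_of_mem L ψ _ hm]
    have e1 : (⟨x * h, hm⟩ : L) = ⟨x, hx⟩ * h := rfl
    rw [e1, map_mul, Units.val_mul, mul_comm]
  · have hm : x * h ∉ L := fun hc => hx ((L.mul_mem_cancel_right h.2).1 hc)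
    rw [deltaInd_of_not_mem L ψ _ hx, deltaInd_of_not_mem L ψ _ hm, mul_zero]

/-- If `b - 1` has rank at most one on the induced representation and `b` has odd order,
then `b` lies in the subgroup. -/
theorem mem_of_rank_one {K : Type} [Group K] (L : Subgroup K) (ψ : L →* ℂˣ) (b : K) (l : ℕ)
    (hlodd : Odd l) (hb : b ^ l = 1)
    (hr : ∀ f₁ f₂ : IndCarrier L ψ, ∃ c₁ c₂ : ℂ, (c₁ ≠ 0 ∨ c₂ ≠ 0) ∧
      c₁ • (ind L ψ b f₁ - f₁) + c₂ • (ind L ψ b f₂ - f₂) = 0) : b ∈ L := by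
  by_contra hbL
  have hb2 : b * b ∉ L := by
    intro hc
    obtain ⟨k, hk⟩ := hlodd
    apply hbL
    have h1 : (b * b) ^ (k + 1) ∈ L := L.pow_mem hc _
    have h2 : (b * b) ^ (k + 1) = b := by
      rw [← pow_two, ← pow_mul]
      have : 2 * (k + 1) = l + 1 := by omega
      rw [this, pow_succ, hb, one_mul]
    rwa [h2] at h1
  have hbi : b⁻¹ ∉ L := fun h => hbL (by simpa using h)
  have hbi2 : b⁻¹ * b⁻¹ ∉ L := fun h => hb2 (by simpa using L.inv_mem h)
  obtain ⟨c₁, c₂, hc, h0⟩ := hr (deltaInd L ψ) (ind L ψ b⁻¹ (deltaInd L ψ))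
  have hv : ∀ x, c₁ * ((deltaInd L ψ).1 (x * b) - (deltaInd L ψ).1 x)
      + c₂ * ((deltaInd L ψ).1 (x * b * b⁻¹) - (deltaInd L ψ).1 (x * b⁻¹)) = 0 := by
    intro x
    exact congrFun (congrArg Subtype.val h0) x
  have h1 := hv b⁻¹
  have h2 := hv b
  rw [inv_mul_cancel, one_mul, deltaInd_one, deltaInd_of_not_mem L ψ _ hbi,
    deltaInd_of_not_mem L ψ _ hbi2] at h1
  rw [mul_inv_cancel_right, mul_inv_cancel, deltaInd_one, deltaInd_of_not_mem L ψ _ hbL,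
    deltaInd_of_not_mem L ψ _ hb2] at h2
  rcases hc with hc | hc
  · exact hc (by linear_combination h1)
  · exact hc (by linear_combination -h2)

theorem ind_inl (f : IndCarrier (Htil G H l) (chiTil G H l)) (a : (G ⧸ H) → rootsC l)
    (g : Gtil G H l) :
    f.1 (g * SemidirectProduct.inl a)
      = ((a (g.right⁻¹ • ((1 : G) : G ⧸ H)) : ℂˣ) : ℂ) * f.1 g := by
  have hm : g * SemidirectProduct.inl a * g⁻¹ ∈ Htil G H l := by
    simp [Htil, Subgroup.mem_comap]
  have h := f.2 ⟨_, hm⟩ g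
  have e1 : g * SemidirectProduct.inl a * g⁻¹ * g = g * SemidirectProduct.inl a := by group
  have e2 : g * SemidirectProduct.inl a * g⁻¹
      = SemidirectProduct.inl (permHom G H l g.right a) := by
    ext <;> simp
  simp only [e1] at h
  rw [h]
  congr 2
  show ((g * SemidirectProduct.inl a * g⁻¹).left ((1 : G) : G ⧸ H) : ℂˣ) = _
  rw [e2]
  rfl

theorem inv_smul_eq_iff_mem (g k : G) :
    k⁻¹ • ((1 : G) : G ⧸ H) = g⁻¹ • ((1 : G) : G ⧸ H) ↔ k * g⁻¹ ∈ H := by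
  show ((k⁻¹ * 1 : G) : G ⧸ H) = ((g⁻¹ * 1 : G) : G ⧸ H) ↔ _
  rw [QuotientGroup.eq]
  simp

theorem inl_mulSingle_mem [Finite G] (hlodd : Odd l)
    (H' : Subgroup (Gtil G H l)) (χ' : H' →* ℂˣ)
    (hiso : RepEquiv (ind H' χ') (ind (Htil G H l) (chiTil G H l)))
    (a : (G ⧸ H) → rootsC l) (x : G ⧸ H) (ha : ∀ y, y ≠ x → a y = 1) :
    (SemidirectProduct.inl a : Gtil G H l) ∈ H' := by
  obtain ⟨e, he⟩ := hiso
  refine mem_of_rank_one H' χ' _ l hlodd ?_ ?_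
  · rw [← map_pow]
    have : a ^ l = 1 := by
      funext y
      apply Subtype.ext
      exact (a y).2
    rw [this, map_one]
  · intro f₁ f₂
    obtain ⟨g₀, hg₀⟩ : ∃ g₀ : Gtil G H l, g₀.right⁻¹ • ((1 : G) : G ⧸ H) = x := by
      obtain ⟨y, rfl⟩ := QuotientGroup.mk_surjective x
      refine ⟨SemidirectProduct.inr y⁻¹, ?_⟩
      show (((y⁻¹)⁻¹ * 1 : G) : G ⧸ H) = _
      simp
    set b : Gtil G H l := SemidirectProduct.inl a with hbdef
    have key : ∀ f : IndCarrier (Htil G H l) (chiTil G H l),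
        ∀ k : Gtil G H l, k.right⁻¹ • ((1 : G) : G ⧸ H) ≠ x →
          (ind (Htil G H l) (chiTil G H l) b f - f).1 k = 0 := by
      intro f k hk
      show f.1 (k * b) - f.1 k = 0
      rw [hbdef, ind_inl, ha _ hk]
      simp
    have key2 : ∀ u v : IndCarrier (Htil G H l) (chiTil G H l),
        (∀ k : Gtil G H l, k.right⁻¹ • ((1 : G) : G ⧸ H) ≠ x → u.1 k = 0) →
        (∀ k : Gtil G H l, k.right⁻¹ • ((1 : G) : G ⧸ H) ≠ x → v.1 k = 0) →
        v.1 g₀ • u + (-u.1 g₀) • v = 0 := by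
      intro u v hu hv
      apply Subtype.ext
      funext k
      show v.1 g₀ * u.1 k + (-u.1 g₀) * v.1 k = 0
      by_cases hk : k.right⁻¹ • ((1 : G) : G ⧸ H) = x
      · have hm : k * g₀⁻¹ ∈ Htil G H l := by
          rw [← hg₀, inv_smul_eq_iff_mem] at hk
          simpa [Htil, Subgroup.mem_comap] using hk
        have h1 := u.2 ⟨_, hm⟩ g₀
        have h2 := v.2 ⟨_, hm⟩ g₀
        simp only [inv_mul_cancel_right] at h1 h2
        rw [h1, h2]; ring
      · rw [hu k hk, hv k hk]; ring
    have key3 : ∀ f, e (ind H' χ' b f - f)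
        = ind (Htil G H l) (chiTil G H l) b (e f) - e f := by
      intro f; rw [map_sub, he]
    have hz : ∀ u : IndCarrier (Htil G H l) (chiTil G H l),
        (∀ k : Gtil G H l, k.right⁻¹ • ((1 : G) : G ⧸ H) ≠ x → u.1 k = 0) →
        u.1 g₀ = 0 → u = 0 := by
      intro u hu hu0
      apply Subtype.ext
      funext k
      show u.1 k = 0
      by_cases hk : k.right⁻¹ • ((1 : G) : G ⧸ H) = x
      · have hm : k * g₀⁻¹ ∈ Htil G H l := by
          rw [← hg₀, inv_smul_eq_iff_mem] at hk
          simpa [Htil, Subgroup.mem_comap] using hk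
        have h1 := u.2 ⟨_, hm⟩ g₀
        simp only [inv_mul_cancel_right] at h1
        rw [h1, hu0, mul_zero]
      · exact hu k hk
    by_cases hu0 : (e (ind H' χ' b f₁ - f₁)).1 g₀ = 0
    · refine ⟨1, 0, Or.inl one_ne_zero, ?_⟩
      have : e (ind H' χ' b f₁ - f₁) = 0 := by
        refine hz _ ?_ hu0
        rw [key3]; exact key _
      rw [e.map_eq_zero_iff] at this
      rw [this]; simp
    · refine ⟨(e (ind H' χ' b f₂ - f₂)).1 g₀, -(e (ind H' χ' b f₁ - f₁)).1 g₀,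
        Or.inr (neg_ne_zero.2 hu0), ?_⟩
      apply e.injective
      rw [map_add, map_smul, map_smul, map_zero]
      apply key2
      · rw [key3]; exact key _
      · rw [key3]; exact key _

theorem inl_mem [Finite G] (hlodd : Odd l)
    (H' : Subgroup (Gtil G H l)) (χ' : H' →* ℂˣ)
    (hiso : RepEquiv (ind H' χ') (ind (Htil G H l) (chiTil G H l)))
    (a : (G ⧸ H) → rootsC l) :
    (SemidirectProduct.inl a : Gtil G H l) ∈ H' := by
  classical
  have : a ∈ H'.comap (SemidirectProduct.inl : _ →* Gtil G H l) := by
    refine Subgroup.pi_mem_of_mulSingle_mem a fun x => ?_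
    exact inl_mulSingle_mem G H l hlodd H' χ' hiso _ x fun y hy => Pi.mulSingle_eq_of_ne hy _
  exact this

/-- (de Smit) If the representation of `G̃` induced from a one-dimensional character `χ'` of a
subgroup `H̃'` is isomorphic to the one induced from the projection character `χ` of `H̃`, then
`H̃'` and `H̃` are conjugate in `G̃`. -/
theorem stmt_5 (G : Type) [Group G] [Finite G] (H : Subgroup G) (n : ℕ) (hn : H.index = n)
    (l : ℕ) (hl : l.Prime) (hlodd : Odd l)
    (H' : Subgroup (Gtil G H l)) (χ' : H' →* ℂˣ)
    (hiso : RepEquiv (ind H' χ') (ind (Htil G H l) (chiTil G H l))) :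
    ∃ g : Gtil G H l, Subgroup.map (MulAut.conj g).toMonoidHom H' = Htil G H l := by
  classical
  obtain ⟨e, he⟩ := id hiso
  have hA := inl_mem G H l hlodd H' χ' hiso
  set F := e (deltaInd H' χ') with hF
  have hFne : F ≠ 0 := by
    intro h
    rw [hF, e.map_eq_zero_iff] at h
    have h1 := deltaInd_one H' χ'
    rw [h] at h1
    exact zero_ne_one h1
  obtain ⟨g, hg⟩ : ∃ g, F.1 g ≠ 0 := by
    by_contra! hcon
    exact hFne (Subtype.ext (funext hcon))
  have hFH : ∀ (h : H') (k : Gtil G H l), F.1 (k * h) = (χ' h : ℂ) * F.1 k := by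
    intro h k
    have h1 := he h (deltaInd H' χ')
    rw [ind_delta, map_smul] at h1
    exact (congrFun (congrArg Subtype.val h1) k).symm
  obtain ⟨ζ, hζ⟩ : ∃ ζ : rootsC l, ζ ≠ 1 := by
    haveI : NeZero l := ⟨hl.ne_zero⟩
    have hp := Complex.isPrimitiveRoot_exp l hl.ne_zero
    refine ⟨hp.toRootsOfUnity, fun h => hp.ne_one hl.one_lt ?_⟩
    have := congrArg (fun z : rootsC l => ((z : ℂˣ) : ℂ)) h
    simpa using this
  have hsupp : ∀ k : Gtil G H l, F.1 k ≠ 0 → k.right * g.right⁻¹ ∈ H := by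
    intro k hk
    rw [← inv_smul_eq_iff_mem]
    by_contra hne
    let a : (G ⧸ H) → rootsC l := Pi.mulSingle (k.right⁻¹ • ((1 : G) : G ⧸ H)) ζ
    have h1 := hFH ⟨_, hA a⟩ k
    have h2 := hFH ⟨_, hA a⟩ g
    simp only [ind_inl] at h1 h2
    have h3 := (mul_right_cancel₀ hk h1).trans (mul_right_cancel₀ hg h2).symm
    have h4 : a (k.right⁻¹ • ((1 : G) : G ⧸ H)) = a (g.right⁻¹ • ((1 : G) : G ⧸ H)) :=
      Subtype.ext (Units.ext h3)
    simp only [a, Pi.mulSingle_eq_same] at h4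
    rw [Pi.mulSingle_eq_of_ne (Ne.symm hne)] at h4
    exact hζ h4
  refine ⟨g, le_antisymm ?_ ?_⟩
  · rintro _ ⟨h, hh, rfl⟩
    have h1 : F.1 (g * h) ≠ 0 := by
      rw [hFH ⟨h, hh⟩ g]
      exact mul_ne_zero (Units.ne_zero _) hg
    have h2 := hsupp _ h1
    simpa [Htil, Subgroup.mem_comap] using h2
  · intro s hs
    refine ⟨g⁻¹ * s * g, ?_, by simp [MulAut.conj_apply, mul_assoc]⟩
    have hsm : ∀ k : Gtil G H l, F.1 (k * (g⁻¹ * s * g)) = (chiTil G H l ⟨s, hs⟩ : ℂ) * F.1 k := by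
      intro k
      by_cases hk : k * g⁻¹ ∈ Htil G H l
      · have h1 := F.2 (⟨_, hk⟩ * ⟨s, hs⟩) g
        have h2 := F.2 ⟨_, hk⟩ g
        have e1 : k * (g⁻¹ * s * g) = k * g⁻¹ * s * g := by group
        simp only [Subgroup.coe_mul, inv_mul_cancel_right, map_mul, Units.val_mul] at h1 h2
        rw [e1, h1, h2]; ring
      · have hs' : ∀ k : Gtil G H l, k * g⁻¹ ∉ Htil G H l → F.1 k = 0 := by
          intro k hk
          by_contra hc
          exact hk (by simpa [Htil, Subgroup.mem_comap] using hsupp k hc)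
        rw [hs' k hk, mul_zero]
        apply hs'
        intro hc
        have e1 : k * (g⁻¹ * s * g) * g⁻¹ = k * g⁻¹ * s := by group
        rw [e1] at hc
        exact hk ((Subgroup.mul_mem_cancel_right _ hs).1 hc)
    have h1 : ind H' χ' (g⁻¹ * s * g) (deltaInd H' χ')
        = (chiTil G H l ⟨s, hs⟩ : ℂ) • deltaInd H' χ' := by
      apply e.injective
      rw [he, map_smul]
      apply Subtype.ext
      funext k
      exact hsm k
    have h2 : (deltaInd H' χ').1 (1 * (g⁻¹ * s * g))
        = (chiTil G H l ⟨s, hs⟩ : ℂ) * (deltaInd H' χ').1 1 :=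
      congrFun (congrArg Subtype.val h1) 1
    rw [one_mul, deltaInd_one, mul_one] at h2
    by_contra hc
    rw [deltaInd_of_not_mem H' χ' _ hc] at h2
    exact Units.ne_zero _ h2.symm

end
end

section
/- Let G be a finite group, H ≤ G a subgroup of index n, and take l = 3. With G̃ = C₃^n ⋊ G, H̃ = C₃^n ⋊ H as in the associated construction, and χ: H̃ → C₃ the projection character (ζ₁,…,ζₙ, h) ↦ ζ₁, the induced representation Ind_{H̃}^{G̃}(χ) is an irreducible complex representation of G̃. -/
noncomputable section

variable (G : Type) [Group G] (H : Subgroup G) (l : ℕ)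

open Classical in
/-- The function supported on `H̃` and equal to `χ` there. -/
def deltaFn : IndCarrier (Htil G H 3) (chiTil G H 3) :=
  ⟨fun y => if hy : y ∈ Htil G H 3 then ((chiTil G H 3 ⟨y, hy⟩ : ℂˣ) : ℂ) else 0, by
    intro h y
    by_cases hy : y ∈ Htil G H 3
    · have h1 : (h : Gtil G H 3) * y ∈ Htil G H 3 := mul_mem h.2 hy
      have h2 : (⟨(h : Gtil G H 3) * y, h1⟩ : Htil G H 3) = h * ⟨y, hy⟩ := rfl
      simp only [hy, h1, dif_pos, h2, map_mul, Units.val_mul]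
    · have h1 : ¬ (h : Gtil G H 3) * y ∈ Htil G H 3 := fun h1 =>
        hy ((Subgroup.mul_mem_cancel_left _ h.2).1 h1)
      simp only [hy, h1, dif_neg, not_false_eq_true, mul_zero]⟩

theorem deltaFn_of_mem (y : Gtil G H 3) (hy : y ∈ Htil G H 3) :
    (deltaFn G H).1 y = ((chiTil G H 3 ⟨y, hy⟩ : ℂˣ) : ℂ) := dif_pos hy

theorem deltaFn_of_not_mem (y : Gtil G H 3) (hy : y ∉ Htil G H 3) :
    (deltaFn G H).1 y = 0 := dif_neg hy

theorem exists_zeta : ∃ z : rootsC 3, ((z : ℂˣ) : ℂ) ≠ 1 := by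
  have h := Complex.isPrimitiveRoot_exp 3 (by norm_num)
  refine ⟨⟨(h.isUnit (by norm_num)).unit, ?_⟩, ?_⟩
  · rw [mem_rootsOfUnity]
    ext
    simpa using h.pow_eq_one
  · simpa using h.ne_one (by norm_num)

theorem mem_Htil_iff (y : Gtil G H 3) : y ∈ Htil G H 3 ↔ y.right ∈ H := Iff.rfl

theorem coset_eq_one_iff (g : G) :
    g⁻¹ • ((1 : G) : G ⧸ H) = ((1 : G) : G ⧸ H) ↔ g ∈ H := by
  rw [MulAction.Quotient.smul_coe, smul_eq_mul, mul_one, QuotientGroup.eq]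
  simp

theorem apply_mul_inl (f : IndCarrier (Htil G H 3) (chiTil G H 3)) (y : Gtil G H 3)
    (a : (G ⧸ H) → rootsC 3) :
    f.1 (y * SemidirectProduct.inl a) =
      ((a (y.right⁻¹ • ((1 : G) : G ⧸ H)) : ℂˣ) : ℂ) * f.1 y := by
  have hm : (SemidirectProduct.inl (permHom G H 3 y.right a) : Gtil G H 3) ∈ Htil G H 3 := by
    rw [mem_Htil_iff]; simp
  have h := f.2 ⟨_, hm⟩ y
  have e : y * SemidirectProduct.inl a =
      SemidirectProduct.inl (permHom G H 3 y.right a) * y := by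
    ext1
    · simp [mul_comm]
    · simp
  rw [e]
  exact h

theorem apply_of_mem (f : IndCarrier (Htil G H 3) (chiTil G H 3)) (y t : Gtil G H 3)
    (hy : y ∈ Htil G H 3) : f.1 (y * t) = ((chiTil G H 3 ⟨y, hy⟩ : ℂˣ) : ℂ) * f.1 t :=
  f.2 ⟨y, hy⟩ t

theorem ind_apply_s6 (f : IndCarrier (Htil G H 3) (chiTil G H 3)) (g y : Gtil G H 3) :
    (ind (Htil G H 3) (chiTil G H 3) g f).1 y = f.1 (y * g) := rfl

theorem delta_mem (p : Submodule ℂ (IndCarrier (Htil G H 3) (chiTil G H 3)))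
    (hp : ∀ g, ∀ v ∈ p, ind (Htil G H 3) (chiTil G H 3) g v ∈ p)
    (f : IndCarrier (Htil G H 3) (chiTil G H 3)) (hf : f ∈ p) (h1 : f.1 1 ≠ 0) :
    deltaFn G H ∈ p := by
  classical
  obtain ⟨z, hz⟩ := exists_zeta
  have hz' : ((z : ℂˣ) : ℂ) - 1 ≠ 0 := sub_ne_zero.2 hz
  set a : (G ⧸ H) → rootsC 3 := Pi.mulSingle ((1 : G) : G ⧸ H) z with ha
  have key : deltaFn G H = ((f.1 1)⁻¹ * (((z : ℂˣ) : ℂ) - 1)⁻¹) •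
      (ind (Htil G H 3) (chiTil G H 3) (SemidirectProduct.inl a) f - f) := by
    apply Subtype.ext
    funext y
    change (deltaFn G H).1 y = ((f.1 1)⁻¹ * (((z : ℂˣ) : ℂ) - 1)⁻¹) *
      (f.1 (y * SemidirectProduct.inl a) - f.1 y)
    rw [apply_mul_inl]
    by_cases hy : y ∈ Htil G H 3
    · rw [deltaFn_of_mem G H y hy, (coset_eq_one_iff G H y.right).2 hy, ha, Pi.mulSingle_eq_same]
      have := apply_of_mem G H f y 1 hy
      rw [mul_one] at this
      rw [this]
      field_simp
    · rw [deltaFn_of_not_mem G H y hy, ha, Pi.mulSingle_eq_of_ne]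
      · simp
      · exact fun h => hy ((coset_eq_one_iff G H _).1 h)
  rw [key]
  exact p.smul_mem _ (p.sub_mem (hp _ _ hf) hf)

theorem eq_sum_delta [Fintype (G ⧸ H)] (f : IndCarrier (Htil G H 3) (chiTil G H 3)) :
    f = ∑ x : G ⧸ H, f.1 (SemidirectProduct.inr x.out⁻¹) •
      ind (Htil G H 3) (chiTil G H 3) (SemidirectProduct.inr x.out) (deltaFn G H) := by
  classical
  apply Subtype.ext
  funext y
  rw [AddSubmonoidClass.coe_finsetSum, Finset.sum_apply]
  change _ = ∑ x : G ⧸ H, f.1 (SemidirectProduct.inr x.out⁻¹) *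
      (deltaFn G H).1 (y * SemidirectProduct.inr x.out)
  have hmem : ∀ x : G ⧸ H, y * SemidirectProduct.inr x.out ∈ Htil G H 3 ↔
      x = ((y.right⁻¹ : G) : G ⧸ H) := by
    intro x
    rw [mem_Htil_iff, SemidirectProduct.mul_right, SemidirectProduct.right_inr]
    conv_rhs => rw [← QuotientGroup.out_eq' x, eq_comm, QuotientGroup.eq, inv_inv]
  rw [Finset.sum_eq_single ((y.right⁻¹ : G) : G ⧸ H)]
  · have hy := (hmem _).2 rfl
    rw [deltaFn_of_mem G H _ hy, mul_comm, ← apply_of_mem G H f _ _ hy, mul_assoc,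
      ← map_mul]
    simp
  · intro x _ hx
    rw [deltaFn_of_not_mem G H _ (fun h => hx ((hmem x).1 h)), mul_zero]
  · simp

/-- The representation of `G̃ = C₃^{G/H} ⋊ G` induced from the projection character `χ` of
`H̃ = C₃^{G/H} ⋊ H` is irreducible. -/
theorem stmt_6 (G : Type) [Group G] [Finite G] (H : Subgroup G) (n : ℕ) (hn : H.index = n) :
    IsIrreducibleRep (ind (Htil G H 3) (chiTil G H 3)) := by
  classical
  haveI : Fintype (G ⧸ H) := Fintype.ofFinite _
  refine ⟨⟨deltaFn G H, 0, fun h => ?_⟩, fun p hp => ?_⟩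
  · have h1 := deltaFn_of_mem G H 1 (one_mem _)
    rw [h] at h1
    exact (Units.ne_zero _) h1.symm
  · by_cases hb : p = ⊥
    · exact Or.inl hb
    · right
      obtain ⟨f, hf, hf0⟩ := p.ne_bot_iff.1 hb
      have : ∃ y, f.1 y ≠ 0 := by
        by_contra hcon
        push Not at hcon
        exact hf0 (Subtype.ext (funext hcon))
      obtain ⟨y, hy⟩ := this
      have hd : deltaFn G H ∈ p := by
        refine delta_mem G H p hp _ (hp y f hf) ?_
        rw [ind_apply_s6, one_mul]
        exact hy
      refine eq_top_iff.2 fun v _ => ?_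
      rw [eq_sum_delta G H v]
      exact p.sum_mem fun x _ => p.smul_mem _ (hp _ _ hd)

end
end
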